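/- For G = PSU(3,q), q = 2^(2^n), the Möbius function of the trivial subgroup satisfies μ({1}, G) = 0. -/

import Mathlib

/-!
Write `m H = μ(1, H)`, so that `μ(1, G) = m G`, and replace `G` by `GG F`, the group of
automorphisms of `F³` preserving the Hermitian form and the determinant. Since `3 ∤ q + 1` its
center is trivial (`center_GG`), so it is isomorphic to `PSU(3,q)`.

**The irreducible part of the Möbius sum.** Call a subgroup irreducible if it fixes no point of the
projective plane. For a nontrivial subgroup `K`, the sum of `m H` over `H ≤ K` vanishes. Applied to
the stabilizers of points and of flags, this gives `∑ m H * cc (Fix H) = 0`, the sum being over all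
`H`, where `cc` is a weighted count of points and of orthogonal pairs of points. The weights are
chosen so that `cc (Fix H) = 3` for every nontrivial subgroup `H` with a fixed point (`cc_Fix`). As
`∑ m H = 0` too, the outcome is `3 ∑ m H = cc(plane) - 3` with `H` irreducible (`sum_irr`).
Counting the fixed points of elements in place of subgroups, by orbits as in Burnside's lemma, the
same weights give `3 N = |G| - 3 + cc(plane)` for the number `N` of elements without eigenvector
(`card_irr_el`).

**The classification.** An irreducible subgroup other than `G` is of one of two types
(`irr_cases`): it permutes the points of an orthogonal frame and contains a nontrivial element
diagonal in that frame (`FT`), or it normalizes the centralizer of an element without eigenvector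
and meets that centralizer nontrivially (`ST`). The frame type contributes `-|G| / 3`
(`sum_frame`), the other one, the Singer type, contributes `N` (`sum_singer`). Therefore
`3 μ(1, G) = (cc(plane) - 3) + |G| - 3 N = 0` (`mobius_top`).

**Why there are only two types.** Let `H ≠ G` be irreducible. The involutions of `G` are
transvections (`exists_isT`). Suppose that `H` contains two nontrivial transvections along one
direction. The parameters of its transvections in that direction form a subfield `E` of the fixed
field of the involution (`paramField`), and a certain product of inner products of three directions
is quadratic over `E` without being fixed by the involution (`gram_iso`). As the fixed field has
`2^(2^n)` elements, its degree over a proper subfield is even, so that elements quadratic over such a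
subfield are fixed (`real_of_quadratic`). Hence `E` is the whole fixed field (`InT.full`), and then
`H = G` (`eq_top_of_InT`), contrary to assumption. Therefore the 2-subgroups of
`H` are cyclic and fix a point (`two_group`), and Burnside's transfer theorem provides a nontrivial
normal subgroup of odd order (`exists_odd`). Subgroups of odd order are solvable (`odd_solvable`):
the centralizers of their nontrivial elements are abelian and of index at most three in their
normalizers, and counting conjugates shows that a nontrivial group of this kind has a normal
centralizer (`CA.solvable`). Hence `H` has a nontrivial abelian normal subgroup `M`.
If `M` fixes a point, its fixed points form a frame permuted by `H` (`frame_of_normal`); if not,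
`M` contains an element without eigenvector and `H` is of Singer type (`cases_of_normal`).
-/


open scoped Classical Pointwise

namespace PSUPaper

/-- `q = 2^(2^n)`. -/
abbrev qval (n : ℕ) : ℕ := 2 ^ 2 ^ n

/-- The field with `q² = 2^(2^(n+1))` elements. -/
abbrev Fq2 (n : ℕ) : Type := GaloisField 2 (2 ^ (n + 1))

/-- The involutory automorphism `x ↦ x^q` of `F_{q²}`, as a star-ring structure. -/
noncomputable instance starRingFq2 (n : ℕ) : StarRing (Fq2 n) where
  star x := x ^ qval n
  star_involutive x := by
    letI : Fintype (Fq2 n) := Fintype.ofFinite _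
    show (x ^ qval n) ^ qval n = x
    rw [← pow_mul]
    have h : qval n * qval n = 2 ^ 2 ^ (n + 1) := by
      rw [← pow_add, ← two_mul, pow_succ, mul_comm]
    have hcard : Fintype.card (Fq2 n) = 2 ^ 2 ^ (n + 1) := by
      rw [← Nat.card_eq_fintype_card, GaloisField.card 2 (2 ^ (n + 1)) (by positivity)]
    rw [h, ← hcard]
    exact FiniteField.pow_card x
  star_mul x y := by
    show (x * y) ^ qval n = y ^ qval n * x ^ qval n
    rw [mul_pow, mul_comm]
  star_add x y := by
    show (x + y) ^ qval n = x ^ qval n + y ^ qval n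
    exact add_pow_char_pow x y 2 (2 ^ n)

/-- `SU(3,q)`: the subgroup of the unitary group `{M | M * (M^σ)ᵀ = 1}` (with respect to the
star structure `σ : x ↦ x^q` on `F_{q²}`) consisting of the matrices of determinant 1. -/
noncomputable def SU3 (n : ℕ) : Subgroup (Matrix.unitaryGroup (Fin 3) (Fq2 n)) where
  carrier := {M | (M : Matrix (Fin 3) (Fin 3) (Fq2 n)).det = 1}
  one_mem' := by simp
  mul_mem' := by
    intro a b ha hb
    simp only [Set.mem_setOf_eq, Matrix.UnitaryGroup.mul_val, Matrix.det_mul] at *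
    rw [ha, hb, mul_one]
  inv_mem' := by
    intro a ha
    simp only [Set.mem_setOf_eq, Matrix.UnitaryGroup.inv_val] at *
    rw [Matrix.star_eq_conjTranspose, Matrix.det_conjTranspose, ha, star_one]

/-- `PSU(3,q)`: the quotient of `SU(3,q)` by its center. -/
noncomputable abbrev PSU3 (n : ℕ) : Type := SU3 n ⧸ Subgroup.center (SU3 n)

/-- `mu` is the Möbius function `H ↦ μ(H, G)` of the subgroup lattice of `G`:
`μ(G,G) = 1` and `∑_{J : H ≤ J ≤ G} μ(J,G) = 0` for `H < G`. -/
def IsSubgroupMobius {G : Type*} [Group G] (mu : Subgroup G → ℤ) : Prop :=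
  ∀ H : Subgroup G, (∑ᶠ K ∈ {K : Subgroup G | H ≤ K}, mu K) = if H = ⊤ then 1 else 0

/-- `H` and `K` are conjugate subgroups. -/
def IsConjSub {G : Type*} [Group G] (H K : Subgroup G) : Prop :=
  ∃ g : G, Subgroup.map (MulAut.conj g).toMonoidHom H = K

/-- The conjugacy classes of subgroups of `G`. -/
abbrev SubClasses (G : Type*) [Group G] : Type _ :=
  Quotient (MulAction.orbitRel (ConjAct G) (Subgroup G))

/-- The conjugacy class of a subgroup. -/
def clsOf {G : Type*} [Group G] (H : Subgroup G) : SubClasses G :=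
  Quotient.mk (MulAction.orbitRel (ConjAct G) (Subgroup G)) H

/-- The order on conjugacy classes of subgroups: `[H] ≤ [K]` iff `H` is contained in some
conjugate of `K`. -/
def clsLe {G : Type*} [Group G] (x y : SubClasses G) : Prop :=
  ∃ H K : Subgroup G, clsOf H = x ∧ clsOf K = y ∧ ∃ g : ConjAct G, H ≤ g • K

/-- `lam` is the Möbius function `[H] ↦ μ([H], [G])` of the poset of conjugacy classes of
subgroups of `G`: `μ([G],[G]) = 1` and `∑_{[J] : [H] ≤ [J] ≤ [G]} μ([J],[G]) = 0` for
`[H] < [G]`. -/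
def IsClassMobius {G : Type*} [Group G] (lam : SubClasses G → ℤ) : Prop :=
  ∀ x : SubClasses G, (∑ᶠ y ∈ {y : SubClasses G | clsLe x y}, lam y) =
    if x = clsOf (⊤ : Subgroup G) then 1 else 0

/-- `m` is the Möbius function `H ↦ μ_{L_p}({1}, H)` of the poset `L_p` of `p`-subgroups of `G`:
`μ_{L_p}({1},{1}) = 1` and `∑_{J ∈ L_p : J ≤ K} μ_{L_p}({1},J) = 0` for `{1} < K ∈ L_p`. -/
def IsPMobiusBot {G : Type*} [Group G] (p : ℕ) (m : Subgroup G → ℤ) : Prop :=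
  m ⊥ = 1 ∧ ∀ K : Subgroup G, IsPGroup p K → ⊥ < K →
    (∑ᶠ J ∈ {J : Subgroup G | IsPGroup p J ∧ J ≤ K}, m J) = 0

set_option linter.unusedSectionVars false

/-! ### Finite field facts -/

/-- The standing hypotheses on the ground field: `F` has `q²` elements with `q = 2^(2^n)`, `n ≥ 1`,
and the involution of `F` is `x ↦ x^q`. -/
class HermField (F : Type) [Field F] [StarRing F] where
  n : ℕ
  one_le : 1 ≤ n
  card_eq : Nat.card F = 2 ^ 2 ^ (n + 1)
  star_eq : ∀ x : F, star x = x ^ 2 ^ 2 ^ n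

section FieldFacts

variable {F : Type} [Field F] [StarRing F] [HermField F]

variable (F) in
/-- The exponent of the involution, `q = 2^(2^n)`. -/
def hq : ℕ := 2 ^ 2 ^ HermField.n F

lemma hq_pos : 0 < hq F := by unfold hq; positivity

lemma hq_sq : hq F * hq F = 2 ^ 2 ^ (HermField.n F + 1) := by
  unfold hq; rw [← pow_add, ← two_mul, pow_succ, mul_comm]

lemma hq_gt : 2 < hq F := by
  unfold hq
  have : 1 ≤ HermField.n F := HermField.one_le
  calc 2 < 2 ^ 2 ^ 1 := by norm_num
    _ ≤ _ := Nat.pow_le_pow_right (by norm_num) (Nat.pow_le_pow_right (by norm_num) this)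

lemma hq_mod : hq F % 3 = 1 := by
  unfold hq
  obtain ⟨k, hk⟩ := Nat.exists_eq_add_of_le (HermField.one_le (F := F))
  rw [hk, pow_add, pow_one, pow_mul]
  norm_num [Nat.pow_mod]

lemma star_eq_pow (x : F) : star x = x ^ hq F := HermField.star_eq x

instance finiteF : Finite F := by
  apply Nat.finite_of_card_ne_zero
  rw [HermField.card_eq]; positivity

instance charF : CharP F 2 := by
  obtain ⟨p, hp⟩ := CharP.exists F
  have := Fintype.ofFinite F
  obtain ⟨k, hpp, hk⟩ := FiniteField.card F p
  have h := HermField.card_eq (F := F)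
  rw [Nat.card_eq_fintype_card, hk] at h
  have h2 : p ∣ 2 := by
    apply hpp.dvd_of_dvd_pow (n := 2 ^ (HermField.n F + 1))
    rw [← h]; exact dvd_pow_self _ k.pos.ne'
  rwa [(Nat.prime_dvd_prime_iff_eq hpp Nat.prime_two).1 h2] at hp

lemma two0 : (2 : F) = 0 := CharTwo.two_eq_zero

lemma add_eq0 {a b : F} : a + b = 0 ↔ a = b := CharTwo.add_eq_zero

lemma neg_eq' (a : F) : -a = a := CharTwo.neg_eq a

lemma add_self' (a : F) : a + a = 0 := CharTwo.add_self_eq_zero a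

lemma sq_inj {a b : F} (h : a * a = b * b) : a = b := by
  have : (a + b) * (a + b) = 0 := by linear_combination h + (a * b + b * b) * two0 (F := F)
  exact add_eq0.1 (mul_self_eq_zero.1 this)

lemma exists_sqrt (a : F) : ∃ b : F, b * b = a := by
  have hinj : Function.Injective (fun b : F => b * b) := fun a b h => sq_inj h
  exact Finite.surjective_of_injective hinj a

lemma exists_real_sqrt {a : F} (h : star a = a) : ∃ b : F, star b = b ∧ b * b = a := by
  obtain ⟨b, hb⟩ := exists_sqrt a
  refine ⟨b, sq_inj ?_, hb⟩
  rw [← star_mul', hb, h]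

lemma exists_norm {a : F} (h : star a = a) : ∃ b : F, b * star b = a := by
  obtain ⟨b, hb, hb'⟩ := exists_real_sqrt h
  exact ⟨b, by rw [hb, hb']⟩

lemma star_ne0 {a : F} (h : a ≠ 0) : star a ≠ 0 := star_ne_zero.2 h

lemma exists_unit_real (x : F) : ∃ μ : F, μ * star μ = 1 ∧ star (μ * x) = μ * x := by
  by_cases hx : x = 0
  · exact ⟨1, by simp, by simp [hx]⟩
  have hx' := star_ne0 hx
  obtain ⟨μ, hμ⟩ := exists_sqrt (star x / x)
  have h1 : μ * star μ = 1 := by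
    apply sq_inj
    calc μ * star μ * (μ * star μ) = (μ * μ) * star (μ * μ) := by rw [star_mul']; ring
      _ = 1 * 1 := by rw [hμ, star_div₀, star_star]; field_simp
  refine ⟨μ, h1, ?_⟩
  have hμ0 : μ ≠ 0 := by rintro rfl; simp at h1
  have : μ * (μ * x) = star x := by rw [← mul_assoc, hμ]; field_simp
  apply mul_left_cancel₀ hμ0
  rw [this, star_mul', ← mul_assoc, h1, one_mul]

lemma card_units : Nat.card Fˣ = hq F * hq F - 1 := by
  rw [Nat.card_units, HermField.card_eq, hq_sq]

lemma exists_omega : ∃ w : F, star w = w ∧ w * w + w + 1 = 0 := by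
  have h3 : 3 ∣ Nat.card Fˣ := by
    rw [card_units]
    obtain ⟨k, hk⟩ : ∃ k, hq F = 3 * k + 1 := ⟨hq F / 3, by have := hq_mod (F := F); omega⟩
    rw [hk]; exact ⟨3 * k * k + 2 * k, by rw [Nat.sub_eq_iff_eq_add (by nlinarith)]; ring⟩
  have : Fact (Nat.Prime 3) := ⟨Nat.prime_three⟩
  obtain ⟨u, hu⟩ := exists_prime_orderOf_dvd_card' 3 h3
  have hu3 : (u : F) ^ 3 = 1 := by
    have := pow_orderOf_eq_one u; rw [hu] at this
    rw [← Units.val_pow_eq_pow_val, this, Units.val_one]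
  have hu1 : (u : F) ≠ 1 := by
    intro h
    have : u = 1 := Units.ext h
    rw [this, orderOf_one] at hu; norm_num at hu
  refine ⟨u, ?_, ?_⟩
  · rw [star_eq_pow]
    obtain ⟨k, hk⟩ : ∃ k, hq F = 3 * k + 1 := ⟨hq F / 3, by have := hq_mod (F := F); omega⟩
    rw [hk, pow_add, pow_mul, hu3]; simp
  · have : ((u : F) - 1) * ((u : F) * u + u + 1) = 0 := by linear_combination hu3
    exact (mul_eq_zero.1 this).resolve_left (sub_ne_zero.2 hu1)

lemma cube_one {x : F} (h3 : x ^ 3 = 1) (hN : x * star x = 1) : x = 1 := by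
  have : star x = x := by
    rw [star_eq_pow]
    obtain ⟨k, hk⟩ : ∃ k, hq F = 3 * k + 1 := ⟨hq F / 3, by have := hq_mod (F := F); omega⟩
    rw [hk, pow_add, pow_mul, h3]; simp
  rw [this] at hN
  exact sq_inj (by simpa using hN)

lemma six_one {x : F} (h6 : x ^ 6 = 1) (hN : x * star x = 1) : x = 1 := by
  have h : x * x = 1 := cube_one (by rw [← h6]; ring) (by rw [star_mul', mul_mul_mul_comm, hN, one_mul])
  exact sq_inj (by simpa using h)

lemma exists_nonreal : ∃ x : F, star x ≠ x := by
  by_contra! h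
  obtain ⟨g, hg⟩ := IsCyclic.exists_generator (α := Fˣ)
  have ho : orderOf g = Nat.card Fˣ := orderOf_eq_card_of_forall_mem_zpowers hg
  have h1 : g ^ (hq F - 1) = 1 := by
    have h2 := h g
    rw [star_eq_pow] at h2
    have h3 : g ^ hq F = g := by ext; push_cast; exact h2
    have h4 : g ^ (hq F - 1) * g = 1 * g := by
      rw [← pow_succ, Nat.sub_add_cancel hq_pos, h3, one_mul]
    exact mul_right_cancel h4
  have h5 := Nat.le_of_dvd (by have := hq_gt (F := F); omega) (orderOf_dvd_of_pow_eq_one h1)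
  rw [ho, card_units] at h5
  have := hq_gt (F := F)
  have : hq F * 2 ≤ hq F * hq F := Nat.mul_le_mul_left _ this.le
  omega

lemma exists_trace_one : ∃ c : F, c + star c = 1 := by
  obtain ⟨x, hx⟩ := exists_nonreal (F := F)
  have h : x + star x ≠ 0 := fun h => hx (add_eq0.1 h).symm
  refine ⟨x / (x + star x), ?_⟩
  rw [star_div₀, star_add, star_star, add_comm (star x) x, ← add_div, div_self h]

lemma exists_unit_ne : ∃ l : F, l * star l = 1 ∧ l ≠ 1 := by
  obtain ⟨x, hx⟩ := exists_nonreal (F := F)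
  have hx0 : x ≠ 0 := by rintro rfl; simp at hx
  have := star_ne0 hx0
  refine ⟨star x / x, ?_, ?_⟩
  · rw [star_div₀, star_star]; field_simp
  · rwa [Ne, div_eq_one_iff_eq hx0]

lemma unit_trace_ne {z : F} (h : z * star z = 1) (h1 : z ≠ 1) : z + star z ≠ 0 := by
  intro h2
  rw [← add_eq0.1 h2] at h
  exact h1 (sq_inj (by simpa using h))

lemma add_pow_two_pow (x y : F) (k : ℕ) : (x + y) ^ 2 ^ k = x ^ 2 ^ k + y ^ 2 ^ k :=
  add_pow_char_pow x y 2 k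

/-- An element quadratic over a proper subfield of the fixed field of the involution lies in the
fixed field, because the degree of the latter over any proper subfield is divisible by two. This is
where the exponent of `q` being a power of two is used. -/
lemma real_of_quadratic (E : Subfield F) (hE : ∀ a ∈ E, star a = a)
    (hne : ∃ a : F, star a = a ∧ a ∉ E) {d t m : F} (ht : t ∈ E) (hm : m ∈ E)
    (hd : d * d = t * d + m) : star d = d := by
  have hc : ∃ j, Nat.card E = 2 ^ 2 ^ j := by
    have h1 : Nat.card F = Nat.card E ^ Module.finrank E F := Module.natCard_eq_pow_finrank
    have h2 : Nat.card E ∣ 2 ^ 2 ^ (HermField.n F + 1) := by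
      rw [← HermField.card_eq (F := F), h1]
      exact dvd_pow_self _ Module.finrank_pos.ne'
    obtain ⟨a, ha, ha'⟩ := (Nat.dvd_prime_pow Nat.prime_two).1 h2
    rw [ha', HermField.card_eq, ← pow_mul] at h1
    have h3 : a ∣ 2 ^ (HermField.n F + 1) := ⟨_, Nat.pow_right_injective le_rfl h1⟩
    obtain ⟨j, -, hj⟩ := (Nat.dvd_prime_pow Nat.prime_two).1 h3
    exact ⟨j, by rw [ha', hj]⟩
  obtain ⟨j, hj⟩ := hc
  have hlt : Nat.card E < hq F := by
    obtain ⟨a, ha, haE⟩ := hne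
    let P : Polynomial F := Polynomial.X ^ hq F - Polynomial.X
    have hP : P ≠ 0 := FiniteField.X_pow_card_sub_X_ne_zero F (by have := hq_gt (F := F); omega)
    have hdeg : P.natDegree = hq F :=
      FiniteField.X_pow_card_sub_X_natDegree_eq F (by have := hq_gt (F := F); omega)
    have hs : (insert a (E : Set F)) ⊆ (P.roots.toFinset : Set F) := by
      intro x hx
      have hx' : star x = x := by
        rcases hx with rfl | hx
        exacts [ha, hE x hx]
      simp only [Finset.mem_coe, Multiset.mem_toFinset, Polynomial.mem_roots hP]
      rw [star_eq_pow] at hx'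
      simp [P, hx']
    have h1 := Set.ncard_le_ncard hs (Finset.finite_toSet _)
    rw [Set.ncard_insert_of_notMem haE (Set.toFinite _), Set.ncard_coe_finset] at h1
    have h2 : P.roots.toFinset.card ≤ hq F :=
      (Multiset.toFinset_card_le _).trans ((Polynomial.card_roots' P).trans hdeg.le)
    have h3 : Nat.card E = (E : Set F).ncard := rfl
    omega
  have hjn : j < HermField.n F := by
    rw [hj, hq] at hlt
    exact (Nat.pow_lt_pow_iff_right (by norm_num)).1 ((Nat.pow_lt_pow_iff_right (by norm_num)).1 hlt)
  have hEp : ∀ x ∈ E, x ^ 2 ^ 2 ^ j = x := by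
    intro x hx
    have := Fintype.ofFinite E
    have := FiniteField.pow_card (⟨x, hx⟩ : E)
    rw [← Nat.card_eq_fintype_card, hj] at this
    exact congrArg Subtype.val this
  have hd' : d ^ 2 ^ 2 ^ j * d ^ 2 ^ 2 ^ j = t * d ^ 2 ^ 2 ^ j + m := by
    have := congrArg (fun z => z ^ 2 ^ 2 ^ j) hd
    simp only [add_pow_two_pow, mul_pow, hEp t ht, hEp m hm] at this
    exact this
  have hdd : d ^ 2 ^ 2 ^ (j + 1) = d := by
    have e : (2 : ℕ) ^ 2 ^ (j + 1) = 2 ^ 2 ^ j * 2 ^ 2 ^ j := by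
      rw [← pow_add, ← two_mul, pow_succ, mul_comm]
    rw [e, pow_mul]
    have h4 : (d ^ 2 ^ 2 ^ j - d) * (d ^ 2 ^ 2 ^ j - (t - d)) = 0 := by
      linear_combination hd' - hd
    rcases mul_eq_zero.1 h4 with h | h
    · rw [sub_eq_zero.1 h, sub_eq_zero.1 h]
    · have h5 : d ^ 2 ^ 2 ^ j = t + d := by rw [sub_eq_zero.1 h, sub_eq_add_neg, neg_eq']
      rw [h5, add_pow_two_pow, hEp t ht, h5, ← add_assoc, add_self', zero_add]
  rw [star_eq_pow, hq]
  obtain ⟨k, hk⟩ := Nat.exists_eq_add_of_lt hjn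
  rw [hk, show j + k + 1 = (j + 1) + k by ring, pow_add 2 (j + 1) k]
  generalize (j + 1) = i at *
  generalize 2 ^ k = s
  induction s with
  | zero => simp
  | succ s ih => rw [Nat.mul_succ, pow_add, pow_mul, ih, hdd]

end FieldFacts

/-! ### The Hermitian space and its isometries -/

section Geometry

variable {F : Type} [Field F] [StarRing F] [HermField F]

/-- The space `F³`. -/
abbrev Vec (F : Type) : Type := Fin 3 → F

/-- The standard Hermitian form on `F³`. -/
def B (x y : Vec F) : F := x 0 * star (y 0) + x 1 * star (y 1) + x 2 * star (y 2)

/-- The determinant of three vectors of `F³`. -/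
def D (x y z : Vec F) : F :=
  x 0 * (y 1 * z 2 - y 2 * z 1) - x 1 * (y 0 * z 2 - y 2 * z 0) + x 2 * (y 0 * z 1 - y 1 * z 0)

/-- The vector orthogonal to `x` and `y`: the conjugate of their cross product. -/
def pole (x y : Vec F) : Vec F :=
  ![star (x 1 * y 2 - x 2 * y 1), star (x 2 * y 0 - x 0 * y 2), star (x 0 * y 1 - x 1 * y 0)]

@[simp] lemma B_add_left (x y z : Vec F) : B (x + y) z = B x z + B y z := by
  simp only [B, Pi.add_apply]; ring
@[simp] lemma B_add_right (x y z : Vec F) : B x (y + z) = B x y + B x z := by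
  simp only [B, Pi.add_apply, star_add]; ring
@[simp] lemma B_smul_left (a : F) (x y : Vec F) : B (a • x) y = a * B x y := by
  simp only [B, Pi.smul_apply, smul_eq_mul]; ring
@[simp] lemma B_smul_right (a : F) (x y : Vec F) : B x (a • y) = star a * B x y := by
  simp only [B, Pi.smul_apply, smul_eq_mul, star_mul']; ring
@[simp] lemma B_zero_left (x : Vec F) : B 0 x = 0 := by simp [B]
@[simp] lemma B_zero_right (x : Vec F) : B x 0 = 0 := by simp [B]

lemma B_star (x y : Vec F) : star (B x y) = B y x := by
  simp only [B, star_add, star_mul', star_star]; ring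

lemma B_swap0 {x y : Vec F} (h : B x y = 0) : B y x = 0 := by rw [← B_star, h, star_zero]

lemma B_real (x : Vec F) : star (B x x) = B x x := B_star x x

lemma eq_zero_of_B {x : Vec F} (h : ∀ y, B x y = 0) : x = 0 := by
  ext i
  have := h (Pi.single i 1)
  fin_cases i <;> simpa [B] using this

lemma exists_B_ne {x : Vec F} (h : x ≠ 0) : ∃ y, B x y ≠ 0 := by
  by_contra! h'; exact h (eq_zero_of_B h')

@[simp] lemma D_add1 (x x' y z : Vec F) : D (x + x') y z = D x y z + D x' y z := by
  simp only [D, Pi.add_apply]; ring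
@[simp] lemma D_add2 (x y y' z : Vec F) : D x (y + y') z = D x y z + D x y' z := by
  simp only [D, Pi.add_apply]; ring
@[simp] lemma D_add3 (x y z z' : Vec F) : D x y (z + z') = D x y z + D x y z' := by
  simp only [D, Pi.add_apply]; ring
@[simp] lemma D_smul1 (a : F) (x y z : Vec F) : D (a • x) y z = a * D x y z := by
  simp only [D, Pi.smul_apply, smul_eq_mul]; ring
@[simp] lemma D_smul2 (a : F) (x y z : Vec F) : D x (a • y) z = a * D x y z := by
  simp only [D, Pi.smul_apply, smul_eq_mul]; ring
@[simp] lemma D_smul3 (a : F) (x y z : Vec F) : D x y (a • z) = a * D x y z := by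
  simp only [D, Pi.smul_apply, smul_eq_mul]; ring
@[simp] lemma D_self12 (x z : Vec F) : D x x z = 0 := by simp only [D]; ring
@[simp] lemma D_self13 (x y : Vec F) : D x y x = 0 := by simp only [D]; ring
@[simp] lemma D_self23 (x y : Vec F) : D x y y = 0 := by simp only [D]; ring
@[simp] lemma D_zero1 (y z : Vec F) : D 0 y z = 0 := by simp [D]
@[simp] lemma D_zero2 (y z : Vec F) : D y 0 z = 0 := by simp [D]
@[simp] lemma D_zero3 (y z : Vec F) : D y z 0 = 0 := by simp [D]

/-- In characteristic two the determinant is symmetric. -/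
lemma D_swap12 (x y z : Vec F) : D y x z = D x y z := by
  rw [← neg_eq' (D y x z)]; simp only [D]; ring
lemma D_swap23 (x y z : Vec F) : D x z y = D x y z := by
  rw [← neg_eq' (D x z y)]; simp only [D]; ring
lemma D_rot (x y z : Vec F) : D y z x = D x y z := by simp only [D]; ring

lemma B_pole (x u v : Vec F) : B x (pole u v) = D x u v := by
  simp [B, D, pole]; ring

lemma B_pole_self1 (u v : Vec F) : B u (pole u v) = 0 := by rw [B_pole, D_self12]
lemma B_pole_self2 (u v : Vec F) : B v (pole u v) = 0 := by rw [B_pole, D_self13]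
lemma B_pole_self1' (u v : Vec F) : B (pole u v) u = 0 := B_swap0 (B_pole_self1 u v)
lemma B_pole_self2' (u v : Vec F) : B (pole u v) v = 0 := B_swap0 (B_pole_self2 u v)

lemma lagrange (u v a b : Vec F) :
    B (pole u v) (pole a b) = B a u * B b v - B a v * B b u := by
  simp [B, pole]; ring

lemma cramer (a b c x : Vec F) :
    D a b c • x = D x b c • a + D a x c • b + D a b x • c := by
  ext i; fin_cases i <;> simp [D] <;> ring

lemma gram (a b c : Vec F) : D a b c * star (D a b c) =
    B a a * (B b b * B c c - B b c * B c b) - B a b * (B b a * B c c - B b c * B c a)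
      + B a c * (B b a * B c b - B b b * B c a) := by
  simp only [D, B, star_add, star_sub, star_mul']; ring

lemma pole_pole (u v z : Vec F) : pole z (pole u v) = B v z • u - B u z • v := by
  ext i; fin_cases i <;> simp [B, pole] <;> ring

lemma pole_eq_zero {u v : Vec F} (hu : u ≠ 0) (h : pole u v = 0) : ∃ c : F, v = c • u := by
  have h0 : u 1 * v 2 = u 2 * v 1 := by
    have : star (u 1 * v 2 - u 2 * v 1) = 0 := congrFun h 0
    exact sub_eq_zero.1 (star_eq_zero.1 this)
  have h1 : u 2 * v 0 = u 0 * v 2 := by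
    have : star (u 2 * v 0 - u 0 * v 2) = 0 := congrFun h 1
    exact sub_eq_zero.1 (star_eq_zero.1 this)
  have h2 : u 0 * v 1 = u 1 * v 0 := by
    have : star (u 0 * v 1 - u 1 * v 0) = 0 := congrFun h 2
    exact sub_eq_zero.1 (star_eq_zero.1 this)
  obtain ⟨i, hi⟩ := Function.ne_iff.1 hu
  refine ⟨v i / u i, ?_⟩
  simp only [Pi.zero_apply] at hi
  ext j
  simp only [Pi.smul_apply, smul_eq_mul]
  rw [div_mul_eq_mul_div, eq_div_iff hi]
  fin_cases i <;> fin_cases j <;> simp <;> grind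

lemma eq_smul_pole {u v z : Vec F} (h : pole u v ≠ 0) (hu : B z u = 0) (hv : B z v = 0) :
    ∃ c : F, z = c • pole u v := by
  by_cases hz : z = 0
  · exact ⟨0, by simp [hz]⟩
  have h1 : pole z (pole u v) = 0 := by rw [pole_pole, B_swap0 hu, B_swap0 hv]; simp
  obtain ⟨c, hc⟩ := pole_eq_zero hz h1
  have hc0 : c ≠ 0 := by rintro rfl; simp at hc; exact h hc
  exact ⟨c⁻¹, by rw [hc, smul_smul, inv_mul_cancel₀ hc0, one_smul]⟩

lemma pole_ne_of_D {u v x : Vec F} (h : D x u v ≠ 0) : pole u v ≠ 0 := by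
  intro h'; rw [← B_pole, h', B_zero_right] at h; exact h rfl

lemma pole_smul (a b : F) (u v : Vec F) :
    pole (a • u) (b • v) = (star a * star b) • pole u v := by
  ext i; fin_cases i <;> simp [pole] <;> ring

/-- The form has Witt index one. -/
lemma iso_perp {p q : Vec F} (hp0 : p ≠ 0) (hp : B p p = 0) (hq : B q q = 0) (h : B p q = 0) :
    ∃ c : F, q = c • p := by
  by_cases hz : pole p q = 0
  · exact pole_eq_zero hp0 hz
  obtain ⟨c, hc⟩ := eq_smul_pole hz hp h
  obtain ⟨d, hd⟩ := eq_smul_pole hz (B_swap0 h) hq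
  have hc0 : c ≠ 0 := by rintro rfl; simp at hc; exact hp0 hc
  refine ⟨d * c⁻¹, ?_⟩
  calc q = d • pole p q := hd
    _ = (d * c⁻¹) • c • pole p q := by rw [smul_smul, inv_mul_cancel_right₀ hc0]
    _ = (d * c⁻¹) • p := by rw [← hc]

lemma ne_zero_of_B {x y : Vec F} (h : B x y ≠ 0) : x ≠ 0 := by rintro rfl; simp at h
lemma ne_zero_of_B' {x y : Vec F} (h : B x y ≠ 0) : y ≠ 0 := by rintro rfl; simp at h

variable (F) in
/-- The special unitary group as a group of linear automorphisms of `F³`. -/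
def GG : Subgroup (Vec F ≃ₗ[F] Vec F) where
  carrier := {g | (∀ x y, B (g x) (g y) = B x y) ∧ ∀ x y z, D (g x) (g y) (g z) = D x y z}
  one_mem' := by constructor <;> intros <;> rfl
  mul_mem' := by
    rintro a b ⟨ha, ha'⟩ ⟨hb, hb'⟩
    constructor
    · intro x y; exact (ha _ _).trans (hb x y)
    · intro x y z; exact (ha' _ _ _).trans (hb' x y z)
  inv_mem' := by
    rintro a ⟨ha, ha'⟩
    constructor
    · intro x y; rw [← ha]; congr 1 <;> exact a.apply_symm_apply _
    · intro x y z; rw [← ha']; congr 1 <;> exact a.apply_symm_apply _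

instance : Finite (Vec F ≃ₗ[F] Vec F) := DFunLike.finite _

@[simp] lemma B_g (g : GG F) (x y : Vec F) : B (g • x) (g • y) = B x y := g.2.1 x y
@[simp] lemma D_g (g : GG F) (x y z : Vec F) : D (g • x) (g • y) (g • z) = D x y z := g.2.2 x y z

lemma g_smul (g : GG F) (a : F) (x : Vec F) : g • a • x = a • g • x := smul_comm g a x

lemma B_inv_right (g : GG F) (x y : Vec F) : B x (g⁻¹ • y) = B (g • x) y := by
  rw [← B_g g, smul_inv_smul]

lemma g_ext {g h : GG F} (H : ∀ x : Vec F, g • x = h • x) : g = h :=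
  Subtype.ext (LinearEquiv.ext H)

lemma g_pole (g : GG F) (u v : Vec F) : g • pole u v = pole (g • u) (g • v) := by
  have : ∀ y, B (g • pole u v + pole (g • u) (g • v)) y = 0 := by
    intro y
    have h1 : B y (g • pole u v) = B y (pole (g • u) (g • v)) := by
      rw [B_pole, ← smul_inv_smul g y, B_g, D_g, B_pole]
    have h2 := congrArg star h1
    rw [B_star, B_star] at h2
    rw [B_add_left, h2, add_self']
  have h3 := eq_zero_of_B this
  have h4 : g • pole u v = - pole (g • u) (g • v) := eq_neg_of_add_eq_zero_left h3
  rw [h4]; ext i; simp [neg_eq']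

lemma smul_ne0 (g : GG F) {x : Vec F} (h : x ≠ 0) : g • x ≠ 0 := by
  intro h'; exact h ((smul_eq_zero_iff_eq g).1 h')

/-- Two elements agreeing on a basis are equal. -/
lemma g_ext3 {g h : GG F} {a b c : Vec F} (hD : D a b c ≠ 0) (ha : g • a = h • a)
    (hb : g • b = h • b) (hc : g • c = h • c) : g = h := by
  apply g_ext
  intro x
  have h1 := congrArg (fun z => g • z) (cramer a b c x)
  have h2 := congrArg (fun z => h • z) (cramer a b c x)
  simp only [smul_add, g_smul, ha, hb, hc] at h1 h2
  exact smul_right_injective _ hD (h1.trans h2.symm)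

lemma eq_one3 {g : GG F} {a b c : Vec F} (hD : D a b c ≠ 0) (ha : g • a = a)
    (hb : g • b = b) (hc : g • c = c) : g = 1 :=
  g_ext3 hD (by rw [ha, one_smul]) (by rw [hb, one_smul]) (by rw [hc, one_smul])

/-- Linear combination with given vectors. -/
def comb (a b c : Vec F) : Vec F →ₗ[F] Vec F where
  toFun x := x 0 • a + x 1 • b + x 2 • c
  map_add' x y := by simp only [Pi.add_apply, add_smul]; abel
  map_smul' r x := by simp [mul_smul]

lemma comb_apply (a b c x : Vec F) : comb a b c x = x 0 • a + x 1 • b + x 2 • c := rfl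

lemma comb_inj {a b c : Vec F} (h : D a b c ≠ 0) : Function.Injective (comb a b c) := by
  rw [← LinearMap.ker_eq_bot, LinearMap.ker_eq_bot']
  intro x hx
  rw [comb_apply] at hx
  have h0 := congrArg (fun z => D z b c) hx
  have h1 := congrArg (fun z => D a z c) hx
  have h2 := congrArg (fun z => D a b z) hx
  simp [h] at h0 h1 h2
  ext i; fin_cases i <;> simp [h0, h1, h2]

lemma D_comb (a b c x y z : Vec F) :
    D (comb a b c x) (comb a b c y) (comb a b c z) = D x y z * D a b c := by
  simp only [comb_apply, D, Pi.add_apply, Pi.smul_apply, smul_eq_mul]; ring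

/-- Witt's extension property for bases: vectors with the same Gram matrix and determinant. -/
lemma exists_g3 {a b c a' b' c' : Vec F} (hD : D a b c ≠ 0) (hD' : D a' b' c' = D a b c)
    (haa : B a' a' = B a a) (hbb : B b' b' = B b b) (hcc : B c' c' = B c c)
    (hab : B a' b' = B a b) (hac : B a' c' = B a c) (hbc : B b' c' = B b c) :
    ∃ g : GG F, g • a = a' ∧ g • b = b' ∧ g • c = c' := by
  have hba : B b' a' = B b a := by rw [← B_star, hab, B_star]
  have hca : B c' a' = B c a := by rw [← B_star, hac, B_star]
  have hcb : B c' b' = B c b := by rw [← B_star, hbc, B_star]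
  let e := LinearEquiv.ofInjectiveEndo (comb a b c) (comb_inj hD)
  let e' := LinearEquiv.ofInjectiveEndo (comb a' b' c') (comb_inj (hD' ▸ hD))
  have he : ∀ x, e x = comb a b c x := fun x => rfl
  have he' : ∀ x, e' x = comb a' b' c' x := fun x => rfl
  have hB : ∀ x y, B (e' x) (e' y) = B (e x) (e y) := by
    intro x y
    simp only [he, he', comb_apply, B_add_left, B_add_right, B_smul_left, B_smul_right,
      haa, hbb, hcc, hab, hac, hbc, hba, hca, hcb]
  have hDD : ∀ x y z, D (e' x) (e' y) (e' z) = D (e x) (e y) (e z) := by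
    intro x y z
    simp only [he, he', D_comb, hD']
  refine ⟨⟨e.symm.trans e', ?_, ?_⟩, ?_, ?_, ?_⟩
  · intro x y
    simp only [LinearEquiv.trans_apply, hB, LinearEquiv.apply_symm_apply]
  · intro x y z
    simp only [LinearEquiv.trans_apply, hDD, LinearEquiv.apply_symm_apply]
  · show e' (e.symm a) = a'
    rw [show a = e (Pi.single 0 1) by simp [he, comb_apply], LinearEquiv.symm_apply_apply]
    simp [he', comb_apply]
  · show e' (e.symm b) = b'
    rw [show b = e (Pi.single 1 1) by simp [he, comb_apply], LinearEquiv.symm_apply_apply]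
    simp [he', comb_apply]
  · show e' (e.symm c) = c'
    rw [show c = e (Pi.single 2 1) by simp [he, comb_apply], LinearEquiv.symm_apply_apply]
    simp [he', comb_apply]

lemma D_pole (u v : Vec F) : D u v (pole u v) = B u u * B v v - B u v * B v u := by
  rw [← lagrange, B_pole, ← D_rot, ← D_rot]

/-- Witt's extension property for nondegenerate planes. -/
lemma exists_g2 {a b a' b' : Vec F} (hD : B a a * B b b - B a b * B b a ≠ 0)
    (haa : B a' a' = B a a) (hbb : B b' b' = B b b) (hab : B a' b' = B a b) :
    ∃ g : GG F, g • a = a' ∧ g • b = b' := by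
  have hba : B b' a' = B b a := by rw [← B_star, hab, B_star]
  obtain ⟨g, h1, h2, -⟩ := exists_g3 (a := a) (b := b) (c := pole a b) (a' := a') (b' := b')
    (c' := pole a' b') (by rwa [D_pole]) (by simp only [D_pole, *]) haa hbb
    (by simp only [lagrange, *]) hab (by rw [B_pole_self1, B_pole_self1])
    (by rw [B_pole_self2, B_pole_self2])
  exact ⟨g, h1, h2⟩

lemma eq_one2 {g : GG F} {a b : Vec F} (hD : B a a * B b b - B a b * B b a ≠ 0)
    (ha : g • a = a) (hb : g • b = b) : g = 1 :=
  eq_one3 (c := pole a b) (by rwa [D_pole]) ha hb (by rw [g_pole, ha, hb])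

/-- The unitary transvection `x ↦ x + a B(x,p) p` with isotropic `p` and `a` fixed by the
involution. -/
def Tv (p : Vec F) (a : F) (hp : B p p = 0) (ha : star a = a) : GG F := by
  let f : Vec F →ₗ[F] Vec F :=
    { toFun := fun x => x + (a * B x p) • p
      map_add' := fun x y => by rw [B_add_left, mul_add, add_smul]; abel
      map_smul' := fun r x => by
        rw [B_smul_left, RingHom.id_apply, smul_add, smul_smul]; congr 2; ring }
  have hf : ∀ x, f (f x) = x := fun x => by
    show x + (a * B x p) • p + (a * B (x + (a * B x p) • p) p) • p = x
    rw [B_add_left, B_smul_left, hp, mul_zero, add_zero, add_assoc, ← add_smul, add_self',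
      zero_smul, add_zero]
  refine ⟨LinearEquiv.ofInvolutive f hf, ?_, ?_⟩
  · intro x y
    show B (x + (a * B x p) • p) (y + (a * B y p) • p) = B x y
    simp only [B_add_left, B_add_right, B_smul_left, B_smul_right, hp, star_mul', ha, B_star]
    linear_combination (a * B x p * B p y) * two0 (F := F)
  · intro x y z
    show D (x + (a * B x p) • p) (y + (a * B y p) • p) (z + (a * B z p) • p) = D x y z
    have h := congrArg (fun v => B v p) (cramer x y z p)
    simp only [B_add_left, B_smul_left, hp] at h
    simp only [D_add1, D_add2, D_add3, D_smul1, D_smul2, D_smul3, D_self12, D_self13, D_self23]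
    linear_combination (-a) * h

@[simp] lemma Tv_smul (p : Vec F) (a : F) (hp : B p p = 0) (ha : star a = a) (x : Vec F) :
    Tv p a hp ha • x = x + (a * B x p) • p := rfl

end Geometry

/-! ### Points and fixed points of subgroups -/

section Points

variable {F : Type} [Field F] [StarRing F] [HermField F]

/-- The points of the projective plane. -/
abbrev Pt (F : Type) [Field F] : Type := Projectivization F (Vec F)

instance : Finite (Pt F) := Quotient.finite _

noncomputable instance : Fintype (Pt F) := Fintype.ofFinite _

/-- The point spanned by a nonzero vector. -/
abbrev pt (v : Vec F) (hv : v ≠ 0) : Pt F := Projectivization.mk F v hv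

lemma pt_rep (P : Pt F) : pt P.rep P.rep_nonzero = P := P.mk_rep

lemma pt_eq {v w : Vec F} (hv : v ≠ 0) (hw : w ≠ 0) : pt v hv = pt w hw ↔ ∃ c : F, v = c • w := by
  rw [Projectivization.mk_eq_mk_iff']
  exact ⟨fun ⟨a, h⟩ => ⟨a, h.symm⟩, fun ⟨a, h⟩ => ⟨a, h.symm⟩⟩

lemma g_pt (g : GG F) {v : Vec F} (hv : v ≠ 0) : g • pt v hv = pt (g • v) (smul_ne0 g hv) := rfl

lemma g_pt_eq (g : GG F) {v : Vec F} (hv : v ≠ 0) : g • pt v hv = pt v hv ↔ ∃ c : F, g • v = c • v := by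
  rw [g_pt, pt_eq]

lemma exists_rep (P : Pt F) : ∃ (v : Vec F) (hv : v ≠ 0), P = pt v hv :=
  ⟨P.rep, P.rep_nonzero, (pt_rep P).symm⟩

/-- Isotropic points. -/
def Iso (P : Pt F) : Prop := B P.rep P.rep = 0

/-- Orthogonality of points. -/
def Perp (P Q : Pt F) : Prop := B P.rep Q.rep = 0

lemma rep_pt {v : Vec F} (hv : v ≠ 0) : ∃ c : F, c ≠ 0 ∧ (pt v hv).rep = c • v := by
  obtain ⟨a, ha⟩ := Projectivization.exists_smul_eq_mk_rep F v hv
  exact ⟨a, a.ne_zero, ha.symm⟩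

lemma iso_pt {v : Vec F} (hv : v ≠ 0) : Iso (pt v hv) ↔ B v v = 0 := by
  obtain ⟨c, hc, h⟩ := rep_pt hv
  simp [Iso, h, hc]

lemma perp_pt {v w : Vec F} (hv : v ≠ 0) (hw : w ≠ 0) : Perp (pt v hv) (pt w hw) ↔ B v w = 0 := by
  obtain ⟨c, hc, h⟩ := rep_pt hv
  obtain ⟨d, hd, h'⟩ := rep_pt hw
  simp [Perp, h, hc, h', hd]

lemma Perp.symm {P Q : Pt F} (h : Perp P Q) : Perp Q P := B_swap0 h

lemma perp_self {P : Pt F} : Perp P P ↔ Iso P := Iff.rfl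

lemma iso_smul (g : GG F) (P : Pt F) : Iso (g • P) ↔ Iso P := by
  obtain ⟨v, hv, rfl⟩ := exists_rep P
  rw [g_pt, iso_pt, iso_pt, B_g]

lemma perp_smul (g : GG F) (P Q : Pt F) : Perp (g • P) (g • Q) ↔ Perp P Q := by
  obtain ⟨v, hv, rfl⟩ := exists_rep P
  obtain ⟨w, hw, rfl⟩ := exists_rep Q
  rw [g_pt, g_pt, perp_pt, perp_pt, B_g]

lemma iso_perp_pt {P Q : Pt F} (hP : Iso P) (hQ : Iso Q) (h : Perp P Q) : P = Q := by
  obtain ⟨v, hv, rfl⟩ := exists_rep P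
  obtain ⟨w, hw, rfl⟩ := exists_rep Q
  rw [iso_pt] at hP hQ
  rw [perp_pt] at h
  rw [eq_comm, pt_eq]
  exact iso_perp hv hP hQ h

lemma pole_ne {v w : Vec F} (hv : v ≠ 0) (hw : w ≠ 0) (h : pt v hv ≠ pt w hw) : pole v w ≠ 0 := by
  intro h0
  exact h (((pt_eq hw hv).2 (pole_eq_zero hv h0)).symm)

/-- The pole of the line through two distinct points. -/
noncomputable def third (P Q : Pt F) : Pt F :=
  if h : pole P.rep Q.rep ≠ 0 then pt _ h else P

lemma third_eq {P Q : Pt F} (h : P ≠ Q) : ∃ h : pole P.rep Q.rep ≠ 0, third P Q = pt _ h := by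
  have h1 : pole P.rep Q.rep ≠ 0 :=
    pole_ne P.rep_nonzero Q.rep_nonzero (by rwa [pt_rep, pt_rep])
  exact ⟨h1, dif_pos h1⟩

lemma third_perp1 {P Q : Pt F} (h : P ≠ Q) : Perp P (third P Q) := by
  obtain ⟨h1, h2⟩ := third_eq h
  rw [h2]; nth_rw 1 [← pt_rep P]; rw [perp_pt]
  exact B_pole_self1 _ _

lemma third_perp2 {P Q : Pt F} (h : P ≠ Q) : Perp Q (third P Q) := by
  obtain ⟨h1, h2⟩ := third_eq h
  rw [h2]; nth_rw 1 [← pt_rep Q]; rw [perp_pt]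
  exact B_pole_self2 _ _

lemma eq_third {P Q R : Pt F} (h : P ≠ Q) (hP : Perp R P) (hQ : Perp R Q) : R = third P Q := by
  obtain ⟨h1, h2⟩ := third_eq h
  rw [h2]; rw [← pt_rep R, pt_eq]
  exact eq_smul_pole h1 hP hQ

lemma third_smul (g : GG F) {P Q : Pt F} (h : P ≠ Q) : g • third P Q = third (g • P) (g • Q) := by
  apply eq_third (fun h' => h (smul_left_cancel g h'))
  · rw [perp_smul]; exact (third_perp1 h).symm
  · rw [perp_smul]; exact (third_perp2 h).symm

lemma third_noniso {P Q : Pt F} (hP : ¬ Iso P) (hQ : ¬ Iso Q) (h : Perp P Q) :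
    ¬ Iso (third P Q) := by
  have hne : P ≠ Q := by rintro rfl; exact hP h
  obtain ⟨h1, h2⟩ := third_eq hne
  rw [h2, iso_pt, lagrange, show B P.rep Q.rep = 0 from h, zero_mul, sub_zero]
  exact mul_ne_zero hP hQ

/-- The points fixed by every element of a subgroup. -/
noncomputable def Fix (K : Subgroup (GG F)) : Finset (Pt F) := {P | ∀ k ∈ K, k • P = P}

lemma mem_Fix {K : Subgroup (GG F)} {P : Pt F} : P ∈ Fix K ↔ ∀ k ∈ K, k • P = P := by
  simp [Fix]

lemma Fix_anti {K L : Subgroup (GG F)} (h : K ≤ L) : Fix L ⊆ Fix K := by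
  intro P hP; rw [mem_Fix] at *; exact fun k hk => hP k (h hk)

lemma third_mem_Fix {K : Subgroup (GG F)} {P Q : Pt F} (h : P ≠ Q) (hP : P ∈ Fix K)
    (hQ : Q ∈ Fix K) : third P Q ∈ Fix K := by
  rw [mem_Fix] at *
  intro k hk
  rw [third_smul k h, hP k hk, hQ k hk]

lemma smul_mem_Fix {K : Subgroup (GG F)} {P : Pt F} {h : GG F}
    (hn : ∀ k ∈ K, h⁻¹ * k * h ∈ K) (hP : P ∈ Fix K) : h • P ∈ Fix K := by
  rw [mem_Fix] at *
  intro k hk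
  have := hP _ (hn k hk)
  rw [mul_smul, mul_smul, inv_smul_eq_iff] at this
  exact this

lemma unit_of_eigen {g : GG F} {x y : Vec F} {a b : F} (hx : g • x = a • x) (hy : g • y = b • y)
    (h : B x y ≠ 0) : a * star b = 1 := by
  have h1 := B_g g x y
  rw [hx, hy, B_smul_left, B_smul_right, ← mul_assoc] at h1
  exact mul_right_cancel₀ h (h1.trans (one_mul _).symm)

/-- Two eigenvalues on nonorthogonal eigenvectors agree as soon as one of them is unitary. -/
lemma eigen_eq {g : GG F} {x y : Vec F} {a b : F} (hx : g • x = a • x) (hy : g • y = b • y)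
    (h : B x y ≠ 0) (ha : a * star a = 1) : b = a := by
  have h1 := unit_of_eigen hx hy h
  have ha0 : a ≠ 0 := by rintro rfl; simp at ha
  exact star_injective (mul_left_cancel₀ ha0 (h1.trans ha.symm))

/-- The only scalar in the special unitary group is the identity, since `3 ∤ q + 1`. -/
lemma scalar_one {g : GG F} {a b c : Vec F} {t : F} (hD : D a b c ≠ 0) (ha : g • a = t • a)
    (hb : g • b = t • b) (hc : g • c = t • c) : g = 1 := by
  have h3 : t ^ 3 = 1 := by
    have := D_g g a b c
    rw [ha, hb, hc, D_smul1, D_smul2, D_smul3] at this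
    apply mul_right_cancel₀ hD
    linear_combination this
  have hN : t * star t = 1 := by
    have ha0 : a ≠ 0 := by rintro rfl; simp at hD
    obtain ⟨y, hy⟩ := exists_B_ne ha0
    by_cases haa : B a a ≠ 0
    · exact unit_of_eigen ha ha haa
    by_cases hab : B a b ≠ 0
    · exact unit_of_eigen ha hb hab
    by_cases hac : B a c ≠ 0
    · exact unit_of_eigen ha hc hac
    push Not at haa hab hac
    have := congrArg (fun z => B a z) (cramer a b c y)
    simp [haa, hab, hac, hD, hy] at this
  have := cube_one h3 hN
  subst this
  simp only [one_smul] at ha hb hc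
  exact eq_one3 hD ha hb hc

/-- The fixed points of a nontrivial subgroup are orthogonal to one of them, up to that point. -/
lemma exists_center {K : Subgroup (GG F)} (hK : K ≠ ⊥) (hF : (Fix K).Nonempty) :
    ∃ X ∈ Fix K, ∀ Y ∈ Fix K, Y = X ∨ Perp Y X := by
  by_contra! hcon
  by_cases hiso : ∃ X ∈ Fix K, ¬ Iso X
  · obtain ⟨X, hX, hXi⟩ := hiso
    obtain ⟨Y, hY, hYX, hp⟩ := hcon X hX
    obtain ⟨Y', hY', hYZ, hp'⟩ := hcon _ (third_mem_Fix hYX.symm hX hY)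
    apply hK
    rw [eq_bot_iff]
    intro k hk
    have hT : ∀ P ∈ Fix K, ∃ c : F, k • P.rep = c • P.rep := by
      intro P hP
      rw [← g_pt_eq k P.rep_nonzero, pt_rep]
      exact mem_Fix.1 hP k hk
    obtain ⟨a, ha⟩ := hT X hX
    obtain ⟨b, hb⟩ := hT Y hY
    obtain ⟨c, hc⟩ := hT Y' hY'
    have haa := unit_of_eigen ha ha hXi
    have hba : b = a := eigen_eq ha hb (fun h => hp (B_swap0 h)) haa
    have hca : c = a := by
      by_cases h1 : B X.rep Y'.rep = 0
      · by_cases h2 : B Y.rep Y'.rep = 0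
        · exact absurd (eq_third hYX.symm (B_swap0 h1) (B_swap0 h2)) hYZ
        · rw [← hba]; exact eigen_eq hb hc h2 (hba ▸ haa)
      · exact eigen_eq ha hc h1 haa
    rw [hba] at hb
    rw [hca] at hc
    refine scalar_one (a := Y'.rep) (b := X.rep) (c := Y.rep) ?_ hc ha hb
    obtain ⟨h1, h2⟩ := third_eq hYX.symm
    rw [h2] at hp'
    nth_rw 1 [← pt_rep Y'] at hp'
    rwa [perp_pt, B_pole] at hp'
  · push Not at hiso
    obtain ⟨X, hX⟩ := hF
    obtain ⟨Y, hY, hYX, hp⟩ := hcon X hX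
    have hZ := third_mem_Fix hYX.symm hX hY
    have : X = third X Y := iso_perp_pt (hiso X hX) (hiso _ hZ) (third_perp1 hYX.symm)
    apply hp
    have h2 := third_perp2 hYX.symm
    rwa [← this] at h2

/-- The weights defining the `G`-invariant virtual set of points and flags. -/
noncomputable def wt (P Q : Pt F) : ℤ := if Perp P Q ∧ ¬ Iso Q then (if Iso P then 3 else 1) else 0

/-- The weighted count `3 #S - ∑ w(P,Q)` of points and flags of a set of points. -/
noncomputable def cc (S : Finset (Pt F)) : ℤ := ∑ Q ∈ S, (3 - ∑ P ∈ S, wt P Q)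

lemma cc_empty : cc (∅ : Finset (Pt F)) = 0 := rfl

/-- The weights are chosen to make the fixed points of a nontrivial subgroup count for three as soon
as there are any: the points other than the center of `exists_center` cancel. -/
lemma cc_Fix {K : Subgroup (GG F)} (hK : K ≠ ⊥) (hF : (Fix K).Nonempty) : cc (Fix K) = 3 := by
  obtain ⟨X, hX, hc⟩ := exists_center hK hF
  unfold cc
  rw [← Finset.add_sum_erase _ _ hX]
  by_cases hXi : Iso X
  · have h1 : ∑ P ∈ Fix K, wt P X = 0 :=
      Finset.sum_eq_zero fun P _ => if_neg fun h => h.2 hXi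
    rw [h1, Finset.sum_eq_zero]
    · rfl
    intro Q hQ
    obtain ⟨hQX, hQ⟩ := Finset.mem_erase.1 hQ
    have hp : Perp Q X := (hc Q hQ).resolve_left hQX
    have hQi : ¬ Iso Q := fun h => hQX (iso_perp_pt h hXi hp)
    rw [Finset.sum_eq_single_of_mem X hX]
    · simp [wt, hp.symm, hQi, hXi]
    intro P hP hPX
    apply if_neg
    rintro ⟨h, -⟩
    have h2 := eq_third hQX h ((hc P hP).resolve_left hPX)
    have h3 := eq_third hQX hp.symm (perp_self.2 hXi)
    exact hPX (h2.trans h3.symm)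
  · have h1 : wt X X = 0 := if_neg fun h => hXi h.1
    rw [← Finset.add_sum_erase _ (fun P => wt P X) hX, h1, zero_add, sub_add, ← Finset.sum_sub_distrib,
      Finset.sum_eq_zero]
    · rfl
    intro Q hQ
    obtain ⟨hQX, hQ⟩ := Finset.mem_erase.1 hQ
    have hp : Perp Q X := (hc Q hQ).resolve_left hQX
    have h2 : wt Q X = if Iso Q then 3 else 1 := if_pos ⟨hp, hXi⟩
    by_cases hQi : Iso Q
    · have h3 : ∑ P ∈ Fix K, wt P Q = 0 :=
        Finset.sum_eq_zero fun P _ => if_neg fun h => h.2 hQi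
      rw [h3, h2, if_pos hQi]; norm_num
    have hT := third_mem_Fix hQX.symm hX hQ
    have hTX : X ≠ third X Q := by
      intro h; have := third_perp1 hQX.symm; rw [← h] at this; exact hXi this
    rw [h2, if_neg hQi, Finset.sum_eq_add X (third X Q) hTX]
    · have hTi := third_noniso hXi hQi hp.symm
      have h3 : wt X Q = 1 := by simp [wt, hp.symm, hQi, hXi]
      have h4 : wt (third X Q) Q = 1 := by
        simp [wt, (third_perp2 hQX.symm).symm, hQi, hTi]
      rw [h3, h4]; norm_num
    · rintro P hP ⟨hPX, hPT⟩
      apply if_neg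
      rintro ⟨h, -⟩
      exact hPT (eq_third hQX.symm ((hc P hP).resolve_left hPX) h)
    · exact fun h => absurd hX h
    · exact fun h => absurd hT h

lemma cc_Fix' {K : Subgroup (GG F)} (hK : K ≠ ⊥) :
    cc (Fix K) = if (Fix K) = ∅ then 0 else 3 := by
  split_ifs with h
  · rw [h, cc_empty]
  · exact cc_Fix hK (Finset.nonempty_iff_ne_empty.2 h)

end Points

/-! ### Transitivity and the two counts over irreducible subgroups and elements -/

section Counting

/-- The number of fixed points of `g` satisfying `p`. -/
noncomputable def fixCount {G X : Type} [Group G] [MulAction G X] [Fintype X] (p : X → Prop)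
    (g : G) : ℕ := ({x : X | p x ∧ g • x = x} : Finset X).card

/-- Counting pairs (group element, fixed point) over one orbit. -/
lemma burnside_orbit {G X : Type} [Group G] [Fintype G] [MulAction G X] [Fintype X] (p : X → Prop)
    (x0 : X) (hp : ∀ x, p x ↔ ∃ g : G, g • x0 = x) :
    ∑ g : G, fixCount p g = Fintype.card G := by
  simp only [fixCount, Finset.card_filter]
  rw [Finset.sum_comm]
  have h1 : ∀ x, (∑ g : G, if p x ∧ g • x = x then 1 else 0) =
      if p x then Fintype.card (MulAction.stabilizer G x0) else 0 := by
    intro x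
    split_ifs with h
    · have hx : MulAction.orbit G x = MulAction.orbit G x0 := by
        rw [MulAction.orbit_eq_iff]; exact (hp x).1 h
      have e1 := MulAction.card_orbit_mul_card_stabilizer_eq_card_group G x
      have e2 := MulAction.card_orbit_mul_card_stabilizer_eq_card_group G x0
      simp only [h, true_and]
      rw [← Finset.card_filter]
      have e3 : Fintype.card (MulAction.stabilizer G x) =
          (Finset.univ.filter fun g : G => g • x = x).card := by
        rw [Fintype.card_subtype]; rfl
      rw [← e3]
      have e4 : Fintype.card (MulAction.orbit G x) = Fintype.card (MulAction.orbit G x0) := by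
        simp only [← Nat.card_eq_fintype_card, hx]
      rw [e4, ← e2] at e1
      exact Nat.eq_of_mul_eq_mul_left
        (Fintype.card_pos_iff.2 ⟨⟨x0, MulAction.mem_orbit_self x0⟩⟩) e1
    · simp [h]
  simp only [h1]
  rw [← Finset.sum_filter, Finset.sum_const, smul_eq_mul,
    ← MulAction.card_orbit_mul_card_stabilizer_eq_card_group G x0]
  congr 1
  rw [← Set.toFinset_card]
  congr 1
  ext x
  simp only [Finset.mem_filter, Finset.mem_univ, true_and, Set.mem_toFinset, hp]
  rfl

end Counting

section Transitivity

variable {F : Type} [Field F] [StarRing F] [HermField F]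

noncomputable instance : Fintype (GG F) := Fintype.ofFinite _

/-- Every nonisotropic vector has a unit multiple. -/
lemma exists_unit_mul {q : Vec F} (h : B q q ≠ 0) : ∃ b : F, b ≠ 0 ∧ B (b • q) (b • q) = 1 := by
  obtain ⟨b, hb⟩ := exists_norm (B_real q)
  have hb0 : b ≠ 0 := by rintro rfl; rw [zero_mul] at hb; exact h hb.symm
  have := star_ne0 hb0
  exact ⟨b⁻¹, inv_ne_zero hb0, by simp [← hb]; field_simp⟩

/-- A nonzero isotropic vector orthogonal to a unit vector `q` lies in a hyperbolic pair
orthogonal to `q`. -/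
lemma exists_hyp {p q : Vec F} (hp0 : p ≠ 0) (hp : B p p = 0) (hpq : B p q = 0) (hq : B q q = 1) :
    ∃ y, B p y = 1 ∧ B y y = 0 ∧ B y q = 0 := by
  obtain ⟨z, hz⟩ := exists_B_ne hp0
  set z1 := z + (B z q) • q with hz1
  have h1 : B p z1 = B p z := by simp [hz1, hpq]
  have h2 : B z1 q = 0 := by simp [hz1, hq, add_self']
  set z2 := (star (B p z))⁻¹ • z1 with hz2
  have h3 : B p z2 = 1 := by simp [hz2, h1, hz]
  have h4 : B z2 q = 0 := by simp [hz2, h2]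
  obtain ⟨c, hc⟩ := exists_trace_one (F := F)
  have h3' : B z2 p = 1 := by rw [← B_star, h3, star_one]
  refine ⟨z2 + (c * B z2 z2) • p, ?_, ?_, ?_⟩
  · simp [h3, hp]
  · simp only [B_add_left, B_add_right, B_smul_left, B_smul_right, hp, h3, h3', star_mul', B_star]
    linear_combination (B z2 z2) * hc + B z2 z2 * two0 (F := F)
  · simp [h4, hpq]

lemma exists_onb {p : Vec F} (hp : B p p = 1) :
    ∃ u v, B u u = 1 ∧ B v v = 1 ∧ B p u = 0 ∧ B p v = 0 ∧ B u v = 0 := by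
  have hp0 : p ≠ 0 := by rintro rfl; simp at hp
  suffices h : ∃ z, B z z ≠ 0 ∧ B p z = 0 by
    obtain ⟨z, hz, hpz⟩ := h
    obtain ⟨b, hb, hb1⟩ := exists_unit_mul hz
    have h1 : B p (b • z) = 0 := by simp [hpz]
    refine ⟨b • z, pole p (b • z), hb1, ?_, h1, B_pole_self1 _ _, B_pole_self2 _ _⟩
    rw [lagrange, hp, hb1, h1]; simp
  obtain ⟨x, hx⟩ : ∃ x, pole p x ≠ 0 := by
    by_contra! h
    have h1 : ∀ x y, D p x y = 0 := fun x y => by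
      rw [← D_rot, ← D_rot, ← B_pole, h, B_zero_right]
    have := h1 (Pi.single 1 1) (Pi.single 2 1)
    have h2 := h1 (Pi.single 2 1) (Pi.single 0 1)
    have h3 := h1 (Pi.single 0 1) (Pi.single 1 1)
    apply hp0
    simp [D] at this h2 h3
    ext i; fin_cases i <;> simpa
  have hz := B_pole_self1 p x
  by_cases hzz : B (pole p x) (pole p x) = 0
  · obtain ⟨y, h1, h2, h3⟩ := exists_hyp hx hzz (B_swap0 hz) hp
    obtain ⟨c, hc⟩ := exists_trace_one (F := F)
    refine ⟨pole p x + c • y, ?_, ?_⟩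
    · have h1' : B y (pole p x) = 1 := by rw [← B_star, h1, star_one]
      simp [hzz, h1, h1', h2, hc]
    · simp [hz, B_swap0 h3]
  · exact ⟨_, hzz, hz⟩

lemma exists_noniso_of_iso {p : Vec F} (hp0 : p ≠ 0) (hp : B p p = 0) :
    ∃ q, B q q = 1 ∧ B p q = 0 := by
  obtain ⟨z, hz⟩ := exists_B_ne hp0
  have : B (pole p z) (pole p z) ≠ 0 := by
    rw [lagrange, hp, zero_mul, zero_sub, neg_eq', ← B_star p z]
    exact mul_ne_zero hz (star_ne0 hz)
  obtain ⟨b, hb, hb1⟩ := exists_unit_mul this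
  exact ⟨b • pole p z, hb1, by simp [B_pole_self1]⟩

lemma exists_unit_rep {Q : Pt F} (h : ¬ Iso Q) :
    ∃ (q : Vec F) (h0 : q ≠ 0), B q q = 1 ∧ Q = pt q h0 := by
  obtain ⟨b, hb, hb1⟩ := exists_unit_mul h
  have h0 : b • Q.rep ≠ 0 := by rintro h0; rw [h0] at hb1; simp at hb1
  refine ⟨_, h0, hb1, ?_⟩
  nth_rw 1 [← pt_rep Q]
  rw [eq_comm, pt_eq]; exact ⟨b, rfl⟩

lemma ne0_of_unit {q : Vec F} (h : B q q = 1) : q ≠ 0 := by rintro rfl; simp at h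

/-- `G` is transitive on flags formed by an isotropic point and an orthogonal nonisotropic one. -/
lemma trans_iso_noniso {P Q P' Q' : Pt F} (hP : Iso P) (hQ : ¬ Iso Q) (h : Perp P Q)
    (hP' : Iso P') (hQ' : ¬ Iso Q') (h' : Perp P' Q') : ∃ g : GG F, g • P = P' ∧ g • Q = Q' := by
  obtain ⟨p, hp0, rfl⟩ := exists_rep P
  obtain ⟨p', hp0', rfl⟩ := exists_rep P'
  obtain ⟨q, hq0, hq, rfl⟩ := exists_unit_rep hQ
  obtain ⟨q', hq0', hq', rfl⟩ := exists_unit_rep hQ'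
  rw [iso_pt] at hP hP'
  rw [perp_pt] at h h'
  obtain ⟨y, h1, h2, h3⟩ := exists_hyp hp0 hP h hq
  obtain ⟨y', h1', h2', h3'⟩ := exists_hyp hp0' hP' h' hq'
  have hyp : B y p = 1 := by rw [← B_star, h1, star_one]
  have hyp' : B y' p' = 1 := by rw [← B_star, h1', star_one]
  obtain ⟨g, hg1, hg2⟩ := exists_g2 (a := p) (b := y) (a' := p') (b' := y')
    (by rw [hP, h1, hyp]; simp) (by rw [hP, hP']) (by rw [h2, h2']) (by rw [h1, h1'])
  refine ⟨g, ?_, ?_⟩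
  · simp only [g_pt, hg1]
  · have hz : pole p' y' ≠ 0 := by
      intro hz
      have := lagrange p' y' p' y'
      rw [hz, hP', h1', hyp'] at this; simp at this
    obtain ⟨c, hc⟩ := eq_smul_pole (u := p') (v := y') (z := g • q) hz
      (by rw [← hg1, B_g, B_swap0 h]) (by rw [← hg2, B_g, B_swap0 h3])
    obtain ⟨d, hd⟩ := eq_smul_pole (u := p') (v := y') (z := q') hz (B_swap0 h') (B_swap0 h3')
    have hd0 : d ≠ 0 := by rintro rfl; simp at hd; exact hq0' hd
    rw [g_pt, pt_eq]
    exact ⟨c * d⁻¹, by rw [hc, hd, smul_smul, inv_mul_cancel_right₀ hd0]⟩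

/-- `G` is transitive on ordered pairs of orthogonal nonisotropic points. -/
lemma trans_noniso {P Q P' Q' : Pt F} (hP : ¬ Iso P) (hQ : ¬ Iso Q) (h : Perp P Q)
    (hP' : ¬ Iso P') (hQ' : ¬ Iso Q') (h' : Perp P' Q') : ∃ g : GG F, g • P = P' ∧ g • Q = Q' := by
  obtain ⟨p, hp0, hp, rfl⟩ := exists_unit_rep hP
  obtain ⟨p', hp0', hp', rfl⟩ := exists_unit_rep hP'
  obtain ⟨q, hq0, hq, rfl⟩ := exists_unit_rep hQ
  obtain ⟨q', hq0', hq', rfl⟩ := exists_unit_rep hQ'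
  rw [perp_pt] at h h'
  obtain ⟨g, hg1, hg2⟩ := exists_g2 (a := p) (b := q) (a' := p') (b' := q')
    (by rw [hp, hq, h]; simp) (by rw [hp, hp']) (by rw [hq, hq']) (by rw [h, h'])
  exact ⟨g, by simp only [g_pt, hg1], by simp only [g_pt, hg2]⟩

lemma exists_perp_of_iso {P : Pt F} (hP : Iso P) : ∃ Q, ¬ Iso Q ∧ Perp P Q := by
  obtain ⟨p, hp0, rfl⟩ := exists_rep P
  rw [iso_pt] at hP
  obtain ⟨q, hq, hpq⟩ := exists_noniso_of_iso hp0 hP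
  exact ⟨pt q (ne0_of_unit hq), by rw [iso_pt, hq]; exact one_ne_zero, by rwa [perp_pt]⟩

/-- A nonisotropic point has at least three nonisotropic points orthogonal to it. -/
lemma exists_perp_of_noniso {P : Pt F} (hP : ¬ Iso P) : ∃ Q₁ Q₂ Q₃, Q₁ ≠ Q₂ ∧ Q₁ ≠ Q₃ ∧ Q₂ ≠ Q₃ ∧
    (¬ Iso Q₁ ∧ Perp P Q₁) ∧ (¬ Iso Q₂ ∧ Perp P Q₂) ∧ (¬ Iso Q₃ ∧ Perp P Q₃) ∧ Perp Q₁ Q₂ := by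
  obtain ⟨p, hp0, hp, rfl⟩ := exists_unit_rep hP
  obtain ⟨u, v, hu, hv, hpu, hpv, huv⟩ := exists_onb hp
  obtain ⟨w, hw, hw'⟩ := exists_omega (F := F)
  have hw0 : w ≠ 0 := by rintro rfl; simp at hw'
  have hvu := B_swap0 huv
  have hu0 := ne0_of_unit hu
  have hv0 := ne0_of_unit hv
  have hn : B (u + w • v) (u + w • v) ≠ 0 := by
    have : B (u + w • v) (u + w • v) = -w := by
      simp [hu, hv, huv, hvu, hw]; linear_combination hw'
    rw [this]; exact neg_ne_zero.2 hw0
  have hx0 : u + w • v ≠ 0 := by intro h; rw [h] at hn; simp at hn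
  refine ⟨pt u hu0, pt v hv0, pt _ hx0, ?_, ?_, ?_, ⟨?_, ?_⟩, ⟨?_, ?_⟩, ⟨?_, ?_⟩, ?_⟩
  · rw [Ne, pt_eq]; rintro ⟨c, rfl⟩
    have : c = 0 := by simpa [hv] using huv
    simp [this] at hu
  · rw [Ne, pt_eq]; rintro ⟨c, hc⟩
    have h1 := congrArg (fun z => B z v) hc
    have h2 := congrArg (fun z => B z u) hc
    simp [hu, hv, huv, hvu, hw0] at h1 h2
    rw [h1] at h2; simp at h2
  · rw [Ne, pt_eq]; rintro ⟨c, hc⟩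
    have h1 := congrArg (fun z => B z v) hc
    have h2 := congrArg (fun z => B z u) hc
    simp [hu, hv, huv, hvu] at h1 h2
    rw [← h2] at h1; simp at h1
  · rw [iso_pt, hu]; exact one_ne_zero
  · rwa [perp_pt]
  · rw [iso_pt, hv]; exact one_ne_zero
  · rwa [perp_pt]
  · rwa [iso_pt]
  · rw [perp_pt]; simp [hpu, hpv]
  · rwa [perp_pt]

/-- Some isotropic vector exists. -/
lemma exists_iso_vec : ∃ p : Vec F, p ≠ 0 ∧ B p p = 0 := by
  refine ⟨![1, 1, 0], ?_, ?_⟩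
  · intro h; have := congrFun h 0; simp at this
  · simp [B, add_self']

lemma exists_iso : ∃ P : Pt F, Iso P := by
  obtain ⟨p, hp0, hp⟩ := exists_iso_vec (F := F)
  exact ⟨pt p hp0, (iso_pt hp0).2 hp⟩

lemma Tv_ne_one {p : Vec F} (hp0 : p ≠ 0) (hp : B p p = 0) {a : F} (ha : star a = a) (ha0 : a ≠ 0) :
    Tv p a hp ha ≠ 1 := by
  obtain ⟨z, hz⟩ := exists_B_ne hp0
  intro h
  have := congrArg (fun g : GG F => g • z) h
  simp only [Tv_smul, one_smul, add_eq_left] at this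
  have hz' : B z p ≠ 0 := fun h => hz (B_swap0 h)
  simp [ha0, hz', hp0] at this

/-- Pointwise stabilizers of points and of the pairs of positive weight are nontrivial. -/
lemma stab_pair_ne_bot {P Q : Pt F} (h : Perp P Q) (hQ : ¬ Iso Q) :
    MulAction.stabilizer (GG F) P ⊓ MulAction.stabilizer (GG F) Q ≠ ⊥ := by
  rw [Subgroup.ne_bot_iff_exists_ne_one]
  suffices H : ∃ g : GG F, g • P = P ∧ g • Q = Q ∧ g ≠ 1 by
    obtain ⟨g, h1, h2, h3⟩ := H
    exact ⟨⟨g, h1, h2⟩, fun h => h3 (congrArg Subtype.val h)⟩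
  obtain ⟨q, hq0, hq, rfl⟩ := exists_unit_rep hQ
  by_cases hP : Iso P
  · obtain ⟨p, hp0, rfl⟩ := exists_rep P
    rw [iso_pt] at hP
    rw [perp_pt] at h
    refine ⟨Tv p 1 hP (star_one F), ?_, ?_, Tv_ne_one hp0 _ _ one_ne_zero⟩
    · rw [g_pt_eq]; exact ⟨1, by simp [hP]⟩
    · rw [g_pt_eq]; exact ⟨1, by simp [B_swap0 h]⟩
  · obtain ⟨p, hp0, hp, rfl⟩ := exists_unit_rep hP
    rw [perp_pt] at h
    obtain ⟨l, hl, hl1⟩ := exists_unit_ne (F := F)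
    obtain ⟨g, hg1, hg2⟩ := exists_g2 (a := p) (b := q) (a' := l • p) (b' := star l • q)
      (by rw [hp, hq, h]; simp) (by simp [hp, mul_comm (star l) l, hl]) (by simp [hq, hl]) (by simp [h])
    refine ⟨g, (g_pt_eq _ _).2 ⟨_, hg1⟩, (g_pt_eq _ _).2 ⟨_, hg2⟩, ?_⟩
    rintro rfl
    rw [one_smul] at hg1
    have := congrArg (fun z => B z p) hg1
    simp [hp] at this
    exact hl1 this.symm

lemma exists_perp (P : Pt F) : ∃ Q, ¬ Iso Q ∧ Perp P Q := by
  by_cases hP : Iso P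
  · exact exists_perp_of_iso hP
  · obtain ⟨Q, -, -, -, -, -, h, -⟩ := exists_perp_of_noniso hP
    exact ⟨Q, h⟩

lemma stab_ne_bot (P : Pt F) : MulAction.stabilizer (GG F) P ≠ ⊥ := by
  obtain ⟨Q, hQ, h⟩ := exists_perp P
  intro h'
  apply stab_pair_ne_bot h hQ
  rw [h', bot_inf_eq]

/-- Nonpositivity of the weighted count of the whole plane. -/
lemma cc_univ_le : cc (Finset.univ : Finset (Pt F)) ≤ 0 := by
  unfold cc
  rw [Finset.sum_sub_distrib, Finset.sum_comm, ← Finset.sum_sub_distrib]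
  apply Finset.sum_nonpos
  intro P _
  rw [sub_nonpos]
  have hnn : ∀ Q, 0 ≤ wt P Q := by intro Q; unfold wt; split_ifs <;> norm_num
  by_cases hP : Iso P
  · obtain ⟨Q, hQ, h⟩ := exists_perp_of_iso hP
    calc (3 : ℤ) = wt P Q := by simp [wt, hP, hQ, h]
      _ ≤ _ := Finset.single_le_sum (f := fun Q => wt P Q) (fun Q _ => hnn Q) (Finset.mem_univ Q)
  · obtain ⟨Q₁, Q₂, Q₃, h12, h13, h23, h1, h2, h3, -⟩ := exists_perp_of_noniso hP
    calc (3 : ℤ) = ∑ Q ∈ ({Q₁, Q₂, Q₃} : Finset (Pt F)), wt P Q := by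
          rw [Finset.sum_insert (by simp [h12, h13]), Finset.sum_pair h23]
          simp [wt, hP, h1, h2, h3]
      _ ≤ _ := Finset.sum_le_univ_sum_of_nonneg hnn

lemma cc_ite (S : Finset (Pt F)) : cc S =
    3 * (∑ P : Pt F, if P ∈ S then 1 else 0) -
      ∑ Q : Pt F, ∑ P : Pt F, wt P Q * (if P ∈ S ∧ Q ∈ S then 1 else 0) := by
  unfold cc
  rw [Finset.sum_sub_distrib]
  congr 1
  · simp [mul_comm]
  · have : ∀ Q P : Pt F, wt P Q * (if P ∈ S ∧ Q ∈ S then 1 else 0) =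
        if Q ∈ S then (if P ∈ S then wt P Q else 0) else 0 := by
      intro Q P; split_ifs <;> simp_all
    have h2 : ∀ Q : Pt F, (∑ P : Pt F, if Q ∈ S then (if P ∈ S then wt P Q else 0) else 0) =
        if Q ∈ S then ∑ P ∈ S, wt P Q else 0 := by
      intro Q; split_ifs <;> simp
    simp only [this, h2]
    simp

/-- Two ways of evaluating the sum of the Möbius function against the weighted count: only the
subgroups without a fixed point and the trivial one contribute. -/
lemma sum_irr {m : Subgroup (GG F) → ℤ}
    (hm : ∀ K : Subgroup (GG F), ∑ H with H ≤ K, m H = if K = ⊥ then 1 else 0) :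
    3 * ∑ H with Fix H = ∅, m H = cc (Finset.univ : Finset (Pt F)) - 3 := by
  have hstab : ∀ K : Subgroup (GG F), K ≠ ⊥ → ∑ H, m H * (if H ≤ K then 1 else 0) = 0 := by
    intro K hK
    simp only [mul_ite, mul_one, mul_zero]
    rw [← Finset.sum_filter, hm, if_neg hK]
  have hbot : m ⊥ = 1 := by
    have := hm ⊥
    rw [if_pos rfl, Finset.sum_eq_single ⊥] at this
    · exact this
    · intro H hH hne; exact absurd (le_bot_iff.1 (Finset.mem_filter.1 hH).2) hne
    · intro h; simp at h
  have htot : ∑ H, m H = 0 := by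
    have h := hstab (⊤ : Subgroup (GG F)) (fun h => by
      obtain ⟨P, -⟩ := exists_iso (F := F)
      exact stab_ne_bot P (eq_bot_iff.2 (le_top.trans h.le)))
    simpa using h
  have hmemP : ∀ (P : Pt F) (H : Subgroup (GG F)), P ∈ Fix H ↔ H ≤ MulAction.stabilizer (GG F) P := by
    intro P H; rw [mem_Fix]; rfl
  have h0 : ∑ H, m H * cc (Fix H) = 0 := by
    simp only [cc_ite, mul_sub, Finset.sum_sub_distrib]
    have e1 : ∑ H : Subgroup (GG F), m H * (3 * ∑ P : Pt F, if P ∈ Fix H then 1 else 0) = 0 := by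
      simp only [Finset.mul_sum]
      rw [Finset.sum_comm]
      apply Finset.sum_eq_zero
      intro P _
      have := hstab _ (stab_ne_bot P)
      simp only [mul_left_comm (m _) 3]
      rw [← Finset.mul_sum]
      simp only [hmemP, this, mul_zero]
    have e2 : ∑ H : Subgroup (GG F), m H * (∑ Q : Pt F, ∑ P : Pt F,
        wt P Q * (if P ∈ Fix H ∧ Q ∈ Fix H then 1 else 0)) = 0 := by
      simp only [Finset.mul_sum]
      rw [Finset.sum_comm]
      apply Finset.sum_eq_zero
      intro Q _
      rw [Finset.sum_comm]
      apply Finset.sum_eq_zero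
      intro P _
      by_cases hw : Perp P Q ∧ ¬ Iso Q
      · have := hstab _ (stab_pair_ne_bot hw.1 hw.2)
        simp only [mul_left_comm (m _) (wt P Q)]
        rw [← Finset.mul_sum]
        simp only [hmemP, ← le_inf_iff, this, mul_zero]
      · simp [wt, hw]
    rw [e1, e2, sub_zero]
  rw [← Finset.add_sum_erase _ _ (Finset.mem_univ (⊥ : Subgroup (GG F)))] at h0
  have hFb : Fix (⊥ : Subgroup (GG F)) = Finset.univ := by
    ext P; simp [mem_Fix, Subgroup.mem_bot]
  have hne : Fix (⊥ : Subgroup (GG F)) ≠ ∅ := by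
    obtain ⟨P, -⟩ := exists_iso (F := F)
    rw [hFb]; exact Finset.nonempty_iff_ne_empty.1 ⟨P, Finset.mem_univ P⟩
  have h1 : ∑ H ∈ Finset.univ.erase (⊥ : Subgroup (GG F)), m H * cc (Fix H) =
      ∑ H ∈ Finset.univ.erase (⊥ : Subgroup (GG F)), (3 * m H - 3 * if Fix H = ∅ then m H else 0) := by
    apply Finset.sum_congr rfl
    intro H hH
    rw [cc_Fix' (Finset.ne_of_mem_erase hH)]
    split_ifs <;> ring
  rw [h1, Finset.sum_sub_distrib, ← Finset.mul_sum, ← Finset.mul_sum, hbot, hFb] at h0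
  have h2 := Finset.add_sum_erase Finset.univ m (Finset.mem_univ (⊥ : Subgroup (GG F)))
  have h3 := Finset.add_sum_erase Finset.univ (fun H => if Fix H = ∅ then m H else 0)
    (Finset.mem_univ (⊥ : Subgroup (GG F)))
  simp only [if_neg hne, zero_add] at h3
  rw [htot, hbot] at h2
  rw [Finset.sum_filter]
  linarith

lemma mem_Fix_zpowers {g : GG F} {P : Pt F} : P ∈ Fix (Subgroup.zpowers g) ↔ g • P = P := by
  rw [mem_Fix]
  refine ⟨fun h => h g (Subgroup.mem_zpowers g), fun h k hk => ?_⟩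
  have : Subgroup.zpowers g ≤ MulAction.stabilizer (GG F) P := by
    rw [Subgroup.zpowers_le]; exact h
  exact this hk

lemma exists_noniso : ∃ P : Pt F, ¬ Iso P := by
  obtain ⟨P, -⟩ := exists_iso (F := F)
  obtain ⟨Q, hQ, -⟩ := exists_perp P
  exact ⟨Q, hQ⟩

/-- The same count for elements: the number of elements without a fixed point. -/
lemma card_irr_el : 3 * (({g : GG F | Fix (Subgroup.zpowers g) = ∅} : Finset (GG F)).card : ℤ) =
    Fintype.card (GG F) - 3 + cc (Finset.univ : Finset (Pt F)) := by
  obtain ⟨P₀, hP₀⟩ := exists_iso (F := F)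
  obtain ⟨Q₀, hQ₀, hPQ₀⟩ := exists_perp_of_iso hP₀
  obtain ⟨R₀, hR₀⟩ := exists_noniso (F := F)
  obtain ⟨S₀, hS₀, hRS₀⟩ := exists_perp R₀
  have b1 := burnside_orbit (G := GG F) (X := Pt F) Iso P₀ (fun P => by
    constructor
    · intro hP
      obtain ⟨Q, hQ, h⟩ := exists_perp_of_iso hP
      obtain ⟨g, h1, -⟩ := trans_iso_noniso hP₀ hQ₀ hPQ₀ hP hQ h
      exact ⟨g, h1⟩
    · rintro ⟨g, rfl⟩; exact (iso_smul g _).2 hP₀)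
  have b2 := burnside_orbit (G := GG F) (X := Pt F) (fun P => ¬ Iso P) R₀ (fun P => by
    constructor
    · intro hP
      obtain ⟨Q, hQ, h⟩ := exists_perp P
      obtain ⟨g, h1, -⟩ := trans_noniso hR₀ hS₀ hRS₀ hP hQ h
      exact ⟨g, h1⟩
    · rintro ⟨g, rfl⟩; rwa [iso_smul])
  have b3 := burnside_orbit (G := GG F) (X := Pt F × Pt F)
    (fun x => (Iso x.2 ∧ Perp x.2 x.1) ∧ ¬ Iso x.1) (Q₀, P₀) (fun x => by
    constructor
    · rintro ⟨⟨hP, hp⟩, hQ⟩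
      obtain ⟨g, h1, h2⟩ := trans_iso_noniso hP₀ hQ₀ hPQ₀ hP hQ hp
      exact ⟨g, Prod.ext h2 h1⟩
    · rintro ⟨g, rfl⟩
      exact ⟨⟨(iso_smul g _).2 hP₀, (perp_smul g _ _).2 hPQ₀⟩, fun h => hQ₀ ((iso_smul g _).1 h)⟩)
  have b4 := burnside_orbit (G := GG F) (X := Pt F × Pt F)
    (fun x => (¬ Iso x.2 ∧ Perp x.2 x.1) ∧ ¬ Iso x.1) (S₀, R₀) (fun x => by
    constructor
    · rintro ⟨⟨hP, hp⟩, hQ⟩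
      obtain ⟨g, h1, h2⟩ := trans_noniso hR₀ hS₀ hRS₀ hP hQ hp
      exact ⟨g, Prod.ext h2 h1⟩
    · rintro ⟨g, rfl⟩
      exact ⟨⟨fun h => hR₀ ((iso_smul g _).1 h), (perp_smul g _ _).2 hRS₀⟩,
        fun h => hS₀ ((iso_smul g _).1 h)⟩)
  have key : ∀ g : GG F, cc (Fix (Subgroup.zpowers g)) =
      3 * (fixCount (fun P : Pt F => Iso P) g : ℤ) + 3 * (fixCount (fun P : Pt F => ¬ Iso P) g : ℤ)
      - 3 * (fixCount (fun x : Pt F × Pt F => (Iso x.2 ∧ Perp x.2 x.1) ∧ ¬ Iso x.1) g : ℤ)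
      - (fixCount (fun x : Pt F × Pt F => (¬ Iso x.2 ∧ Perp x.2 x.1) ∧ ¬ Iso x.1) g : ℤ) := by
    intro g
    rw [cc_ite, ← Fintype.sum_prod_type']
    simp only [fixCount, Finset.card_filter, mem_Fix_zpowers]
    push_cast
    simp only [Finset.mul_sum]
    rw [← Finset.sum_add_distrib, sub_sub, ← Finset.sum_add_distrib]
    congr 1
    · apply Finset.sum_congr rfl
      intro P _
      by_cases h1 : Iso P <;> by_cases h2 : g • P = P <;> simp [h1, h2]
    · apply Finset.sum_congr rfl
      rintro ⟨Q, P⟩ _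
      simp only [Prod.smul_mk, Prod.mk.injEq, wt]
      by_cases h1 : Iso P <;> by_cases h2 : g • P = P <;> by_cases h3 : g • Q = Q <;>
        by_cases h4 : Iso Q <;> by_cases h5 : Perp P Q <;> simp [h1, h2, h3, h4, h5]
  have hsum : ∑ g : GG F, cc (Fix (Subgroup.zpowers g)) = 2 * Fintype.card (GG F) := by
    simp only [key, Finset.sum_sub_distrib, Finset.sum_add_distrib, ← Finset.mul_sum]
    rw [← Nat.cast_sum, ← Nat.cast_sum, ← Nat.cast_sum, ← Nat.cast_sum, b1, b2, b3, b4]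
    ring
  rw [← Finset.add_sum_erase _ _ (Finset.mem_univ (1 : GG F))] at hsum
  have hFb : Fix (Subgroup.zpowers (1 : GG F)) = Finset.univ := by
    ext P; rw [mem_Fix_zpowers]; simp
  have hne : Fix (Subgroup.zpowers (1 : GG F)) ≠ ∅ := by
    rw [hFb]; exact Finset.nonempty_iff_ne_empty.1 ⟨P₀, Finset.mem_univ P₀⟩
  have h1 : ∑ g ∈ Finset.univ.erase (1 : GG F), cc (Fix (Subgroup.zpowers g)) =
      ∑ g ∈ Finset.univ.erase (1 : GG F),
        (3 - 3 * if Fix (Subgroup.zpowers g) = ∅ then (1 : ℤ) else 0) := by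
    apply Finset.sum_congr rfl
    intro g hg
    rw [cc_Fix' (by rw [Ne, Subgroup.zpowers_eq_bot]; exact Finset.ne_of_mem_erase hg)]
    split_ifs <;> ring
  rw [h1, Finset.sum_sub_distrib, ← Finset.mul_sum, hFb] at hsum
  have h3 := Finset.add_sum_erase Finset.univ
    (fun g : GG F => if Fix (Subgroup.zpowers g) = ∅ then (1 : ℤ) else 0) (Finset.mem_univ 1)
  simp only [if_neg hne, zero_add] at h3
  have h4 : ∑ g ∈ Finset.univ.erase (1 : GG F), (3 : ℤ) = 3 * (Fintype.card (GG F) - 1) := by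
    rw [Finset.sum_const, Finset.card_erase_of_mem (Finset.mem_univ _), Finset.card_univ,
      nsmul_eq_mul, Nat.cast_pred Fintype.card_pos]; ring
  rw [Finset.card_filter]
  push_cast
  linarith

end Transitivity

/-! ### Groups acting on three points -/

section Triples

variable {G X : Type} [Group G] [Fintype G] [MulAction G X]

/-- `g` permutes the labelled points `P 0, P 1, P 2` by `s`. -/
def Permutes (P : Fin 3 → X) (g : G) (s : Equiv.Perm (Fin 3)) : Prop := ∀ i, g • P i = P (s i)

/-- The setwise stabilizer of the labelled points `P 0, P 1, P 2`. -/
def setStab (P : Fin 3 → X) : Subgroup G where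
  carrier := {g | ∃ s, Permutes P g s}
  one_mem' := ⟨1, fun i => one_smul _ _⟩
  mul_mem' := by
    rintro a b ⟨s, hs⟩ ⟨t, ht⟩
    exact ⟨s * t, fun i => by rw [mul_smul, ht, hs]; rfl⟩
  inv_mem' := by
    rintro a ⟨s, hs⟩
    exact ⟨s⁻¹, fun i => by rw [inv_smul_eq_iff, hs]; simp⟩

/-- The pointwise stabilizer of the labelled points `P 0, P 1, P 2`. -/
def ptStab (P : Fin 3 → X) : Subgroup G := ⨅ i, MulAction.stabilizer G (P i)

variable {P : Fin 3 → X}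

lemma Permutes.mul {a b : G} {s t} (ha : Permutes P a s) (hb : Permutes P b t) :
    Permutes P (a * b) (s * t) := fun i => by rw [mul_smul, hb, ha]; rfl

lemma Permutes.inv {a : G} {s} (ha : Permutes P a s) : Permutes P a⁻¹ s⁻¹ :=
  fun i => by rw [inv_smul_eq_iff, ha]; simp

lemma mem_setStab {g : G} : g ∈ setStab P ↔ ∃ s, Permutes P g s := Iff.rfl

lemma mem_ptStab {g : G} : g ∈ ptStab P ↔ ∀ i, g • P i = P i := by
  simp [ptStab, Subgroup.mem_iInf]

lemma mem_ptStab' {g : G} : g ∈ ptStab P ↔ Permutes P g 1 := mem_ptStab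

lemma ptStab_le : ptStab P ≤ (setStab P : Subgroup G) := fun _ hg => ⟨1, mem_ptStab.1 hg⟩

lemma Permutes.unique (hP : Function.Injective P) {g : G} {s t} (h : Permutes P g s)
    (h' : Permutes P g t) : s = t :=
  Equiv.ext fun i => hP ((h i).symm.trans (h' i))

/-- A permutation of three letters without fixed letters. -/
abbrev Der (s : Equiv.Perm (Fin 3)) : Prop := ∀ i, s i ≠ i

lemma der_conj : ∀ s t : Equiv.Perm (Fin 3), Der s → t * s * t⁻¹ = s ∨ t * s * t⁻¹ = s⁻¹ := by
  decide
lemma der_eq : ∀ s t : Equiv.Perm (Fin 3), Der s → Der t → t = s ∨ t = s⁻¹ := by decide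
lemma der_inv_ne : ∀ s : Equiv.Perm (Fin 3), Der s → s ≠ s⁻¹ := by decide
lemma der_cube : ∀ s : Equiv.Perm (Fin 3), Der s → s * s * s = 1 := by decide
lemma der_mul : ∀ (s t : Equiv.Perm (Fin 3)) (i j : Fin 3), s i ≠ i → s j = j → t j ≠ j →
    Der s ∨ Der t ∨ Der (s * t) := by decide
lemma perm_fix2 : ∀ (s : Equiv.Perm (Fin 3)) (i j k : Fin 3), i ≠ j → s i = i → s j = j → s k = k := by
  decide
lemma card_der : (Finset.univ.filter fun s : Equiv.Perm (Fin 3) => Der s).card = 2 := by decide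

/-- An element inducing a permutation without fixed letters. -/
def DerEl (P : Fin 3 → X) (g : G) : Prop := ∃ s, Permutes P g s ∧ Der s

lemma DerEl.inv {g : G} (h : DerEl P g) : DerEl P g⁻¹ := by
  obtain ⟨s, hs, hd⟩ := h
  exact ⟨s⁻¹, hs.inv, fun i h => hd i (by rw [Equiv.Perm.inv_eq_iff_eq] at h; exact h.symm)⟩

/-- A subgroup without fixed letters contains an element without fixed letters. -/
lemma exists_derEl {H : Subgroup G} (hH : H ≤ setStab P)
    (hf : ∀ i, ¬ H ≤ MulAction.stabilizer G (P i)) : ∃ c ∈ H, DerEl P c := by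
  by_contra! hcon
  have hmove : ∀ i, ∃ h ∈ H, ∃ s, Permutes P h s ∧ s i ≠ i := by
    intro i
    obtain ⟨h, hh, hi⟩ := SetLike.not_le_iff_exists.1 (hf i)
    obtain ⟨s, hs⟩ := hH hh
    refine ⟨h, hh, s, hs, fun he => hi ?_⟩
    rw [MulAction.mem_stabilizer_iff, hs, he]
  obtain ⟨h, hh, s, hs, hsi⟩ := hmove 0
  have : ¬ Der s := fun hd => hcon h hh ⟨s, hs, hd⟩
  simp only [Der, not_forall, not_not] at this
  obtain ⟨j, hj⟩ := this
  obtain ⟨h', hh', t, ht, htj⟩ := hmove j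
  rcases der_mul s t 0 j hsi hj htj with hd | hd | hd
  · exact hcon h hh ⟨s, hs, hd⟩
  · exact hcon h' hh' ⟨t, ht, hd⟩
  · exact hcon _ (mul_mem hh hh') ⟨_, hs.mul ht, hd⟩

variable {m : Subgroup G → ℤ}

lemma sum_le_ite (hm : ∀ K : Subgroup G, ∑ H with H ≤ K, m H = if K = ⊥ then 1 else 0)
    (K : Subgroup G) : ∑ H, m H * (if H ≤ K then 1 else 0) = if K = ⊥ then 1 else 0 := by
  rw [← hm K, Finset.sum_filter]; simp only [mul_ite, mul_one, mul_zero]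

lemma sum_trans (hP : Function.Injective P)
    (hm : ∀ K : Subgroup G, ∑ H with H ≤ K, m H = if K = ⊥ then 1 else 0)
    {M : Subgroup G} (hM : M ≤ setStab P) :
    ∑ H with H ≤ M ∧ ∀ i, ¬ H ≤ MulAction.stabilizer G (P i), m H =
      (if M = ⊥ then 1 else 0) - ∑ i, (if M ⊓ MulAction.stabilizer G (P i) = ⊥ then 1 else 0)
        + 2 * (if M ⊓ ptStab P = ⊥ then 1 else 0) := by
  simp only [← sum_le_ite hm]
  rw [Finset.sum_filter, Finset.sum_comm, Finset.mul_sum, ← Finset.sum_sub_distrib,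
    ← Finset.sum_add_distrib]
  apply Finset.sum_congr rfl
  intro H _
  rw [← Finset.mul_sum, mul_left_comm, ← mul_sub, ← mul_add]
  by_cases hHM : H ≤ M
  · have hT : H ≤ ptStab P ↔ ∀ i, H ≤ MulAction.stabilizer G (P i) := le_iInf_iff
    have h2 : ∀ i j k, i ≠ j → H ≤ MulAction.stabilizer G (P i) → H ≤ MulAction.stabilizer G (P j) →
        H ≤ MulAction.stabilizer G (P k) := by
      intro i j k hij hi hj h hh
      obtain ⟨s, hs⟩ := hM (hHM hh)
      have e1 := hi hh
      have e2 := hj hh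
      rw [MulAction.mem_stabilizer_iff, hs] at *
      rw [perm_fix2 s i j k hij (hP e1) (hP e2)]
    have a1 := h2 0 1 2 (by decide)
    have a2 := h2 0 2 1 (by decide)
    have a3 := h2 1 2 0 (by decide)
    simp only [hHM, le_inf_iff, true_and, hT, Fin.forall_fin_succ, Fin.sum_univ_succ,
      Fin.succ_zero_eq_one, Fin.succ_one_eq_two, IsEmpty.forall_iff, and_true,
      Finset.univ_eq_empty, Finset.sum_empty]
    by_cases h0 : H ≤ MulAction.stabilizer G (P 0) <;>
      by_cases h1 : H ≤ MulAction.stabilizer G (P 1) <;>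
      by_cases h2 : H ≤ MulAction.stabilizer G (P 2) <;>
      simp_all
  · simp [hHM]

/-- The elements of `setStab P` normalizing the pair `{g, g⁻¹}`. -/
def invNorm (P : Fin 3 → X) (g : G) : Subgroup G where
  carrier := {n | n ∈ setStab P ∧ (n * g * n⁻¹ = g ∨ n * g * n⁻¹ = g⁻¹)}
  one_mem' := ⟨one_mem _, by simp⟩
  mul_mem' := by
    rintro a b ⟨ha, ha'⟩ ⟨hb, hb'⟩
    refine ⟨mul_mem ha hb, ?_⟩
    have e : a * b * g * (a * b)⁻¹ = a * (b * g * b⁻¹) * a⁻¹ := by group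
    have e' : a * g⁻¹ * a⁻¹ = (a * g * a⁻¹)⁻¹ := by group
    rw [e]
    rcases hb' with h | h <;> rw [h]
    · exact ha'
    · rw [e']; rcases ha' with h' | h' <;> rw [h'] <;> simp
  inv_mem' := by
    rintro a ⟨ha, ha'⟩
    refine ⟨inv_mem ha, ?_⟩
    rcases ha' with h | h
    · left; nth_rw 1 [← h]; group
    · right
      have : g = (a * g * a⁻¹)⁻¹ := by rw [h, inv_inv]
      nth_rw 1 [this]; group

lemma sum_through_der (hP : Function.Injective P)
    (hm : ∀ K : Subgroup G, ∑ H with H ≤ K, m H = if K = ⊥ then 1 else 0)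
    (hder : ∀ g, DerEl P g → ∀ t ∈ ptStab P, t * g = g * t → t = (1 : G))
    (hrev : ∀ g, DerEl P g → ∀ i, ∃ t : G, t ≠ 1 ∧ t • P i = P i ∧ t ∈ setStab P ∧
      t * g * t⁻¹ = g⁻¹) {g : G} (hg : DerEl P g) :
    ∑ H with g ∈ H ∧ H ≤ setStab P ∧ H ⊓ ptStab P = ⊥, m H = 2 := by
  obtain ⟨s, hs, hd⟩ := hg
  have hg : DerEl P g := ⟨s, hs, hd⟩
  have hST : invNorm P g ⊓ ptStab P = ⊥ := by
    rw [eq_bot_iff]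
    rintro t ⟨⟨-, ht⟩, htT⟩
    apply hder g hg t htT
    rcases ht with h | h
    · exact mul_inv_eq_iff_eq_mul.1 h
    · exfalso
      have h1 := ((mem_ptStab'.1 htT).mul hs).mul (mem_ptStab'.1 htT).inv
      rw [h, one_mul, inv_one, mul_one] at h1
      exact der_inv_ne s hd (h1.unique hP hs.inv)
  have hgS : g ∈ invNorm P g := ⟨⟨s, hs⟩, by simp⟩
  have hiff : ∀ H : Subgroup G, (g ∈ H ∧ H ≤ setStab P ∧ H ⊓ ptStab P = ⊥) ↔
      (H ≤ invNorm P g ∧ ∀ i, ¬ H ≤ MulAction.stabilizer G (P i)) := by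
    intro H
    constructor
    · rintro ⟨hgH, hHN, hHT⟩
      constructor
      · intro n hn
        refine ⟨hHN hn, ?_⟩
        obtain ⟨t, ht⟩ := hHN hn
        have h1 := (ht.mul hs).mul ht.inv
        have hc : n * g * n⁻¹ ∈ H := mul_mem (mul_mem hn hgH) (inv_mem hn)
        rcases der_conj s t hd with h | h
        · left
          have h2 := h1.mul hs.inv
          rw [h, mul_inv_cancel, ← mem_ptStab'] at h2
          have : n * g * n⁻¹ * g⁻¹ ∈ H ⊓ ptStab P := ⟨mul_mem hc (H.inv_mem hgH), h2⟩
          rw [hHT, Subgroup.mem_bot] at this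
          exact mul_inv_eq_one.1 this
        · right
          have h2 := h1.mul hs
          rw [h, inv_mul_cancel, ← mem_ptStab'] at h2
          have : n * g * n⁻¹ * g ∈ H ⊓ ptStab P := ⟨mul_mem hc hgH, h2⟩
          rw [hHT, Subgroup.mem_bot] at this
          exact mul_eq_one_iff_eq_inv.1 this
      · intro i hi
        have := hi hgH
        rw [MulAction.mem_stabilizer_iff, hs] at this
        exact hd i (hP this)
    · rintro ⟨hHS, hf⟩
      have hHN : H ≤ setStab P := fun h hh => (hHS hh).1
      refine ⟨?_, hHN, by rw [eq_bot_iff, ← hST]; exact inf_le_inf_right _ hHS⟩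
      obtain ⟨c, hc, t, ht, htd⟩ := exists_derEl hHN hf
      rcases der_eq s t hd htd with h | h
      · have h2 := ht.mul hs.inv
        rw [h, mul_inv_cancel, ← mem_ptStab'] at h2
        have : c * g⁻¹ ∈ invNorm P g ⊓ ptStab P := ⟨mul_mem (hHS hc) (Subgroup.inv_mem _ hgS), h2⟩
        rw [hST, Subgroup.mem_bot] at this
        rw [← mul_inv_eq_one.1 this]; exact hc
      · have h2 := ht.mul hs
        rw [h, inv_mul_cancel, ← mem_ptStab'] at h2
        have : c * g ∈ invNorm P g ⊓ ptStab P := ⟨mul_mem (hHS hc) hgS, h2⟩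
        rw [hST, Subgroup.mem_bot] at this
        rw [← inv_inv g, ← mul_eq_one_iff_eq_inv.1 this]; exact inv_mem hc
  have hSN : invNorm P g ≤ setStab P := fun h hh => hh.1
  rw [Finset.filter_congr fun H _ => hiff H, sum_trans hP hm hSN, if_pos hST]
  have h1 : invNorm P g ≠ ⊥ := by
    intro h
    rw [h, Subgroup.mem_bot] at hgS
    subst hgS
    have := (hs 0).symm.trans (one_smul _ _)
    exact hd 0 (hP this)
  rw [if_neg h1, Finset.sum_eq_zero]
  · norm_num
  intro i _
  rw [if_neg]
  intro h
  obtain ⟨t, ht1, hti, htN, ht⟩ := hrev g hg i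
  have : t ∈ invNorm P g ⊓ MulAction.stabilizer G (P i) := ⟨⟨htN, Or.inr ht⟩, hti⟩
  rw [h, Subgroup.mem_bot] at this
  exact ht1 this

lemma card_permutes (hP : Function.Injective P) (hsurj : ∀ s, ∃ n : G, Permutes P n s)
    (S : Finset (Equiv.Perm (Fin 3))) :
    (Finset.univ.filter fun g : G => ∃ s ∈ S, Permutes P g s).card = S.card * Nat.card (ptStab P : Subgroup G) := by
  have h1 : (Finset.univ.filter fun g : G => ∃ s ∈ S, Permutes P g s) =
      S.biUnion fun s => Finset.univ.filter fun g : G => Permutes P g s := by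
    ext g; simp
  rw [h1, Finset.card_biUnion, Finset.sum_const_nat]
  · intro s _
    obtain ⟨n, hn⟩ := hsurj s
    rw [Nat.card_eq_fintype_card, Fintype.card_subtype]
    symm
    apply Finset.card_bij (fun t _ => n * t)
    · intro t ht
      rw [Finset.mem_filter, mem_ptStab'] at ht
      simpa using hn.mul ht.2
    · intro a _ b _ h; exact mul_left_cancel h
    · intro g hg
      refine ⟨n⁻¹ * g, ?_, by group⟩
      rw [Finset.mem_filter] at hg
      rw [Finset.mem_filter, mem_ptStab']
      have := hn.inv.mul hg.2
      rw [inv_mul_cancel] at this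
      exact ⟨Finset.mem_univ _, this⟩
  · intro s _ t _ hst
    rw [Function.onFun, Finset.disjoint_left]
    intro g hg hg'
    simp only [Finset.mem_filter, Finset.mem_univ, true_and] at hg hg'
    exact hst (hg.unique hP hg')

lemma card_setStab (hP : Function.Injective P) (hsurj : ∀ s, ∃ n : G, Permutes P n s) :
    Nat.card (setStab P : Subgroup G) = 6 * Nat.card (ptStab P : Subgroup G) := by
  have := card_permutes (G := G) hP hsurj Finset.univ
  rw [Finset.card_univ, Fintype.card_perm, Fintype.card_fin] at this
  rw [Nat.card_eq_fintype_card, Fintype.card_subtype, ← show (3 : ℕ).factorial = 6 by rfl, ← this]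
  congr 1; ext g; simp [mem_setStab]

/-- The contribution of one orthogonal frame: the Möbius sum over the subgroups of its setwise
stabilizer that fix no letter and meet the pointwise stabilizer nontrivially. -/
lemma sum_triple (hP : Function.Injective P)
    (hm : ∀ K : Subgroup G, ∑ H with H ≤ K, m H = if K = ⊥ then 1 else 0)
    (hT : (ptStab P : Subgroup G) ≠ ⊥) (hsurj : ∀ s, ∃ n : G, Permutes P n s)
    (hder : ∀ g, DerEl P g → ∀ t ∈ ptStab P, t * g = g * t → t = (1 : G))
    (hrev : ∀ g, DerEl P g → ∀ i, ∃ t : G, t ≠ 1 ∧ t • P i = P i ∧ t ∈ setStab P ∧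
      t * g * t⁻¹ = g⁻¹) :
    3 * ∑ H with H ≤ setStab P ∧ (∀ i, ¬ H ≤ MulAction.stabilizer G (P i)) ∧ H ⊓ ptStab P ≠ ⊥, m H =
      - Nat.card (setStab P : Subgroup G) := by
  have hN := card_setStab (G := G) hP hsurj
  have hD : (Finset.univ.filter fun g : G => DerEl P g).card = 2 * Nat.card (ptStab P : Subgroup G) := by
    have := card_permutes (G := G) hP hsurj (Finset.univ.filter fun s => Der s)
    rw [card_der] at this
    rw [← this]
    congr 1; ext g
    rw [Finset.mem_filter, Finset.mem_filter]
    simp [DerEl, and_comm]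
  have hA : ∑ H with H ≤ setStab P ∧ (∀ i, ¬ H ≤ MulAction.stabilizer G (P i)), m H = 0 := by
    have h1 : (setStab P : Subgroup G) ≠ ⊥ := fun h => hT (eq_bot_iff.2 (ptStab_le.trans h.le))
    have h2 : ∀ i, setStab P ⊓ MulAction.stabilizer G (P i) ≠ ⊥ := fun i h =>
      hT (eq_bot_iff.2 ((le_inf ptStab_le (iInf_le _ i)).trans h.le))
    rw [sum_trans hP hm le_rfl, if_neg h1, inf_eq_right.2 ptStab_le, if_neg hT, Finset.sum_eq_zero]
    · norm_num
    · intro i _; rw [if_neg (h2 i)]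
  have hB : 2 * ∑ H with (H ≤ setStab P ∧ (∀ i, ¬ H ≤ MulAction.stabilizer G (P i))) ∧
      H ⊓ ptStab P = ⊥, m H = 2 * (Finset.univ.filter fun g : G => DerEl P g).card := by
    have h1 : ∑ g : G with DerEl P g, ∑ H with g ∈ H ∧ H ≤ setStab P ∧ H ⊓ ptStab P = ⊥, m H =
        2 * (Finset.univ.filter fun g : G => DerEl P g).card := by
      rw [Finset.sum_congr rfl fun g hg =>
        sum_through_der hP hm hder hrev (Finset.mem_filter.1 hg).2]
      rw [Finset.sum_const, nsmul_eq_mul, mul_comm]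
    rw [← h1]
    simp only [Finset.sum_filter]
    rw [Finset.mul_sum]
    simp only [← Finset.sum_filter]
    simp only [Finset.sum_filter (s := (Finset.univ : Finset (Subgroup G)))]
    rw [Finset.sum_comm]
    apply Finset.sum_congr rfl
    intro H _
    by_cases hc : (H ≤ setStab P ∧ ∀ i, ¬ H ≤ MulAction.stabilizer G (P i)) ∧ H ⊓ ptStab P = ⊥
    · rw [if_pos hc]
      obtain ⟨⟨hHN, hf⟩, hHT⟩ := hc
      simp only [hHN, hHT, and_true]
      rw [← Finset.sum_filter, Finset.filter_filter, Finset.sum_const, nsmul_eq_mul]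
      congr 1
      obtain ⟨c, hc, s, hs, hd⟩ := exists_derEl hHN hf
      have h2 : (Finset.univ.filter fun g : G => DerEl P g ∧ g ∈ H) = {c, c⁻¹} := by
        ext g
        simp only [Finset.mem_filter, Finset.mem_univ, true_and, Finset.mem_insert,
          Finset.mem_singleton]
        constructor
        · rintro ⟨⟨t, ht, htd⟩, hgH⟩
          rcases der_eq s t hd htd with h | h
          · left
            have h2 := ht.mul hs.inv
            rw [h, mul_inv_cancel, ← mem_ptStab'] at h2
            have : g * c⁻¹ ∈ H ⊓ ptStab P := ⟨mul_mem hgH (H.inv_mem hc), h2⟩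
            rw [hHT, Subgroup.mem_bot] at this
            exact mul_inv_eq_one.1 this
          · right
            have h2 := ht.mul hs
            rw [h, inv_mul_cancel, ← mem_ptStab'] at h2
            have : g * c ∈ H ⊓ ptStab P := ⟨mul_mem hgH hc, h2⟩
            rw [hHT, Subgroup.mem_bot] at this
            exact mul_eq_one_iff_eq_inv.1 this
        · rintro (rfl | rfl)
          · exact ⟨⟨s, hs, hd⟩, hc⟩
          · exact ⟨DerEl.inv ⟨s, hs, hd⟩, inv_mem hc⟩
      rw [h2, Finset.card_pair]
      · rfl
      · intro h
        apply der_inv_ne s hd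
        have h3 := hs.inv
        rw [← h] at h3
        exact hs.unique hP h3
    · rw [if_neg hc, mul_zero, Finset.sum_eq_zero]
      intro g hg
      rw [if_neg]
      rintro ⟨hgH, hHN, hHT⟩
      apply hc
      refine ⟨⟨hHN, fun i hi => ?_⟩, hHT⟩
      obtain ⟨s, hs, hd⟩ := (Finset.mem_filter.1 hg).2
      have := hi hgH
      rw [MulAction.mem_stabilizer_iff, hs] at this
      exact hd i (hP this)
  have hsplit := Finset.sum_filter_add_sum_filter_not (Finset.univ.filter fun H : Subgroup G =>
    H ≤ setStab P ∧ (∀ i, ¬ H ≤ MulAction.stabilizer G (P i))) (fun H => H ⊓ ptStab P = ⊥) m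
  rw [hA, Finset.filter_filter, Finset.filter_filter] at hsplit
  simp only [and_assoc] at hsplit hB
  rw [hD] at hB
  rw [hN]
  push_cast at hB ⊢
  linarith

end Triples

/-! ### Frames -/

section Frames

variable {F : Type} [Field F] [StarRing F] [HermField F]

/-- A labelled orthogonal frame: three nonisotropic, pairwise orthogonal points. -/
def IsFr (P : Fin 3 → Pt F) : Prop := (∀ i, ¬ Iso (P i)) ∧ ∀ i j, i ≠ j → Perp (P i) (P j)

/-- An orthonormal family of three vectors. -/
def Onb (e : Fin 3 → Vec F) : Prop := ∀ i j, B (e i) (e j) = if i = j then 1 else 0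

lemma IsFr.inj {P : Fin 3 → Pt F} (h : IsFr P) : Function.Injective P := by
  intro i j hij
  by_contra hne
  have := h.2 i j hne
  rw [hij, perp_self] at this
  exact h.1 j this

lemma Onb.D_ne {e : Fin 3 → Vec F} (h : Onb e) : D (e 0) (e 1) (e 2) ≠ 0 := by
  have := gram (e 0) (e 1) (e 2)
  simp only [h _ _] at this
  intro h0
  rw [h0] at this
  simp at this

lemma Onb.ne0 {e : Fin 3 → Vec F} (h : Onb e) (i : Fin 3) : e i ≠ 0 :=
  ne0_of_unit (by rw [h, if_pos rfl])

lemma IsFr.onb {P : Fin 3 → Pt F} (h : IsFr P) :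
    ∃ (e : Fin 3 → Vec F) (he : Onb e), ∀ i, P i = pt (e i) (he.ne0 i) := by
  choose e h0 h1 h2 using fun i => exists_unit_rep (h.1 i)
  have he : Onb e := by
    intro i j
    split_ifs with hij
    · rw [← hij, h1]
    · have := h.2 i j hij
      rw [h2 i, h2 j, perp_pt] at this
      exact this
  exact ⟨e, he, h2⟩

lemma D_perm (e : Fin 3 → Vec F) (s : Equiv.Perm (Fin 3)) :
    D (e (s 0)) (e (s 1)) (e (s 2)) = D (e 0) (e 1) (e 2) := by
  have key : ∀ s : Equiv.Perm (Fin 3), (s 0, s 1, s 2) = (0, 1, 2) ∨ (s 0, s 1, s 2) = (0, 2, 1) ∨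
    (s 0, s 1, s 2) = (1, 0, 2) ∨ (s 0, s 1, s 2) = (1, 2, 0) ∨ (s 0, s 1, s 2) = (2, 0, 1) ∨
    (s 0, s 1, s 2) = (2, 1, 0) := by decide
  rcases key s with h | h | h | h | h | h <;> simp only [Prod.mk.injEq] at h <;>
    obtain ⟨h0, h1, h2⟩ := h <;> rw [h0, h1, h2]
  · rw [D_swap23]
  · rw [D_swap12]
  · rw [D_rot]
  · rw [D_rot, D_rot]
  · rw [D_swap12, D_rot]

/-- Monomial isometries of determinant one. -/
lemma exists_mono {e : Fin 3 → Vec F} (he : Onb e) (s : Equiv.Perm (Fin 3)) {l : Fin 3 → F}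
    (hl : ∀ i, l i * star (l i) = 1) (hp : l 0 * l 1 * l 2 = 1) :
    ∃ g : GG F, ∀ i, g • e i = l i • e (s i) := by
  have hB : ∀ i j, B (l i • e (s i)) (l j • e (s j)) = B (e i) (e j) := by
    intro i j
    rw [B_smul_left, B_smul_right, he, he]
    by_cases h : i = j
    · subst h; simp [hl]
    · simp [h]
  obtain ⟨g, h0, h1, h2⟩ := exists_g3 (a := e 0) (b := e 1) (c := e 2) (a' := l 0 • e (s 0))
    (b' := l 1 • e (s 1)) (c' := l 2 • e (s 2)) he.D_ne
    (by rw [D_smul1, D_smul2, D_smul3, D_perm, ← mul_assoc, ← mul_assoc, hp, one_mul])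
    (hB _ _) (hB _ _) (hB _ _) (hB _ _) (hB _ _) (hB _ _)
  refine ⟨g, fun i => ?_⟩
  fin_cases i
  · exact h0
  · exact h1
  · exact h2

lemma eigen_unit {g : GG F} {x : Vec F} {a : F} (hx : B x x ≠ 0) (h : g • x = a • x) :
    a * star a = 1 := unit_of_eigen h h hx

lemma der_orbit : ∀ s : Equiv.Perm (Fin 3), Der s → ∀ i j : Fin 3, j = i ∨ j = s i ∨ j = s⁻¹ i := by
  decide

section One

variable {P : Fin 3 → Pt F}

lemma ptStab_eigen {e : Fin 3 → Vec F} (he : Onb e) (hPe : ∀ i, P i = pt (e i) (he.ne0 i))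
    {t : GG F} (ht : t ∈ ptStab P) : ∃ a : Fin 3 → F, ∀ i, t • e i = a i • e i := by
  have : ∀ i, ∃ a : F, t • e i = a • e i := fun i => by
    have := mem_ptStab.1 ht i
    rw [hPe i, g_pt_eq] at this
    exact this
  choose a ha using this
  exact ⟨a, ha⟩

lemma frame_hT (hP : IsFr P) : (ptStab P : Subgroup (GG F)) ≠ ⊥ := by
  obtain ⟨e, he, hPe⟩ := hP.onb
  obtain ⟨l, hl, hl1⟩ := exists_unit_ne (F := F)
  have hl' : star l * star (star l) = 1 := by rw [star_star, mul_comm]; exact hl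
  obtain ⟨t, ht⟩ := exists_mono he 1 (l := ![l, star l, 1])
    (fun i => by fin_cases i <;> simp [hl]; rw [mul_comm]; exact hl) (by simp [hl])
  intro h
  have hm : t ∈ ptStab P := by
    rw [mem_ptStab]
    intro i
    rw [hPe i, g_pt_eq]
    exact ⟨_, ht i⟩
  rw [h, Subgroup.mem_bot] at hm
  have h0 := ht 0
  rw [hm, one_smul] at h0
  have := congrArg (fun z => B z (e 0)) h0
  simp [he 0 0] at this
  exact hl1 this.symm

lemma frame_surj (hP : IsFr P) (s : Equiv.Perm (Fin 3)) : ∃ g : GG F, Permutes P g s := by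
  obtain ⟨e, he, hPe⟩ := hP.onb
  obtain ⟨g, hg⟩ := exists_mono he s (l := fun _ => 1) (by simp) (by simp)
  refine ⟨g, fun i => ?_⟩
  rw [hPe i, hPe (s i), g_pt]
  congr 1
  simpa using hg i

lemma frame_der (hP : IsFr P) {g : GG F} (hg : DerEl P g) {t : GG F} (ht : t ∈ ptStab P)
    (htg : t * g = g * t) : t = 1 := by
  obtain ⟨e, he, hPe⟩ := hP.onb
  obtain ⟨a, ha⟩ := ptStab_eigen he hPe ht
  obtain ⟨s, hs, hd⟩ := hg
  have key : ∀ i, a (s i) = a i := by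
    intro i
    have h1 := hs i
    rw [hPe i, hPe (s i), g_pt, pt_eq] at h1
    obtain ⟨b, hb⟩ := h1
    have hb0 : b ≠ 0 := by
      rintro rfl
      rw [zero_smul] at hb
      exact smul_ne0 g (he.ne0 i) hb
    have h2 : t • g • e i = g • t • e i := by rw [← mul_smul, htg, mul_smul]
    rw [ha, g_smul, hb, g_smul, ha, smul_smul, smul_smul] at h2
    have := smul_left_injective F (he.ne0 (s i)) h2
    rw [mul_comm] at this
    exact mul_right_cancel₀ hb0 this
  have hall : ∀ i, a i = a 0 := by
    intro i
    rcases der_orbit s hd 0 i with h | h | h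
    · rw [h]
    · rw [h, key]
    · rw [← key i, h]; simp
  exact scalar_one he.D_ne (ha 0) (by rw [ha, hall 1]) (by rw [ha, hall 2])

lemma frame_cube (hP : IsFr P) {g : GG F} (hg : DerEl P g) : g * g * g = 1 := by
  obtain ⟨s, hs, hd⟩ := hg
  apply frame_der hP ⟨s, hs, hd⟩
  · rw [mem_ptStab', ← der_cube s hd]
    exact (hs.mul hs).mul hs
  · group

lemma der_swap : ∀ s : Equiv.Perm (Fin 3), Der s → ∀ i : Fin 3, Equiv.swap (s i) (s⁻¹ i) i = i := by
  decide

lemma frame_rev (hP : IsFr P) {g : GG F} (hg : DerEl P g) (i : Fin 3) :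
    ∃ t : GG F, t ≠ 1 ∧ t • P i = P i ∧ t ∈ setStab P ∧ t * g * t⁻¹ = g⁻¹ := by
  have h3 := frame_cube hP hg
  obtain ⟨e, he, hPe⟩ := hP.onb
  obtain ⟨s, hs, hd⟩ := hg
  have hij : ∀ i j, i ≠ j → B (e i) (e j) = 0 := fun i j h => by rw [he, if_neg h]
  have hg3 : g • g • g • e i = e i := by rw [← mul_smul, ← mul_smul, h3, one_smul]
  have hge : B (e i) (g • e i) = 0 := by
    have h1 := hs i
    rw [hPe i, hPe (s i), g_pt, pt_eq] at h1
    obtain ⟨b, hb⟩ := h1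
    rw [hb, B_smul_right, hij _ _ (hd i).symm, mul_zero]
  have hge2 : B (e i) (g • g • e i) = 0 := by
    rw [← B_g g, hg3]; exact B_swap0 hge
  have hii : B (e i) (e i) = 1 := by rw [he, if_pos rfl]
  let f : Fin 3 → Vec F := ![e i, g • e i, g • g • e i]
  have hge' := B_swap0 hge
  have hge2' := B_swap0 hge2
  have hf : Onb f := by
    intro j k
    fin_cases j <;> fin_cases k <;> simp [f, hii, hge, hge2, hge', hge2']
  obtain ⟨t, ht⟩ := exists_mono hf (Equiv.swap 1 2) (l := fun _ => 1) (by simp) (by simp)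
  have t0 : t • e i = e i := by
    have h := ht 0
    rw [show Equiv.swap (1 : Fin 3) 2 0 = 0 by decide, one_smul] at h
    exact h
  have t1 : t • g • e i = g • g • e i := by simpa [f] using ht 1
  have t2 : t • g • g • e i = g • e i := by simpa [f] using ht 2
  have hrel : g * t * g = t := by
    apply g_ext3 hf.D_ne <;> simp only [f, Matrix.cons_val_zero, Matrix.cons_val_one,
      Matrix.cons_val_two, Matrix.tail_cons, Matrix.head_cons, mul_smul]
    · rw [t1, hg3, t0]
    · rw [t2, t1]
    · rw [hg3, t0, t2]
  have hti : t • P i = P i := by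
    rw [hPe i, g_pt]; congr 1
  have e1 : t * g = g⁻¹ * t := by rw [eq_inv_mul_iff_mul_eq, ← mul_assoc]; exact hrel
  have e2 : t * g⁻¹ = g * t := by rw [mul_inv_eq_iff_eq_mul]; exact hrel.symm
  refine ⟨t, ?_, hti, ⟨Equiv.swap (s i) (s⁻¹ i), fun j => ?_⟩, by rw [e1]; group⟩
  · rintro rfl
    rw [one_smul] at t1
    have := hf 1 2
    simp only [f, Matrix.cons_val_one, Matrix.cons_val] at this
    rw [← t1] at this
    simp [hii] at this
  · rcases der_orbit s hd i j with rfl | rfl | rfl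
    · rw [der_swap s hd, hti]
    · rw [Equiv.swap_apply_left, ← hs i, ← mul_smul, e1, mul_smul, hti, hs.inv]
    · rw [Equiv.swap_apply_right, ← hs.inv i, ← mul_smul, e2, mul_smul, hti, hs]

lemma exists_B_onb {e : Fin 3 → Vec F} (he : Onb e) {x : Vec F} (hx : x ≠ 0) :
    ∃ i, B x (e i) ≠ 0 := by
  by_contra! h
  apply hx
  apply eq_zero_of_B
  intro y
  have h1 := cramer (e 0) (e 1) (e 2) y
  have h2 := congrArg (fun z => B x z) h1
  simp only [B_add_right, B_smul_right, h, mul_zero, add_zero] at h2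
  exact (mul_eq_zero.1 h2).resolve_left (star_ne_zero.2 he.D_ne)

/-- A subgroup permuting a frame and containing a nontrivial diagonal element fixes no point as
soon as it fixes no point of the frame. -/
lemma fix_empty_iff (hP : IsFr P) {H : Subgroup (GG F)} (hH : H ≤ setStab P)
    (hT : H ⊓ ptStab P ≠ ⊥) :
    Fix H = ∅ ↔ ∀ i, ¬ H ≤ MulAction.stabilizer (GG F) (P i) := by
  constructor
  · intro h i hi
    have : P i ∈ Fix H := mem_Fix.2 fun k hk => hi hk
    rw [h] at this
    simp at this
  · intro h
    rw [Finset.eq_empty_iff_forall_notMem]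
    intro X hX
    obtain ⟨g, hgH, s, hs, hd⟩ := exists_derEl hH h
    obtain ⟨⟨t, htH, htP⟩, ht1⟩ := Subgroup.ne_bot_iff_exists_ne_one.1 hT
    obtain ⟨e, he, hPe⟩ := hP.onb
    obtain ⟨a, ha⟩ := ptStab_eigen he hPe htP
    obtain ⟨x, hx0, rfl⟩ := exists_rep X
    rw [mem_Fix] at hX
    obtain ⟨b, hb⟩ := (g_pt_eq t hx0).1 (hX t htH)
    obtain ⟨i, hi⟩ := exists_B_onb he hx0
    have hp : ∀ j, Perp (pt x hx0) (P j) ↔ B x (e j) = 0 := fun j => by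
      rw [hPe j, perp_pt]
    have hi0 : ¬ Perp (pt x hx0) (P i) := by rwa [hp]
    have hs1 : ¬ Perp (pt x hx0) (P (s i)) := by
      rw [← hX g hgH, ← hs i, perp_smul]; exact hi0
    have hs2 : ¬ Perp (pt x hx0) (P (s⁻¹ i)) := by
      rw [← hX g⁻¹ (inv_mem hgH), ← hs.inv i, perp_smul]; exact hi0
    have hall : ∀ j, a j = b := by
      intro j
      have hj : B x (e j) ≠ 0 := by
        rw [ne_eq, ← hp]
        rcases der_orbit s hd i j with rfl | rfl | rfl
        · exact hi0
        · exact hs1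
        · exact hs2
      exact (eigen_eq (ha j) hb (fun h => hj (B_swap0 h))
        (eigen_unit (by rw [he, if_pos rfl]; exact one_ne_zero) (ha j))).symm
    apply ht1
    apply Subtype.ext
    exact scalar_one he.D_ne (t := b) (by rw [ha, hall]) (by rw [ha, hall]) (by rw [ha, hall])

lemma frame_pow_six {g : GG F} (hg : g ∈ setStab P) : g ^ 6 ∈ ptStab P := by
  obtain ⟨s, hs⟩ := hg
  have : ∀ k : ℕ, Permutes P (g ^ k) (s ^ k) := by
    intro k
    induction k with
    | zero => intro i; simp
    | succ k ih => rw [pow_succ, pow_succ]; exact ih.mul hs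
  have h6 : ∀ s : Equiv.Perm (Fin 3), s ^ 6 = 1 := fun s => by
    have h : s ^ Fintype.card (Equiv.Perm (Fin 3)) = 1 := pow_card_eq_one
    rwa [Fintype.card_perm, Fintype.card_fin] at h
  rw [mem_ptStab', ← h6 s]
  exact this 6

lemma ptStab_six (hP : IsFr P) {t : GG F} (ht : t ∈ ptStab P) (h6 : t ^ 6 = 1) : t = 1 := by
  obtain ⟨e, he, hPe⟩ := hP.onb
  obtain ⟨a, ha⟩ := ptStab_eigen he hPe ht
  have hpow : ∀ (k : ℕ) i, t ^ k • e i = a i ^ k • e i := by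
    intro k i
    induction k with
    | zero => simp
    | succ k ih => rw [pow_succ', mul_smul, ih, g_smul, ha, smul_smul, ← pow_succ]
  have h1 : ∀ i, a i = 1 := by
    intro i
    apply six_one
    · have := hpow 6 i
      rw [h6, one_smul] at this
      nth_rw 1 [← one_smul F (e i)] at this
      exact (smul_left_injective F (he.ne0 i) this).symm
    · exact eigen_unit (by rw [he, if_pos rfl]; exact one_ne_zero) (ha i)
  exact eq_one3 he.D_ne (by rw [ha, h1, one_smul]) (by rw [ha, h1, one_smul])
    (by rw [ha, h1, one_smul])

end One

lemma mem_setStab_of {P : Fin 3 → Pt F} (hP : Function.Injective P) {g : GG F}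
    (h : ∀ i, ∃ j, g • P i = P j) : g ∈ setStab P := by
  choose f hf using h
  have hinj : Function.Injective f := by
    intro i j hij
    apply hP
    apply MulAction.injective g
    change g • P i = g • P j
    rw [hf, hf, hij]
  exact ⟨Equiv.ofBijective f (Finite.injective_iff_bijective.1 hinj), hf⟩

/-- If a subgroup without fixed points normalizes a nontrivial subgroup `M` with fixed points, the
fixed points of `M` form an orthogonal frame. -/
lemma frame_of_normal {H M : Subgroup (GG F)} (hM : M ≠ ⊥) (hF : (Fix M).Nonempty)
    (hH : Fix H = ∅) (hn : ∀ h ∈ H, ∀ k ∈ M, h * k * h⁻¹ ∈ M) :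
    ∃ P : Fin 3 → Pt F, IsFr P ∧ (∀ Y, Y ∈ Fix M ↔ ∃ i, Y = P i) ∧ H ≤ setStab P := by
  have hsm : ∀ h ∈ H, ∀ Y ∈ Fix M, h • Y ∈ Fix M := by
    intro h hh Y hY
    apply smul_mem_Fix _ hY
    intro k hk
    have := hn h⁻¹ (inv_mem hh) k hk
    rwa [inv_inv] at this
  obtain ⟨X, hX, hc⟩ := exists_center hM hF
  have : X ∉ Fix H := by rw [hH]; simp
  rw [mem_Fix] at this
  push Not at this
  obtain ⟨h, hh, hne⟩ := this
  have hY := hsm h hh X hX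
  have hperp : Perp (h • X) X := (hc _ hY).resolve_left hne
  have hXi : ¬ Iso X := fun hi => hne (iso_perp_pt ((iso_smul h X).2 hi) hi hperp)
  have hYi : ¬ Iso (h • X) := by rwa [iso_smul]
  have hc' : ∀ Z ∈ Fix M, Z = h • X ∨ Perp Z (h • X) := by
    intro Z hZ
    rcases hc _ (hsm h⁻¹ (inv_mem hh) Z hZ) with h1 | h1
    · left; rw [← h1, smul_inv_smul]
    · right; rw [← perp_smul h, smul_inv_smul] at h1; exact h1
  have ht := third_mem_Fix hne.symm hX hY
  have hti := third_noniso hXi hYi hperp.symm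
  have p1 := third_perp1 hne.symm
  have p2 := third_perp2 hne.symm
  have hP : IsFr ![X, h • X, third X (h • X)] := by
    constructor
    · intro i; fin_cases i
      · exact hXi
      · exact hYi
      · exact hti
    · intro i j hij
      fin_cases i <;> fin_cases j
      · exact absurd rfl hij
      · exact hperp.symm
      · exact p1
      · exact hperp
      · exact absurd rfl hij
      · exact p2
      · exact p1.symm
      · exact p2.symm
      · exact absurd rfl hij
  have hiff : ∀ Y, Y ∈ Fix M ↔ ∃ i, Y = (![X, h • X, third X (h • X)] : Fin 3 → Pt F) i := by
    intro Y
    constructor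
    · intro hYM
      rcases hc Y hYM with h1 | h1
      · exact ⟨0, h1⟩
      rcases hc' Y hYM with h2 | h2
      · exact ⟨1, h2⟩
      · exact ⟨2, eq_third hne.symm h1 h2⟩
    · rintro ⟨i, rfl⟩
      fin_cases i
      · exact hX
      · exact hY
      · exact ht
  refine ⟨_, hP, hiff, fun k hk => mem_setStab_of hP.inj fun i => ?_⟩
  exact (hiff _).1 (hsm k hk _ ((hiff _).2 ⟨i, rfl⟩))

/-- `H` permutes the frame `P` and contains a nontrivial element fixing its points. -/
def FT (H : Subgroup (GG F)) (P : Fin 3 → Pt F) : Prop :=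
  IsFr P ∧ H ≤ setStab P ∧ H ⊓ ptStab P ≠ ⊥

lemma ptStab_conj {P : Fin 3 → Pt F} {h k : GG F} (hh : h ∈ setStab P) (hk : k ∈ ptStab P) :
    h * k * h⁻¹ ∈ ptStab P := by
  obtain ⟨s, hs⟩ := hh
  have := (hs.mul (mem_ptStab'.1 hk)).mul hs.inv
  rw [mul_one, mul_inv_cancel] at this
  exact mem_ptStab'.2 this

/-- The frame of an imprimitive subgroup without fixed points is unique up to its labelling. -/
lemma FT_unique {H : Subgroup (GG F)} {P Q : Fin 3 → Pt F} (hH : Fix H = ∅) (hP : FT H P)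
    (hQ : FT H Q) : ∃ s : Equiv.Perm (Fin 3), Q = P ∘ s := by
  obtain ⟨hP, hPs, hPt⟩ := hP
  obtain ⟨hQ, hQs, hQt⟩ := hQ
  have hne : (H ⊓ ptStab P) ⊓ (H ⊓ ptStab Q) ≠ ⊥ := by
    intro hbot
    obtain ⟨⟨t, htH, htP⟩, ht1⟩ := Subgroup.ne_bot_iff_exists_ne_one.1 hPt
    apply ht1
    apply Subtype.ext
    apply ptStab_six hP htP
    rw [← Subgroup.mem_bot, ← hbot]
    exact ⟨⟨pow_mem htH 6, pow_mem htP 6⟩, pow_mem htH 6, frame_pow_six (hQs htH)⟩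
  have hPF : ∀ i, P i ∈ Fix ((H ⊓ ptStab P) ⊓ (H ⊓ ptStab Q)) := fun i =>
    mem_Fix.2 fun k hk => mem_ptStab.1 hk.1.2 i
  have hQF : ∀ i, Q i ∈ Fix ((H ⊓ ptStab P) ⊓ (H ⊓ ptStab Q)) := fun i =>
    mem_Fix.2 fun k hk => mem_ptStab.1 hk.2.2 i
  obtain ⟨R, hR, hRi, -⟩ := frame_of_normal hne ⟨_, hPF 0⟩ hH (by
    rintro h hh k ⟨⟨hkH, hkP⟩, -, hkQ⟩
    have hc : h * k * h⁻¹ ∈ H := mul_mem (mul_mem hh hkH) (inv_mem hh)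
    exact ⟨⟨hc, ptStab_conj (hPs hh) hkP⟩, hc, ptStab_conj (hQs hh) hkQ⟩)
  choose f hf using fun i => (hRi _).1 (hPF i)
  choose f' hf' using fun i => (hRi _).1 (hQF i)
  have hfi : Function.Injective f := fun i j hij => hP.inj (by rw [hf, hf, hij])
  have hfi' : Function.Injective f' := fun i j hij => hQ.inj (by rw [hf', hf', hij])
  let s := Equiv.ofBijective f (Finite.injective_iff_bijective.1 hfi)
  let s' := Equiv.ofBijective f' (Finite.injective_iff_bijective.1 hfi')
  refine ⟨s'.trans s.symm, ?_⟩
  funext i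
  have h1 : f (s.symm (s' i)) = s' i := s.apply_symm_apply _
  have h2 : P (s.symm (s' i)) = R (f (s.symm (s' i))) := hf _
  change Q i = P (s.symm (s' i))
  rw [h2, h1, hf']; rfl

lemma IsFr.smul {P : Fin 3 → Pt F} (g : GG F) : IsFr (g • P) ↔ IsFr P := by
  simp only [IsFr, Pi.smul_apply, iso_smul, perp_smul]

lemma IsFr.trans {P Q : Fin 3 → Pt F} (hP : IsFr P) (hQ : IsFr Q) : ∃ g : GG F, g • P = Q := by
  obtain ⟨g, h0, h1⟩ := trans_noniso (hP.1 0) (hP.1 1) (hP.2 0 1 (by decide)) (hQ.1 0) (hQ.1 1)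
    (hQ.2 0 1 (by decide))
  have hgP := (IsFr.smul g).2 hP
  have hne : Q 0 ≠ Q 1 := fun h => absurd (hQ.inj h) (by decide)
  refine ⟨g, ?_⟩
  have h2 : g • P 2 = Q 2 := by
    rw [eq_third hne (hQ.2 2 0 (by decide)) (hQ.2 2 1 (by decide))]
    apply eq_third hne
    · rw [← h0]; exact hgP.2 2 0 (by decide)
    · rw [← h1]; exact hgP.2 2 1 (by decide)
  funext i
  fin_cases i
  · exact h0
  · exact h1
  · exact h2

lemma exists_fr : ∃ P : Fin 3 → Pt F, IsFr P := by
  obtain ⟨P, hP⟩ := exists_noniso (F := F)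
  obtain ⟨Q₁, Q₂, -, -, -, -, ⟨i1, p1⟩, ⟨i2, p2⟩, -, p12⟩ := exists_perp_of_noniso hP
  refine ⟨![P, Q₁, Q₂], ?_, ?_⟩
  · intro i; fin_cases i
    · exact hP
    · exact i1
    · exact i2
  · intro i j hij
    fin_cases i <;> fin_cases j
    · exact absurd rfl hij
    · exact p1
    · exact p2
    · exact p1.symm
    · exact absurd rfl hij
    · exact p12
    · exact p2.symm
    · exact p12.symm
    · exact absurd rfl hij

lemma sum_card_ptStab : ∑ P : Fin 3 → Pt F with IsFr P, Nat.card (ptStab P : Subgroup (GG F)) =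
    Fintype.card (GG F) := by
  obtain ⟨P0, h0⟩ := exists_fr (F := F)
  rw [← burnside_orbit (G := GG F) (IsFr (F := F)) P0
    (fun P => ⟨fun h => h0.trans h, by rintro ⟨g, rfl⟩; exact (IsFr.smul g).2 h0⟩)]
  simp only [fixCount]
  simp only [Finset.card_eq_sum_ones, Finset.sum_filter]
  rw [Finset.sum_comm]
  apply Finset.sum_congr rfl
  intro P _
  by_cases h : IsFr P
  · simp only [h, true_and, if_true]
    rw [← Finset.sum_filter, ← Finset.card_eq_sum_ones, Nat.card_eq_fintype_card,
      Fintype.card_subtype]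
    congr 1; ext g
    rw [Finset.mem_filter, Finset.mem_filter, mem_ptStab, funext_iff]; rfl
  · simp [h]

lemma not_FT_top (P : Fin 3 → Pt F) : ¬ FT ⊤ P := by
  rintro ⟨hP, hs, -⟩
  have key : ∀ Q, ¬ Iso Q → Perp (P 0) Q → ∃ j, Q = P j := by
    intro Q hQ hp
    obtain ⟨g, hg, -⟩ := trans_noniso (hP.1 0) hQ hp hQ (hP.1 0) hp.symm
    obtain ⟨s, hs⟩ := hs (Subgroup.mem_top g)
    exact ⟨s 0, by rw [← hg, hs]⟩
  obtain ⟨Q₁, Q₂, Q₃, n12, n13, n23, ⟨i1, p1⟩, ⟨i2, p2⟩, ⟨i3, p3⟩, -⟩ :=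
    exists_perp_of_noniso (hP.1 0)
  have hn : ∀ Q, ¬ Iso Q → Perp (P 0) Q → Q ≠ P 0 := by
    rintro Q hQ hp rfl
    exact hQ (perp_self.1 hp)
  have m1 := hn _ i1 p1
  have m2 := hn _ i2 p2
  have m3 := hn _ i3 p3
  obtain ⟨j1, rfl⟩ := key _ i1 p1
  obtain ⟨j2, rfl⟩ := key _ i2 p2
  obtain ⟨j3, rfl⟩ := key _ i3 p3
  rw [hP.inj.ne_iff] at *
  revert n12 n13 n23 m1 m2 m3
  clear * -
  revert j1 j2 j3
  decide

lemma setStab_comp (P : Fin 3 → Pt F) (s : Equiv.Perm (Fin 3)) :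
    (setStab (P ∘ s) : Subgroup (GG F)) = setStab P := by
  ext g
  constructor
  · rintro ⟨t, ht⟩
    refine ⟨s * t * s⁻¹, fun i => ?_⟩
    have := ht (s⁻¹ i)
    simpa using this
  · rintro ⟨t, ht⟩
    refine ⟨s⁻¹ * t * s, fun i => ?_⟩
    have := ht (s i)
    simpa using this

lemma ptStab_comp (P : Fin 3 → Pt F) (s : Equiv.Perm (Fin 3)) :
    (ptStab (P ∘ s) : Subgroup (GG F)) = ptStab P := by
  ext g
  rw [mem_ptStab, mem_ptStab]
  exact ⟨fun h i => by simpa using h (s⁻¹ i), fun h i => h _⟩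

lemma FT_comp {H : Subgroup (GG F)} {P : Fin 3 → Pt F} (h : FT H P) (s : Equiv.Perm (Fin 3)) :
    FT H (P ∘ s) := by
  obtain ⟨⟨h1, h2⟩, h3, h4⟩ := h
  exact ⟨⟨fun i => h1 _, fun i j hij => h2 _ _ fun h => hij (s.injective h)⟩,
    by rwa [setStab_comp], by rwa [ptStab_comp]⟩

lemma card_FT {H : Subgroup (GG F)} (hH : Fix H = ∅) (h : ∃ P, FT H P) :
    ((Finset.univ : Finset (Fin 3 → Pt F)).filter fun P => FT H P).card = 6 := by
  obtain ⟨P, hP⟩ := h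
  have : (Finset.univ : Finset (Fin 3 → Pt F)).filter (fun P => FT H P) =
      (Finset.univ : Finset (Equiv.Perm (Fin 3))).image fun s i => P (s i) := by
    ext Q
    simp only [Finset.mem_filter, Finset.mem_univ, true_and, Finset.mem_image]
    constructor
    · intro hQ
      obtain ⟨s, hs⟩ := FT_unique hH hP hQ
      exact ⟨s, hs.symm⟩
    · rintro ⟨s, rfl⟩
      exact FT_comp hP s
  rw [this, Finset.card_image_of_injective, Finset.card_univ, Fintype.card_perm, Fintype.card_fin]
  · rfl
  · intro s t hst
    exact Equiv.ext fun i => hP.1.inj (congrFun hst i)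

/-- The Möbius sum over the imprimitive subgroups without fixed points. -/
lemma sum_frame {m : Subgroup (GG F) → ℤ}
    (hm : ∀ K : Subgroup (GG F), ∑ H with H ≤ K, m H = if K = ⊥ then 1 else 0) :
    3 * ∑ H with Fix H = ∅ ∧ ∃ P, FT H P, m H = - (Fintype.card (GG F) : ℤ) := by
  have h6 : 6 * ∑ H with Fix H = ∅ ∧ ∃ P, FT H P, m H =
      ∑ P : Fin 3 → Pt F with IsFr P, ∑ H with H ≤ setStab P ∧
        (∀ i, ¬ H ≤ MulAction.stabilizer (GG F) (P i)) ∧ H ⊓ ptStab P ≠ ⊥, m H := by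
    have : ∀ P ∈ (Finset.univ : Finset (Fin 3 → Pt F)).filter fun P => IsFr P,
      (∑ H with H ≤ setStab P ∧
        (∀ i, ¬ H ≤ MulAction.stabilizer (GG F) (P i)) ∧ H ⊓ ptStab P ≠ ⊥, m H) =
      ∑ H with Fix H = ∅ ∧ FT H P, m H := by
      intro P hP
      rw [Finset.mem_filter] at hP
      apply Finset.sum_congr _ fun _ _ => rfl
      apply Finset.filter_congr
      intro H _
      constructor
      · rintro ⟨a, b, c⟩
        exact ⟨(fix_empty_iff hP.2 a c).2 b, hP.2, a, c⟩
      · rintro ⟨a, -, b, c⟩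
        exact ⟨b, (fix_empty_iff hP.2 b c).1 a, c⟩
    rw [Finset.sum_congr rfl this]
    simp only [Finset.sum_filter]
    rw [Finset.mul_sum]
    have h2 : ∀ P : Fin 3 → Pt F, (if IsFr P then ∑ H : Subgroup (GG F),
        (if Fix H = ∅ ∧ FT H P then m H else 0) else 0) =
        ∑ H : Subgroup (GG F), if Fix H = ∅ ∧ FT H P then m H else 0 := by
      intro P
      split_ifs with h
      · rfl
      · symm
        apply Finset.sum_eq_zero
        intro H _
        rw [if_neg]
        rintro ⟨-, h', -⟩
        exact h h'
    rw [Finset.sum_congr rfl fun P _ => h2 P, Finset.sum_comm]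
    apply Finset.sum_congr rfl
    intro H _
    by_cases hH : Fix H = ∅ ∧ ∃ P, FT H P
    · rw [if_pos hH]
      simp only [hH.1, true_and]
      rw [← Finset.sum_filter, Finset.sum_const, card_FT hH.1 hH.2]
      simp
    · rw [if_neg hH, mul_zero, Finset.sum_eq_zero]
      intro P _
      rw [if_neg]
      rintro ⟨a, b⟩
      exact hH ⟨a, P, b⟩
  have h3 : ∀ P ∈ (Finset.univ : Finset (Fin 3 → Pt F)).filter fun P => IsFr P,
      3 * (∑ H with H ≤ setStab P ∧
        (∀ i, ¬ H ≤ MulAction.stabilizer (GG F) (P i)) ∧ H ⊓ ptStab P ≠ ⊥, m H) =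
      - 6 * (Nat.card (ptStab P : Subgroup (GG F)) : ℤ) := by
    intro P hP
    have hP := (Finset.mem_filter.1 hP).2
    rw [sum_triple hP.inj hm (frame_hT hP) (frame_surj hP) (fun g hg t ht h => frame_der hP hg ht h)
      (fun g hg i => frame_rev hP hg i), card_setStab hP.inj (frame_surj hP)]
    push_cast; ring
  have h4 : 3 * (6 * ∑ H with Fix H = ∅ ∧ ∃ P, FT H P, m H) = 3 * _ :=
    congrArg (fun z => 3 * z) h6
  rw [Finset.mul_sum (Finset.univ.filter fun P : Fin 3 → Pt F => IsFr P), Finset.sum_congr rfl h3, ← Finset.mul_sum, ← Nat.cast_sum,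
    sum_card_ptStab] at h4
  linarith

end Frames

/-! ### Möbius sums over groups with a normal subgroup of index three -/

section CyclicThree

variable {G : Type} [Group G] [Fintype G] {m : Subgroup G → ℤ}

lemma sum_filter_eq (K : Subgroup G) : ∑ H with H = K, m H = m K := by
  rw [Finset.sum_filter, Finset.sum_ite_eq' Finset.univ K m, if_pos (Finset.mem_univ _)]

lemma mob_bot (hm : ∀ K : Subgroup G, ∑ H with H ≤ K, m H = if K = ⊥ then 1 else 0) :
    m ⊥ = 1 := by
  have := hm ⊥
  simp only [le_bot_iff, if_true] at this
  rwa [sum_filter_eq] at this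

/-- Modulo a subgroup of index three, every element is `1`, `n` or `n⁻¹`. -/
lemma index_three {C N : Subgroup G} (hCN : C ≤ N) (hcard : Nat.card N = 3 * Nat.card C)
    {n : G} (hn : n ∈ N) (hnC : n ∉ C) (hn3 : n ^ 3 = 1) {h : G} (hh : h ∈ N) :
    h ∈ C ∨ h * n⁻¹ ∈ C ∨ h * n ∈ C := by
  have hn2 : n ^ 2 ∉ C := by
    intro h2
    apply hnC
    have : n = (n ^ 2)⁻¹ := by
      rw [eq_inv_iff_mul_eq_one, ← pow_succ', hn3]
    rw [this]; exact inv_mem h2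
  have hcC : ∀ x : G, (Finset.univ.filter fun h : G => h * x ∈ C).card = Nat.card C := by
    intro x
    rw [Nat.card_eq_fintype_card, Fintype.card_subtype]
    apply Finset.card_bij (fun h _ => h * x)
    · intro a ha; simpa using ha
    · intro a _ b _ hab; exact mul_right_cancel hab
    · intro b hb; exact ⟨b * x⁻¹, by simpa using hb, by group⟩
  have hd1 : Disjoint (Finset.univ.filter fun h : G => h * 1 ∈ C)
      (Finset.univ.filter fun h : G => h * n⁻¹ ∈ C) := by
    rw [Finset.disjoint_left]
    intro a ha hb
    simp only [Finset.mem_filter, Finset.mem_univ, true_and, mul_one] at ha hb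
    apply hnC
    have := mul_mem (inv_mem hb) ha
    simpa using this
  have hd2 : Disjoint ((Finset.univ.filter fun h : G => h * 1 ∈ C) ∪
      (Finset.univ.filter fun h : G => h * n⁻¹ ∈ C)) (Finset.univ.filter fun h : G => h * n ∈ C) := by
    rw [Finset.disjoint_left]
    intro a ha hb
    simp only [Finset.mem_filter, Finset.mem_univ, true_and, mul_one, Finset.mem_union] at ha hb
    rcases ha with ha | ha
    · apply hnC
      have := mul_mem (inv_mem ha) hb
      simpa using this
    · apply hn2
      have := mul_mem (inv_mem ha) hb
      rw [show (a * n⁻¹)⁻¹ * (a * n) = n ^ 2 by rw [pow_two]; group] at this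
      exact this
  have hu : ((Finset.univ.filter fun h : G => h * 1 ∈ C) ∪
      (Finset.univ.filter fun h : G => h * n⁻¹ ∈ C)) ∪ (Finset.univ.filter fun h : G => h * n ∈ C) =
      Finset.univ.filter fun h : G => h ∈ N := by
    apply Finset.eq_of_subset_of_card_le
    · intro a ha
      simp only [Finset.mem_filter, Finset.mem_univ, true_and, mul_one, Finset.mem_union] at ha ⊢
      rcases ha with (ha | ha) | ha
      · exact hCN ha
      · have := mul_mem (hCN ha) hn
        simpa using this
      · have := mul_mem (hCN ha) (inv_mem hn)
        simpa using this
    · rw [Finset.card_union_of_disjoint hd2, Finset.card_union_of_disjoint hd1, hcC, hcC, hcC,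
        ← Fintype.card_subtype, ← Nat.card_eq_fintype_card]
      have : Nat.card {x // x ∈ N} = 3 * Nat.card C := hcard
      rw [this]; omega
  have : h ∈ Finset.univ.filter fun h : G => h ∈ N := by simpa using hh
  rw [← hu] at this
  simp only [Finset.mem_filter, Finset.mem_univ, true_and, mul_one, Finset.mem_union] at this
  tauto

lemma mob_prime (hm : ∀ K : Subgroup G, ∑ H with H ≤ K, m H = if K = ⊥ then 1 else 0)
    {n : G} (h1 : n ≠ 1) (h3 : n ^ 3 = 1) : m (Subgroup.zpowers n) = -1 := by
  have hne : Subgroup.zpowers n ≠ ⊥ := by rwa [ne_eq, Subgroup.zpowers_eq_bot]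
  have h := hm (Subgroup.zpowers n)
  rw [if_neg hne] at h
  have hcard : Nat.card (Subgroup.zpowers n) = 3 := by
    rw [Nat.card_zpowers]
    exact orderOf_eq_prime h3 h1
  have : (Finset.univ.filter fun H : Subgroup G => H ≤ Subgroup.zpowers n) =
      {⊥, Subgroup.zpowers n} := by
    ext H
    simp only [Finset.mem_filter, Finset.mem_univ, true_and, Finset.mem_insert,
      Finset.mem_singleton]
    constructor
    · intro hH
      have hd := Subgroup.card_dvd_of_le hH
      rw [hcard, Nat.dvd_prime Nat.prime_three] at hd
      rcases hd with hd | hd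
      · left; exact Subgroup.card_eq_one.1 hd
      · right
        exact Subgroup.eq_of_le_of_card_ge hH (by rw [hd, hcard])
    · rintro (rfl | rfl)
      · exact bot_le
      · exact le_rfl
  rw [this, Finset.sum_pair hne.symm, mob_bot hm] at h
  linarith

/-- The Möbius sum over the subgroups of `N` meeting `C` nontrivially, where `C` has index three in
`N` and the elements of `N` outside of `C` have order three. The other subgroups of `N` are trivial
or generated by one of these elements. -/
lemma sum_index_three (hm : ∀ K : Subgroup G, ∑ H with H ≤ K, m H = if K = ⊥ then 1 else 0)
    {C N : Subgroup G} (hCN : C ≤ N) (hC : C ≠ ⊥) (hcard : Nat.card N = 3 * Nat.card C)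
    (h3 : ∀ n ∈ N, n ∉ C → n ^ 3 = 1) :
    ∑ H with H ≤ N ∧ H ⊓ C ≠ ⊥, m H = (Nat.card C : ℤ) - 1 := by
  have hN : N ≠ ⊥ := by rintro rfl; exact hC (le_bot_iff.1 hCN)
  have h0 := hm N
  rw [if_neg hN] at h0
  have hz : ∀ n ∈ N, n ∉ C → Subgroup.zpowers n ≤ N ∧ Subgroup.zpowers n ⊓ C = ⊥ := by
    intro n hn hnC
    refine ⟨Subgroup.zpowers_le.2 hn, ?_⟩
    have hnp := orderOf_eq_prime (h3 n hn hnC) (fun h => hnC (h ▸ one_mem C))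
    have hd := Subgroup.card_dvd_of_le (inf_le_left : Subgroup.zpowers n ⊓ C ≤ Subgroup.zpowers n)
    rw [Nat.card_zpowers, hnp, Nat.dvd_prime Nat.prime_three] at hd
    rcases hd with hd | hd
    · exact Subgroup.card_eq_one.1 hd
    · exfalso
      have := Subgroup.eq_of_le_of_card_ge (inf_le_left : Subgroup.zpowers n ⊓ C ≤ Subgroup.zpowers n)
        (by rw [hd, Nat.card_zpowers, hnp])
      apply hnC
      have h' : n ∈ Subgroup.zpowers n ⊓ C := by rw [this]; exact Subgroup.mem_zpowers n
      exact h'.2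
  have hu : ∀ n ∈ N, n ∉ C → ∀ H : Subgroup G, (n ∈ H ∧ H ≤ N ∧ H ⊓ C = ⊥) ↔
      H = Subgroup.zpowers n := by
    intro n hn hnC H
    constructor
    · rintro ⟨hnH, hHN, hHC⟩
      apply le_antisymm _ (Subgroup.zpowers_le.2 hnH)
      intro h hh
      have key : ∀ x, x ∈ H → x ∈ C → x = 1 := fun x hx hx' => by
        rw [← Subgroup.mem_bot, ← hHC]; exact ⟨hx, hx'⟩
      rcases index_three hCN hcard hn hnC (h3 n hn hnC) (hHN hh) with h' | h' | h'
      · rw [key h hh h']; exact one_mem _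
      · have := key _ (mul_mem hh (inv_mem hnH)) h'
        rw [mul_inv_eq_one.1 this]; exact Subgroup.mem_zpowers n
      · have := key _ (mul_mem hh hnH) h'
        rw [mul_eq_one_iff_eq_inv.1 this]; exact inv_mem (Subgroup.mem_zpowers n)
    · rintro rfl
      exact ⟨Subgroup.mem_zpowers n, hz n hn hnC⟩
  have hcount : (Finset.univ.filter fun n : G => n ∈ N ∧ n ∉ C).card = 2 * Nat.card C := by
    have e1 : (Finset.univ.filter fun n : G => n ∈ N ∧ n ∉ C) =
        (Finset.univ.filter fun n : G => n ∈ N) \ (Finset.univ.filter fun n : G => n ∈ C) := by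
      ext; simp
    rw [e1, Finset.card_sdiff_of_subset, ← Fintype.card_subtype, ← Fintype.card_subtype,
      ← Nat.card_eq_fintype_card, ← Nat.card_eq_fintype_card]
    · change Nat.card N - Nat.card C = _
      omega
    · intro a ha
      simp only [Finset.mem_filter, Finset.mem_univ, true_and] at ha ⊢
      exact hCN ha
  have h2 : 2 * ∑ H with (H ≤ N ∧ H ⊓ C = ⊥) ∧ H ≠ ⊥, m H = -(2 * Nat.card C : ℤ) := by
    have e1 : ∑ n : G with n ∈ N ∧ n ∉ C, ∑ H with n ∈ H ∧ H ≤ N ∧ H ⊓ C = ⊥, m H =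
        -(2 * Nat.card C : ℤ) := by
      have : ∀ n ∈ Finset.univ.filter (fun n : G => n ∈ N ∧ n ∉ C),
          ∑ H with n ∈ H ∧ H ≤ N ∧ H ⊓ C = ⊥, m H = -1 := by
        intro n hn
        obtain ⟨hn, hnC⟩ := (Finset.mem_filter.1 hn).2
        rw [Finset.filter_congr fun H _ => hu n hn hnC H, sum_filter_eq]
        exact mob_prime hm (fun h => hnC (h ▸ one_mem C)) (h3 n hn hnC)
      rw [Finset.sum_congr rfl this, Finset.sum_const, hcount]
      simp
    rw [← e1]
    simp only [Finset.sum_filter]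
    rw [Finset.mul_sum]
    simp only [← Finset.sum_filter (s := (Finset.univ : Finset G))]
    rw [Finset.sum_comm]
    apply Finset.sum_congr rfl
    intro H _
    by_cases hH : (H ≤ N ∧ H ⊓ C = ⊥) ∧ H ≠ ⊥
    · rw [if_pos hH]
      obtain ⟨⟨hHN, hHC⟩, hH1⟩ := hH
      simp only [hHN, hHC, and_true]
      rw [← Finset.sum_filter, Finset.filter_filter, Finset.sum_const, nsmul_eq_mul]
      congr 1
      have key : ∀ x, x ∈ H → x ∈ C → x = 1 := fun x hx hx' => by
        rw [← Subgroup.mem_bot, ← hHC]; exact ⟨hx, hx'⟩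
      obtain ⟨⟨n, hnH⟩, hn1⟩ := Subgroup.ne_bot_iff_exists_ne_one.1 hH1
      have hn1 : n ≠ 1 := fun h => hn1 (Subtype.ext h)
      have hnC : n ∉ C := fun h => hn1 (key n hnH h)
      have hHz := (hu n (hHN hnH) hnC H).1 ⟨hnH, hHN, hHC⟩
      have hH3 : Nat.card H = 3 := by
        rw [hHz, Nat.card_zpowers]
        exact orderOf_eq_prime (h3 n (hHN hnH) hnC) hn1
      have e2 : (Finset.univ.filter fun n : G => (n ∈ N ∧ n ∉ C) ∧ n ∈ H) =
          (Finset.univ.filter fun n : G => n ∈ H).erase 1 := by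
        ext x
        simp only [Finset.mem_filter, Finset.mem_univ, true_and, Finset.mem_erase]
        exact ⟨fun h => ⟨fun h1 => h.1.2 (h1 ▸ one_mem C), h.2⟩,
          fun h => ⟨⟨hHN h.2, fun hc => h.1 (key x h.2 hc)⟩, h.2⟩⟩
      rw [e2, Finset.card_erase_of_mem (by simp), ← Fintype.card_subtype,
        ← Nat.card_eq_fintype_card]
      change ((2 : ℤ)) = ((Nat.card H - 1 : ℕ) : ℤ)
      rw [hH3]; rfl
    · rw [if_neg hH, mul_zero, Finset.sum_eq_zero]
      intro n hn
      obtain ⟨hn, hnC⟩ := (Finset.mem_filter.1 hn).2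
      rw [if_neg]
      rintro ⟨hnH, hh⟩
      refine hH ⟨hh, ?_⟩
      rintro rfl
      rw [Subgroup.mem_bot] at hnH
      exact hnC (hnH ▸ one_mem C)
  have hbot : ∑ H with H ≤ N ∧ H ⊓ C = ⊥, m H =
      1 + ∑ H with (H ≤ N ∧ H ⊓ C = ⊥) ∧ H ≠ ⊥, m H := by
    rw [← Finset.sum_filter_add_sum_filter_not (Finset.univ.filter fun H : Subgroup G =>
      H ≤ N ∧ H ⊓ C = ⊥) (fun H => H ≠ ⊥) m, Finset.filter_filter, Finset.filter_filter, add_comm]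
    congr 1
    have : (Finset.univ.filter fun H : Subgroup G => (H ≤ N ∧ H ⊓ C = ⊥) ∧ ¬ H ≠ ⊥) = {⊥} := by
      ext H
      simp only [Finset.mem_filter, Finset.mem_univ, true_and, Finset.mem_singleton, not_not]
      constructor
      · exact fun h => h.2
      · rintro rfl
        exact ⟨⟨bot_le, bot_inf_eq _⟩, rfl⟩
    rw [this, Finset.sum_singleton, mob_bot hm]
  have hs := Finset.sum_filter_add_sum_filter_not (Finset.univ.filter fun H : Subgroup G =>
      H ≤ N) (fun H => H ⊓ C = ⊥) m
  rw [Finset.filter_filter, Finset.filter_filter, h0, hbot] at hs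
  linarith

end CyclicThree

/-! ### Singer type subgroups -/

section Singer

variable {F : Type} [Field F] [StarRing F] [HermField F]

/-- `g` has no eigenvector. -/
def NE (g : GG F) : Prop := ∀ x : Vec F, x ≠ 0 → ∀ c : F, g • x ≠ c • x

lemma fix_zpowers_iff {g : GG F} : Fix (Subgroup.zpowers g) = ∅ ↔ NE g := by
  rw [Finset.eq_empty_iff_forall_notMem]
  constructor
  · intro h x hx c hc
    exact h (pt x hx) (mem_Fix_zpowers.2 ((g_pt_eq g hx).2 ⟨c, hc⟩))
  · intro h P hP
    obtain ⟨x, hx, rfl⟩ := exists_rep P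
    obtain ⟨c, hc⟩ := (g_pt_eq g hx).1 (mem_Fix_zpowers.1 hP)
    exact h x hx c hc

/-- The centralizer of an element. -/
abbrev Ce (g : GG F) : Subgroup (GG F) := Subgroup.centralizer {g}

lemma mem_Ce {g c : GG F} : c ∈ Ce g ↔ g * c = c * g := by
  rw [Subgroup.mem_centralizer_singleton_iff, eq_comm]

lemma self_mem_Ce (g : GG F) : g ∈ Ce g := mem_Ce.2 rfl

lemma Ce_smul {g c : GG F} (h : c ∈ Ce g) (x : Vec F) : c • g • x = g • c • x := by
  rw [← mul_smul, ← mul_smul, mem_Ce.1 h]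

lemma NE.D_ne {g : GG F} (hg : NE g) {v : Vec F} (hv : v ≠ 0) : D v (g • v) (g • g • v) ≠ 0 := by
  intro h0
  have hp : pole v (g • v) ≠ 0 := by
    intro h
    obtain ⟨c, hc⟩ := pole_eq_zero hv h
    exact hg v hv c hc
  have hp' : pole (g • v) (g • g • v) ≠ 0 := by
    rw [← g_pole]; exact smul_ne0 g hp
  have h1 : B (pole v (g • v)) (g • v) = 0 := B_pole_self2' _ _
  have h2 : B (pole v (g • v)) (g • g • v) = 0 := by
    apply B_swap0
    rw [B_pole, ← D_rot]
    exact h0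
  obtain ⟨c, hc⟩ := eq_smul_pole hp' h1 h2
  rw [← g_pole] at hc
  have hc0 : c ≠ 0 := by rintro rfl; rw [zero_smul] at hc; exact hp hc
  exact hg _ hp c⁻¹ ((eq_inv_smul_iff₀ hc0).2 hc.symm)

/-- Elements centralizing `g` are determined by one value. -/
lemma NE.ext {g : GG F} (hg : NE g) {c d : GG F} (hc : c ∈ Ce g) (hd : d ∈ Ce g) {v : Vec F}
    (hv : v ≠ 0) (h : c • v = d • v) : c = d := by
  apply g_ext3 (hg.D_ne hv) h
  · rw [Ce_smul hc, Ce_smul hd, h]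
  · rw [Ce_smul hc, Ce_smul hc, Ce_smul hd, Ce_smul hd, h]

lemma NE.coord {g : GG F} (hg : NE g) {v : Vec F} (hv : v ≠ 0) (x : Vec F) :
    ∃ a b d : F, x = a • v + b • g • v + d • g • g • v := by
  have h0 := hg.D_ne hv
  generalize g • g • v = w2 at *
  generalize g • v = w1 at *
  have h := congrArg (fun z => (D v w1 w2)⁻¹ • z) (cramer v w1 w2 x)
  simp only [smul_add, smul_smul, inv_mul_cancel₀ h0, one_smul] at h
  exact ⟨_, _, _, h⟩

lemma exists_vec_ne : ∃ v : Vec F, v ≠ 0 := by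
  obtain ⟨p, hp, -⟩ := exists_iso_vec (F := F)
  exact ⟨p, hp⟩

lemma NE.comm {g : GG F} (hg : NE g) {c d : GG F} (hc : c ∈ Ce g) (hd : d ∈ Ce g) :
    c * d = d * c := by
  obtain ⟨v, hv⟩ := exists_vec_ne (F := F)
  apply hg.ext (mul_mem hc hd) (mul_mem hd hc) hv
  obtain ⟨a, b, e, h1⟩ := hg.coord hv (c • v)
  obtain ⟨a', b', e', h2⟩ := hg.coord hv (d • v)
  have h3 : c • d • v = a' • c • v + b' • g • c • v + e' • g • g • c • v := by
    conv_lhs => rw [h2]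
    simp only [smul_add, g_smul, Ce_smul hc]
  have h4 : d • c • v = a • d • v + b • g • d • v + e • g • g • d • v := by
    conv_lhs => rw [h1]
    simp only [smul_add, g_smul, Ce_smul hd]
  rw [mul_smul, mul_smul, h3, h4, h1, h2]
  simp only [smul_add, g_smul]
  generalize g • g • g • g • v = w4
  generalize g • g • g • v = w3
  generalize g • g • v = w2
  generalize g • v = w1
  module

/-- A nontrivial element of the centralizer of `g` has no eigenvector either. -/
lemma NE.of_mem {g : GG F} (hg : NE g) {c : GG F} (hc : c ∈ Ce g) (h1 : c ≠ 1) : NE c := by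
  intro x hx a ha
  apply h1
  have h2 : c • g • x = a • g • x := by rw [Ce_smul hc, ha, g_smul]
  exact scalar_one (hg.D_ne hx) ha h2 (by rw [Ce_smul hc, h2, g_smul])

lemma NE.Ce_eq {g : GG F} (hg : NE g) {c : GG F} (hc : c ∈ Ce g) (h1 : c ≠ 1) : Ce c = Ce g := by
  have hcn := hg.of_mem hc h1
  apply le_antisymm
  · intro x hx
    rw [mem_Ce]
    exact hcn.comm (mem_Ce.2 (mem_Ce.1 hc).symm) hx
  · intro x hx
    rw [mem_Ce]
    exact hg.comm hc hx

lemma NE.sq_ne {g : GG F} (hg : NE g) : g * g ≠ 1 := by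
  intro h
  obtain ⟨v, hv⟩ := exists_vec_ne (F := F)
  have hgg : g • g • v = v := by rw [← mul_smul, h, one_smul]
  by_cases h0 : v + g • v = 0
  · exact hg v hv (-1) (by rw [neg_one_smul]; exact (neg_eq_of_add_eq_zero_right h0).symm)
  · exact hg _ h0 1 (by rw [one_smul, smul_add, hgg, add_comm])

lemma NE.cube_ne {g : GG F} (hg : NE g) : g ^ 3 ≠ 1 := by
  intro h
  obtain ⟨v, hv⟩ := exists_vec_ne (F := F)
  have hgg : g • g • g • v = v := by
    rw [← mul_smul, ← mul_smul, ← pow_three', h, one_smul]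
  have h0 : v + g • v + g • g • v ≠ 0 := by
    intro h0
    apply hg.D_ne hv
    have := congrArg (fun z => D v (g • v) z) h0
    simpa using this
  exact hg _ h0 1 (by rw [one_smul, smul_add, smul_add, hgg]; abel)

lemma NE.conj {g : GG F} (hg : NE g) (n : GG F) : NE (n * g * n⁻¹) := by
  intro x hx c hc
  apply hg (n⁻¹ • x) (smul_ne0 _ hx) c
  rw [mul_smul, mul_smul, smul_eq_iff_eq_inv_smul, g_smul] at hc
  exact hc

lemma NE.cubic {g : GG F} (hg : NE g) : ∃ a b d : F, ∀ x : Vec F,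
    g • g • g • x = a • x + b • g • x + d • g • g • x := by
  obtain ⟨v, hv⟩ := exists_vec_ne (F := F)
  obtain ⟨a, b, d, h⟩ := hg.coord hv (g • g • g • v)
  refine ⟨a, b, d, fun x => ?_⟩
  obtain ⟨a', b', d', rfl⟩ := hg.coord hv x
  simp only [smul_add, g_smul, h]
  generalize g • g • v = w2
  generalize g • v = w1
  module

/-- A cubic polynomial has at most three roots in the field generated by `g`. -/
lemma NE.roots {g : GG F} (hg : NE g) {a b d : F} {x y z w : GG F} (hx : x ∈ Ce g) (hy : y ∈ Ce g)
    (hz : z ∈ Ce g) (hw : w ∈ Ce g) (hxy : x ≠ y) (hxz : x ≠ z) (hyz : y ≠ z) (hxw : x ≠ w)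
    (hyw : y ≠ w)
    (cx : ∀ u : Vec F, x • x • x • u = a • u + b • x • u + d • x • x • u)
    (cy : ∀ u : Vec F, y • y • y • u = a • u + b • y • u + d • y • y • u)
    (cz : ∀ u : Vec F, z • z • z • u = a • u + b • z • u + d • z • z • u)
    (cw : ∀ u : Vec F, w • w • w • u = a • u + b • w • u + d • w • w • u) : z = w := by
  have e1 : ∀ x ∈ Ce g, ∀ y ∈ Ce g, x ≠ y →
      (∀ u : Vec F, x • x • x • u = a • u + b • x • u + d • x • x • u) →
      (∀ u : Vec F, y • y • y • u = a • u + b • y • u + d • y • y • u) →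
      ∀ u : Vec F, x • x • u + x • y • u + y • y • u - d • (x • u + y • u) - b • u = 0 := by
    intro x hx y hy hxy cx cy u
    by_contra h0
    apply hxy
    apply hg.ext hx hy h0
    have hc : ∀ u : Vec F, y • x • u = x • y • u := fun u => by
      rw [← mul_smul, ← mul_smul, hg.comm hx hy]
    simp only [smul_add, smul_sub, g_smul, hc, cx, cy]
    abel
  have e2 : ∀ z ∈ Ce g, x ≠ z → y ≠ z →
      (∀ u : Vec F, z • z • z • u = a • u + b • z • u + d • z • z • u) →
      ∀ u : Vec F, x • u + y • u + z • u - d • u = 0 := by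
    intro z hz hxz hyz cz u
    by_contra h0
    apply hyz
    apply hg.ext hy hz h0
    have h1 := e1 x hx y hy hxy cx cy u
    have h2 := e1 x hx z hz hxz cx cz u
    have hc : ∀ u : Vec F, y • x • u = x • y • u := fun u => by
      rw [← mul_smul, ← mul_smul, hg.comm hx hy]
    have hc' : ∀ u : Vec F, z • x • u = x • z • u := fun u => by
      rw [← mul_smul, ← mul_smul, hg.comm hx hz]
    have hc'' : ∀ u : Vec F, z • y • u = y • z • u := fun u => by
      rw [← mul_smul, ← mul_smul, hg.comm hy hz]
    have h3 := h1.trans h2.symm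
    simp only [smul_add, smul_sub, g_smul, hc, hc', hc''] at h3 ⊢
    rw [← sub_eq_zero] at h3 ⊢
    rw [← h3]
    abel
  obtain ⟨v, hv⟩ := exists_vec_ne (F := F)
  apply hg.ext hz hw hv
  have h1 := (e2 z hz hxz hyz cz v).trans (e2 w hw hxw hyw cw v).symm
  simpa using h1

lemma NE.card_conj {g : GG F} (hg : NE g) :
    (Finset.univ.filter fun x : GG F => x ∈ Ce g ∧ ∃ n, x = n * g * n⁻¹).card ≤ 3 := by
  obtain ⟨a, b, d, h⟩ := hg.cubic
  have hcub : ∀ x : GG F, (∃ n, x = n * g * n⁻¹) →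
      ∀ u : Vec F, x • x • x • u = a • u + b • x • u + d • x • x • u := by
    rintro x ⟨n, rfl⟩ u
    have := congrArg (fun z => n • z) (h (n⁻¹ • u))
    simpa only [mul_smul, inv_smul_smul, smul_add, g_smul, smul_inv_smul] using this
  by_contra! hcon
  obtain ⟨x, y, z, hx, hy, hz, hxy, hxz, hyz⟩ := Finset.two_lt_card_iff.1
    (lt_trans (by norm_num) hcon)
  have : (Finset.univ.filter fun x : GG F => x ∈ Ce g ∧ ∃ n, x = n * g * n⁻¹) ⊆ {x, y, z} := by
    intro w hw
    simp only [Finset.mem_filter, Finset.mem_univ, true_and] at hx hy hz hw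
    by_contra hn
    simp only [Finset.mem_insert, Finset.mem_singleton, not_or] at hn
    exact hn.2.2 (hg.roots hx.1 hy.1 hz.1 hw.1 hxy hxz hyz (Ne.symm hn.1) (Ne.symm hn.2.1)
      (hcub _ hx.2) (hcub _ hy.2) (hcub _ hz.2) (hcub _ hw.2)).symm
  have := Finset.card_le_card this
  have h3 := Finset.card_le_three (a := x) (b := y) (c := z)
  omega

/-- The normalizer of the centralizer of `g`. -/
abbrev No (g : GG F) : Subgroup (GG F) := Subgroup.normalizer (Ce g : Set (GG F))

lemma mem_No {g n : GG F} : n ∈ No g ↔ ∀ c, c ∈ Ce g ↔ n * c * n⁻¹ ∈ Ce g :=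
  Subgroup.mem_normalizer_iff

lemma Ce_le_No (g : GG F) : Ce g ≤ No g := Subgroup.le_normalizer

lemma mem_Ce_conj {g c n : GG F} : n * c * n⁻¹ ∈ Ce (n * g * n⁻¹) ↔ c ∈ Ce g := by
  rw [mem_Ce, mem_Ce]
  constructor
  · intro h
    have : n * (g * c) * n⁻¹ = n * (c * g) * n⁻¹ := by
      calc _ = n * g * n⁻¹ * (n * c * n⁻¹) := by group
        _ = _ := by rw [h]; group
    exact mul_left_cancel (mul_right_cancel this)
  · intro h
    calc _ = n * (g * c) * n⁻¹ := by group
      _ = _ := by rw [h]; group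

/-- Conjugating one nontrivial element of the centralizer into it suffices to normalize it. -/
lemma NE.mem_No_of {g : GG F} (hg : NE g) {c n : GG F} (hc : c ∈ Ce g) (h1 : c ≠ 1)
    (hn : n * c * n⁻¹ ∈ Ce g) : n ∈ No g := by
  have h1' : n * c * n⁻¹ ≠ 1 := by rwa [ne_eq, conj_eq_one_iff]
  rw [mem_No]
  intro x
  rw [← hg.Ce_eq hc h1, ← mem_Ce_conj (g := c) (n := n), hg.Ce_eq hn h1', hg.Ce_eq hc h1]

lemma NE.ne_one {g : GG F} (hg : NE g) : g ≠ 1 := by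
  rintro rfl
  exact hg.sq_ne (by simp)

/-- The conjugates of `g` in its centralizer are roots of the cubic equation satisfied by `g`, so there
are at most three of them. -/
lemma NE.card_No_le {g : GG F} (hg : NE g) : Nat.card (No g) ≤ 3 * Nat.card (Ce g) := by
  have h := Finset.card_le_mul_card_image (f := fun n : GG F => n * g * n⁻¹)
    (Finset.univ.filter fun n => n ∈ No g) (Nat.card (Ce g)) (by
      intro x hx
      obtain ⟨n0, hn0, rfl⟩ := Finset.mem_image.1 hx
      rw [Nat.card_eq_fintype_card, Fintype.card_subtype]
      apply Finset.card_le_card_of_injOn (fun n => n0⁻¹ * n)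
      · intro n hn
        simp only [Finset.coe_filter, Finset.mem_filter, Finset.mem_univ, true_and,
          Set.mem_ofPred_eq] at hn ⊢
        rw [mem_Ce]
        have h2 := hn.2
        calc g * (n0⁻¹ * n) = n0⁻¹ * (n0 * g * n0⁻¹) * n := by group
          _ = n0⁻¹ * n * g := by rw [← h2]; group
      · intro a _ b _ hab
        exact mul_left_cancel hab)
  have h2 : ((Finset.univ.filter fun n => n ∈ No g).image fun n : GG F => n * g * n⁻¹).card ≤ 3 := by
    refine le_trans (Finset.card_le_card ?_) hg.card_conj
    intro x hx
    obtain ⟨n, hn, rfl⟩ := Finset.mem_image.1 hx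
    simp only [Finset.mem_filter, Finset.mem_univ, true_and] at hn ⊢
    exact ⟨(mem_No.1 hn g).1 (self_mem_Ce g), n, rfl⟩
  rw [← Fintype.card_subtype, ← Nat.card_eq_fintype_card] at h
  change Nat.card (No g) ≤ _ at h
  calc _ ≤ _ := h
    _ ≤ Nat.card (Ce g) * 3 := Nat.mul_le_mul_left _ h2
    _ = _ := mul_comm _ _

variable (F) in
/-- The elements without eigenvectors. -/
noncomputable def NEset : Finset (GG F) := Finset.univ.filter fun g => NE g

/-- Less than a third of the elements of the group have no eigenvector. -/
lemma card_NEset : 3 * (NEset F).card < Fintype.card (GG F) := by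
  have h1 := card_irr_el (F := F)
  have h2 := cc_univ_le (F := F)
  have : ({g : GG F | Fix (Subgroup.zpowers g) = ∅} : Finset (GG F)) = NEset F :=
    Finset.filter_congr fun g _ => fix_zpowers_iff
  rw [this] at h1
  zify
  linarith

lemma card_filter_mem (K : Subgroup (GG F)) :
    (Finset.univ.filter fun x => x ∈ K).card = Nat.card K := by
  rw [← Fintype.card_subtype, ← Nat.card_eq_fintype_card]

lemma NE.count {g : GG F} (hg : NE g) :
    Fintype.card (GG F) * (Nat.card (Ce g) - 1) ≤ Nat.card (No g) * (NEset F).card := by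
  have hc : ((Finset.univ.filter fun x => x ∈ Ce g).erase 1).card = Nat.card (Ce g) - 1 := by
    rw [Finset.card_erase_of_mem (by simp), card_filter_mem]
  have h := Finset.card_le_mul_card_image (f := fun p : GG F × GG F => p.1 * p.2 * p.1⁻¹)
    (Finset.univ ×ˢ (Finset.univ.filter fun x => x ∈ Ce g).erase 1) (Nat.card (No g)) (by
      intro x hx
      obtain ⟨⟨n0, c0⟩, hn0, rfl⟩ := Finset.mem_image.1 hx
      rw [← card_filter_mem]
      simp only [Finset.mem_product, Finset.mem_univ, Finset.mem_erase, Finset.mem_filter,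
        true_and] at hn0
      apply Finset.card_le_card_of_injOn (fun p => n0⁻¹ * p.1)
      · rintro ⟨n, c⟩ hn
        simp only [Finset.coe_filter, Finset.mem_product, Finset.mem_univ, Finset.mem_erase,
          Finset.mem_filter, true_and, Set.mem_ofPred_eq] at hn ⊢
        apply hg.mem_No_of hn.1.2 hn.1.1
        have : n0⁻¹ * n * c * (n0⁻¹ * n)⁻¹ = c0 := by
          calc _ = n0⁻¹ * (n * c * n⁻¹) * n0 := by group
            _ = c0 := by rw [hn.2]; group
        rw [this]; exact hn0.2
      · rintro ⟨n, c⟩ hn ⟨n', c'⟩ hn' hab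
        simp only [Finset.coe_filter, Set.mem_ofPred_eq] at hn hn'
        have h1 : n = n' := mul_left_cancel hab
        subst h1
        have := hn.2.trans hn'.2.symm
        rw [mul_left_cancel (mul_right_cancel this)])
  rw [Finset.card_product, hc, Finset.card_univ] at h
  refine h.trans (Nat.mul_le_mul_left _ (Finset.card_le_card ?_))
  intro x hx
  obtain ⟨⟨n, c⟩, hn, rfl⟩ := Finset.mem_image.1 hx
  simp only [Finset.mem_product, Finset.mem_univ, Finset.mem_erase, Finset.mem_filter,
    true_and] at hn
  rw [NEset, Finset.mem_filter]
  exact ⟨Finset.mem_univ _, (hg.of_mem hn.2 hn.1).conj n⟩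

lemma NE.three_le {g : GG F} (hg : NE g) : 3 ≤ Nat.card (Ce g) := by
  rw [← card_filter_mem]
  have : ({1, g, g⁻¹} : Finset (GG F)) ⊆ Finset.univ.filter fun x => x ∈ Ce g := by
    intro x hx
    simp only [Finset.mem_insert, Finset.mem_singleton] at hx
    rw [Finset.mem_filter]
    refine ⟨Finset.mem_univ _, ?_⟩
    rcases hx with rfl | rfl | rfl
    · exact one_mem _
    · exact self_mem_Ce _
    · exact inv_mem (self_mem_Ce _)
  refine le_trans (le_of_eq ?_) (Finset.card_le_card this)
  rw [Finset.card_eq_three.2 ⟨1, g, g⁻¹, hg.ne_one.symm, fun h => hg.ne_one ?_, fun h => hg.sq_ne ?_,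
    rfl⟩]
  · rw [eq_comm, inv_eq_one] at h; exact h
  · rw [mul_eq_one_iff_eq_inv]; exact h

/-- The centralizer has index exactly three in its normalizer: for a smaller index, the conjugates of
its nontrivial elements would make up at least a third of the group, against `card_NEset`. -/
lemma NE.card_No {g : GG F} (hg : NE g) : Nat.card (No g) = 3 * Nat.card (Ce g) := by
  have h1 := hg.card_No_le
  have h2 := hg.count
  have h3 := hg.three_le
  have h4 := card_NEset (F := F)
  obtain ⟨k, hk⟩ := Subgroup.card_dvd_of_le (Ce_le_No g)
  have hG : 0 < Fintype.card (GG F) := Fintype.card_pos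
  have h5 : 3 * (Nat.card (Ce g) - 1) < Nat.card (No g) := by
    by_contra! hle
    have h6 : Nat.card (No g) * Fintype.card (GG F) ≤ 3 * (Nat.card (Ce g) - 1) * Fintype.card (GG F) :=
      Nat.mul_le_mul_right _ hle
    have h7 : 0 < Nat.card (No g) := Nat.card_pos
    have h8 : Nat.card (No g) * (3 * (NEset F).card) < Nat.card (No g) * Fintype.card (GG F) :=
      Nat.mul_lt_mul_of_pos_left h4 h7
    nlinarith
  generalize Nat.card (Ce g) = c at *
  generalize Nat.card (No g) = n at *
  subst hk
  have : 2 < k := by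
    by_contra! hk2
    have : c * k ≤ c * 2 := Nat.mul_le_mul_left _ hk2
    omega
  have : c * 3 ≤ c * k := Nat.mul_le_mul_left _ this
  omega

lemma NE.cube_one {g : GG F} (hg : NE g) {n : GG F} (hn : n ∈ No g) (hc : n ∉ Ce g) : n ^ 3 = 1 := by
  have hi : ((Ce g).subgroupOf (No g)).index = 3 := by
    have := ((Ce g).subgroupOf (No g)).index_mul_card
    rw [hg.card_No, Nat.card_congr (Subgroup.subgroupOfEquivOfLe (Ce_le_No g)).toEquiv] at this
    exact Nat.eq_of_mul_eq_mul_right Nat.card_pos this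
  have h3 := Subgroup.pow_index_mem ((Ce g).subgroupOf (No g)) ⟨n, hn⟩
  rw [hi] at h3
  have h3 : n ^ 3 ∈ Ce g := h3
  by_contra h1
  apply hc
  rw [← hg.Ce_eq h3 h1, mem_Ce]
  group

/-- `H` normalizes the centralizer `C` of an element without eigenvectors and meets it
nontrivially. -/
def ST (H C : Subgroup (GG F)) : Prop :=
  (∃ g, NE g ∧ C = Ce g) ∧ H ≤ Subgroup.normalizer (C : Set (GG F)) ∧ H ⊓ C ≠ ⊥

lemma ST.exists {H C : Subgroup (GG F)} (h : ST H C) : ∃ c ∈ H, NE c ∧ C = Ce c := by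
  obtain ⟨⟨g, hg, rfl⟩, -, h⟩ := h
  obtain ⟨⟨c, hcH, hcC⟩, h1⟩ := Subgroup.ne_bot_iff_exists_ne_one.1 h
  have h1 : c ≠ 1 := fun h => h1 (Subtype.ext h)
  exact ⟨c, hcH, hg.of_mem hcC h1, (hg.Ce_eq hcC h1).symm⟩

lemma ST.irr {H C : Subgroup (GG F)} (h : ST H C) : Fix H = ∅ := by
  obtain ⟨c, hcH, hc, -⟩ := h.exists
  rw [← fix_zpowers_iff] at hc
  rw [← Finset.subset_empty, ← hc]
  exact Fix_anti (Subgroup.zpowers_le.2 hcH)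

lemma ST.unique {H C C' : Subgroup (GG F)} (h : ST H C) (h' : ST H C') : C = C' := by
  obtain ⟨g, hgH, hg, rfl⟩ := h.exists
  obtain ⟨g', hgH', hg', rfl⟩ := h'.exists
  have hn : g' ∈ No g := h.2.1 hgH'
  by_cases hm : g' ∈ Ce g
  · exact (hg.Ce_eq hm hg'.ne_one).symm
  · exact absurd (hg.cube_one hn hm) hg'.cube_ne

lemma ST.not_FT {H C : Subgroup (GG F)} (h : ST H C) (P : Fin 3 → Pt F) : ¬ FT H P := by
  rintro ⟨hP, hs, -⟩
  obtain ⟨c, hcH, hc, -⟩ := h.exists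
  have h6 := frame_pow_six (hs hcH)
  obtain ⟨e, he, hPe⟩ := hP.onb
  obtain ⟨a, ha⟩ := ptStab_eigen he hPe h6
  have h61 : c ^ 6 = 1 := by
    by_contra h1
    exact hc.of_mem (pow_mem (self_mem_Ce c) 6) h1 _ (he.ne0 0) _ (ha 0)
  refine (hc.of_mem (pow_mem (self_mem_Ce c) 3) hc.cube_ne).sq_ne ?_
  rw [← pow_add]; exact h61

lemma not_ST_top (C : Subgroup (GG F)) : ¬ ST ⊤ C := by
  intro h
  obtain ⟨⟨g, hg, rfl⟩, hN, -⟩ := h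
  obtain ⟨p, hp0, hp⟩ := exists_iso_vec (F := F)
  have ht1 := Tv_ne_one hp0 hp (star_one F) one_ne_zero
  have htt : Tv p 1 hp (star_one F) * Tv p 1 hp (star_one F) = 1 := by
    apply g_ext
    intro x
    rw [mul_smul, Tv_smul, Tv_smul, B_add_left, B_smul_left, hp, one_smul, mul_zero, add_zero,
      add_assoc, ← add_smul, add_self', zero_smul, add_zero]
  have hn : Tv p 1 hp (star_one F) ∉ Ce g := fun hc => (hg.of_mem hc ht1).sq_ne htt
  have h3 := hg.cube_one (hN (Subgroup.mem_top _)) hn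
  rw [pow_three, htt, mul_one] at h3
  exact ht1 h3

/-- The Möbius sum over the subgroups of Singer type. -/
lemma sum_singer {m : Subgroup (GG F) → ℤ}
    (hm : ∀ K : Subgroup (GG F), ∑ H with H ≤ K, m H = if K = ⊥ then 1 else 0) :
    ∑ H with ∃ C, ST H C, m H = (NEset F).card := by
  have hC : ∀ C : Subgroup (GG F), (∃ g, NE g ∧ C = Ce g) →
      ∑ H with ST H C, m H = ((Finset.univ.filter fun x => x ∈ C ∧ NE x).card : ℤ) := by
    rintro C ⟨g, hg, rfl⟩
    have h1 := sum_index_three hm (Ce_le_No g) (fun h => hg.ne_one (by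
      rw [← Subgroup.mem_bot, ← h]; exact self_mem_Ce g)) hg.card_No (fun n hn hc => hg.cube_one hn hc)
    have h2 : (Finset.univ.filter fun x => x ∈ Ce g ∧ NE x) =
        (Finset.univ.filter fun x => x ∈ Ce g).erase 1 := by
      ext x
      simp only [Finset.mem_filter, Finset.mem_univ, true_and, Finset.mem_erase]
      exact ⟨fun h => ⟨h.2.ne_one, h.1⟩, fun h => ⟨h.2, hg.of_mem h.2 h.1⟩⟩
    rw [h2, Finset.card_erase_of_mem (by simp), card_filter_mem, Nat.cast_sub Nat.card_pos,
      Nat.cast_one, ← h1]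
    apply Finset.sum_congr _ fun _ _ => rfl
    apply Finset.filter_congr
    intro H _
    exact ⟨fun h => h.2, fun h => ⟨⟨g, hg, rfl⟩, h⟩⟩
  have h1 : (Finset.univ.filter fun H : Subgroup (GG F) => ∃ C, ST H C) =
      (Finset.univ.filter fun C : Subgroup (GG F) => ∃ g, NE g ∧ C = Ce g).biUnion fun C =>
        Finset.univ.filter fun H => ST H C := by
    ext H
    simp only [Finset.mem_filter, Finset.mem_univ, true_and, Finset.mem_biUnion]
    exact ⟨fun ⟨C, h⟩ => ⟨C, h.1, h⟩, fun ⟨C, _, h⟩ => ⟨C, h⟩⟩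
  have h2 : NEset F =
      (Finset.univ.filter fun C : Subgroup (GG F) => ∃ g, NE g ∧ C = Ce g).biUnion fun C =>
        Finset.univ.filter fun x => x ∈ C ∧ NE x := by
    ext x
    simp only [NEset, Finset.mem_filter, Finset.mem_univ, true_and, Finset.mem_biUnion]
    exact ⟨fun h => ⟨Ce x, ⟨x, h, rfl⟩, self_mem_Ce x, h⟩, fun ⟨C, _, _, h⟩ => h⟩
  rw [h1, h2, Finset.sum_biUnion, Finset.card_biUnion]
  · push_cast
    exact Finset.sum_congr rfl fun C hc => hC C (Finset.mem_filter.1 hc).2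
  · intro C hC C' hC' hne
    simp only [Finset.coe_filter, Finset.mem_univ, true_and, Set.mem_ofPred_eq] at hC hC'
    rw [Function.onFun, Finset.disjoint_left]
    intro x hx hx'
    simp only [Finset.mem_filter, Finset.mem_univ, true_and] at hx hx'
    obtain ⟨g, hg, rfl⟩ := hC
    obtain ⟨g', hg', rfl⟩ := hC'
    exact hne ((hg.Ce_eq hx.1 hx.2.ne_one).symm.trans (hg'.Ce_eq hx'.1 hx.2.ne_one))
  · intro C _ C' _ hne
    rw [Function.onFun, Finset.disjoint_left]
    intro H hH hH'
    simp only [Finset.mem_filter, Finset.mem_univ, true_and] at hH hH'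
    exact hne (hH.unique hH')

end Singer

/-! ### Finite groups with abelian centralizers -/

section AbelianCentralizers

variable {O : Type} [Group O] [Fintype O]

/-- The centralizer of an element. -/
abbrev Cn (g : O) : Subgroup O := Subgroup.centralizer {g}

/-- The normalizer of the centralizer of an element. -/
abbrev Nn (g : O) : Subgroup O := Subgroup.normalizer (Cn g : Set O)

lemma mem_Cn {g c : O} : c ∈ Cn g ↔ g * c = c * g := by
  rw [Subgroup.mem_centralizer_singleton_iff, eq_comm]

lemma self_mem_Cn (g : O) : g ∈ Cn g := mem_Cn.2 rfl

lemma mem_Cn_conj {g c n : O} : n * c * n⁻¹ ∈ Cn (n * g * n⁻¹) ↔ c ∈ Cn g := by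
  rw [mem_Cn, mem_Cn]
  constructor
  · intro h
    have : n * (g * c) * n⁻¹ = n * (c * g) * n⁻¹ := by
      calc _ = n * g * n⁻¹ * (n * c * n⁻¹) := by group
        _ = _ := by rw [h]; group
    exact mul_left_cancel (mul_right_cancel this)
  · intro h
    calc _ = n * (g * c) * n⁻¹ := by group
      _ = _ := by rw [h]; group

/-- `Z` is a central subgroup and the centralizer of every element outside of `Z` is abelian. -/
def CA (Z : Subgroup O) : Prop :=
  (∀ z ∈ Z, ∀ x, z * x = x * z) ∧ ∀ g, g ∉ Z → ∀ x ∈ Cn g, ∀ y ∈ Cn g, x * y = y * x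

variable {Z : Subgroup O}

lemma CA.conj_mem (h : CA Z) {x n : O} : n * x * n⁻¹ ∈ Z ↔ x ∈ Z := by
  constructor
  · intro hx
    have : x = n * x * n⁻¹ := by
      have h1 := h.1 _ hx n
      have h2 : n * x = n * (n * x * n⁻¹) := by rw [← h1]; group
      exact mul_left_cancel h2
    rwa [this]
  · intro hx
    rwa [← h.1 x hx n, mul_inv_cancel_right]

lemma CA.Cn_eq (h : CA Z) {g c : O} (hg : g ∉ Z) (hc : c ∉ Z) (hm : c ∈ Cn g) : Cn c = Cn g := by
  apply le_antisymm
  · intro x hx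
    exact mem_Cn.2 (h.2 c hc _ (mem_Cn.2 (mem_Cn.1 hm).symm) _ hx)
  · intro x hx
    exact mem_Cn.2 (h.2 g hg _ hm _ hx)

lemma CA.mem_Nn_of (h : CA Z) {g c n : O} (hg : g ∉ Z) (hc : c ∈ Cn g) (hcZ : c ∉ Z)
    (hn : n * c * n⁻¹ ∈ Cn g) : n ∈ Nn g := by
  rw [Subgroup.mem_normalizer_iff]
  intro x
  rw [← h.Cn_eq hg hcZ hc, ← mem_Cn_conj (g := c) (n := n),
    h.Cn_eq hg (fun hh => hcZ (h.conj_mem.1 hh)) hn, h.Cn_eq hg hcZ hc]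

variable (Z) in
/-- The elements outside of `Z` that are conjugate into the centralizer of `g`. -/
noncomputable def cls (g : O) : Finset O :=
  Finset.univ.filter fun x => x ∉ Z ∧ ∃ n : O, n * x * n⁻¹ ∈ Cn g

lemma mem_cls {g x : O} : x ∈ cls Z g ↔ x ∉ Z ∧ ∃ n : O, n * x * n⁻¹ ∈ Cn g := by
  simp [cls]

lemma self_mem_cls {g : O} (hg : g ∉ Z) : g ∈ cls Z g :=
  mem_cls.2 ⟨hg, 1, by simpa using self_mem_Cn g⟩

lemma CA.cls_eq (h : CA Z) {g x : O} (hg : g ∉ Z) (hx : x ∈ cls Z g) : cls Z g = cls Z x := by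
  obtain ⟨hxZ, n, hn⟩ := mem_cls.1 hx
  have e : Cn (n * x * n⁻¹) = Cn g := h.Cn_eq hg (fun hh => hxZ (h.conj_mem.1 hh)) hn
  ext y
  rw [mem_cls, mem_cls, ← e]
  refine and_congr_right fun _ => ⟨?_, ?_⟩
  · rintro ⟨m, hm⟩
    refine ⟨n⁻¹ * m, ?_⟩
    rw [← mem_Cn_conj (n := n)]
    convert hm using 1
    group
  · rintro ⟨m, hm⟩
    refine ⟨n * m, ?_⟩
    rw [← mem_Cn_conj (n := n)] at hm
    convert hm using 1
    group

lemma CA.cls_disj (h : CA Z) {g x : O} (hg : g ∉ Z) (hx : x ∉ Z) (hn : x ∉ cls Z g) :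
    Disjoint (cls Z g) (cls Z x) := by
  rw [Finset.disjoint_left]
  intro y hy hy'
  apply hn
  rw [h.cls_eq hg hy, ← h.cls_eq hx hy']
  exact self_mem_cls hx

lemma card_filter_mem' (K : Subgroup O) :
    (Finset.univ.filter fun x => x ∈ K).card = Nat.card K := by
  rw [← Fintype.card_subtype, ← Nat.card_eq_fintype_card]

lemma CA.card_cls (h : CA Z) {g : O} (hg : g ∉ Z) :
    (cls Z g).card * Nat.card (Nn g) = Fintype.card O * (Nat.card (Cn g) - Nat.card Z) := by
  have hc : ((Finset.univ.filter fun x => x ∈ Cn g) \ (Finset.univ.filter fun x => x ∈ Z)).card =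
      Nat.card (Cn g) - Nat.card Z := by
    rw [Finset.card_sdiff_of_subset, card_filter_mem', card_filter_mem']
    intro x hx
    simp only [Finset.mem_filter, Finset.mem_univ, true_and] at hx ⊢
    exact mem_Cn.2 (h.1 x hx g).symm
  rw [← hc, ← Finset.card_univ (α := O), ← Finset.card_product]
  rw [Finset.card_eq_sum_card_fiberwise (f := fun p : O × O => p.1⁻¹ * p.2 * p.1) (t := cls Z g)]
  · symm
    rw [← smul_eq_mul, ← Finset.sum_const]
    refine Finset.sum_congr rfl fun x hx => ?_
    obtain ⟨hxZ, n0, hn0⟩ := mem_cls.1 hx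
    have hnZ : n0 * x * n0⁻¹ ∉ Z := fun hh => hxZ (h.conj_mem.1 hh)
    rw [← card_filter_mem']
    apply Finset.card_nbij' (fun p => p.1 * n0⁻¹)
      (fun m => (m * n0, m * (n0 * x * n0⁻¹) * m⁻¹))
    · rintro ⟨n, c⟩ hn
      simp only [Finset.coe_filter, Finset.mem_product, Finset.mem_univ, Finset.mem_sdiff,
        Finset.mem_filter, true_and, Set.mem_ofPred_eq] at hn ⊢
      apply h.mem_Nn_of hg hn0 hnZ
      convert hn.1.1 using 1
      rw [← hn.2]; group
    · intro m hm
      simp only [Finset.coe_filter, Finset.mem_product, Finset.mem_univ, Finset.mem_sdiff,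
        Finset.mem_filter, true_and, Set.mem_ofPred_eq] at hm ⊢
      refine ⟨⟨(Subgroup.mem_normalizer_iff.1 hm _).1 hn0, fun hh => hnZ (h.conj_mem.1 hh)⟩, ?_⟩
      group
    · rintro ⟨n, c⟩ hn
      simp only [Finset.coe_filter, Set.mem_ofPred_eq] at hn
      have := hn.2
      subst this
      simp only [Prod.mk.injEq]
      constructor <;> group
    · intro m _
      simp
  · rintro ⟨n, c⟩ hn
    simp only [Finset.coe_product, Set.mem_prod, Finset.mem_coe, Finset.mem_univ,
      Finset.mem_sdiff, Finset.mem_filter, true_and] at hn ⊢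
    have e : n * (n⁻¹ * c * n) * n⁻¹ = c := by group
    refine mem_cls.2 ⟨fun hh => hn.2 ?_, n, ?_⟩
    · rw [← e]; exact h.conj_mem.2 hh
    · rw [e]; exact hn.1

lemma cls_subset (g : O) : cls Z g ⊆ Finset.univ \ (Finset.univ.filter fun x => x ∈ Z) := by
  intro x hx
  simp [(mem_cls.1 hx).1]

lemma card_compl_sub (Z : Subgroup O) :
    (Finset.univ \ (Finset.univ.filter fun x => x ∈ Z)).card = Fintype.card O - Nat.card Z := by
  rw [Finset.card_sdiff_of_subset (Finset.subset_univ _), card_filter_mem', Finset.card_univ]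

/-- Self-normalizing centralizers: two classes of elements would be too many. -/
lemma CA.comm (h : CA Z) (hodd : Odd (Fintype.card O)) (hN : ∀ g, g ∉ Z → Nn g ≤ Cn g) (x y : O) :
    x * y = y * x := by
  by_cases hg : x ∈ Z
  · exact h.1 x hg y
  have key : ∀ g, g ∉ Z → (cls Z g).card * Nat.card (Cn g) =
      Fintype.card O * (Nat.card (Cn g) - Nat.card Z) ∧ 3 * Nat.card Z ≤ Nat.card (Cn g) := by
    intro g hg
    have h1 := h.card_cls hg
    rw [le_antisymm (hN g hg) Subgroup.le_normalizer] at h1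
    refine ⟨h1, ?_⟩
    have hle : Z ≤ Cn g := fun x hx => mem_Cn.2 (h.1 x hx g).symm
    obtain ⟨k, hk⟩ := Subgroup.card_dvd_of_le hle
    have ho : Odd (Nat.card (Cn g)) := by
      apply hodd.of_dvd_nat
      rw [← Nat.card_eq_fintype_card]
      exact Subgroup.card_subgroup_dvd_card _
    rw [hk] at ho ⊢
    have hk1 : k ≠ 1 := by
      rintro rfl
      rw [mul_one] at hk
      have := Subgroup.eq_of_le_of_card_ge hle hk.le
      exact hg (this ▸ self_mem_Cn g)
    have := (Nat.odd_mul.1 ho).2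
    obtain ⟨j, rfl⟩ := this
    nlinarith [Nat.card_pos (α := Z), show 1 ≤ j by omega]
  have key2 : ∀ g, g ∉ Z → 2 * Fintype.card O ≤ 3 * (cls Z g).card := by
    intro g hg
    obtain ⟨h1, h2⟩ := key g hg
    have h3 : 0 < Nat.card (Cn g) := Nat.card_pos
    obtain ⟨d, hd⟩ := Nat.exists_eq_add_of_le (le_trans (by omega) h2 : Nat.card Z ≤ Nat.card (Cn g))
    rw [hd, Nat.add_sub_cancel_left, ← hd] at h1
    have h4 : 2 * Nat.card (Cn g) ≤ 3 * d := by omega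
    by_contra! hlt
    have h5 : 3 * (cls Z g).card * Nat.card (Cn g) < 2 * Fintype.card O * Nat.card (Cn g) :=
      Nat.mul_lt_mul_of_pos_right hlt h3
    nlinarith [Nat.mul_le_mul_left (Fintype.card O) h4]
  have hall : ∀ z, z ∉ Z → z ∈ cls Z x := by
    intro z hz
    by_contra hzn
    have h1 := Finset.card_union_of_disjoint (h.cls_disj hg hz hzn)
    have h2 := Finset.card_le_univ (cls Z x ∪ cls Z z)
    have h3 := key2 x hg
    have h4 := key2 z hz
    have : 0 < Fintype.card O := Fintype.card_pos
    omega
  have he : cls Z x = Finset.univ \ (Finset.univ.filter fun x => x ∈ Z) := by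
    apply subset_antisymm (cls_subset x)
    intro z hz
    exact hall z (by simpa using hz)
  have h1 := (key x hg).1
  have h2 := (key x hg).2
  rw [he, card_compl_sub] at h1
  have hZ : Nat.card Z ≤ Fintype.card O := by
    rw [← Nat.card_eq_fintype_card]; exact Subgroup.card_le_card_group Z
  have hZ0 : 0 < Nat.card Z := Nat.card_pos
  have htop : Cn x = ⊤ := by
    apply Subgroup.eq_top_of_card_eq
    rw [Nat.card_eq_fintype_card (α := O)]
    zify [hZ, (by omega : Nat.card Z ≤ Nat.card (Cn x))] at h1
    have : (Nat.card Z : ℤ) * Nat.card (Cn x) = Nat.card Z * Fintype.card O := by linarith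
    exact_mod_cast mul_left_cancel₀ (by exact_mod_cast hZ0.ne') this
  exact mem_Cn.1 (htop ▸ Subgroup.mem_top y)

/-- The size `u` of the class of `g` for `Z = 1`, in terms of the order `a` of the centralizer of `g`
and the number `k` of its conjugates. The two cases are those of a centralizer of index one and of
index three in its normalizer. -/
lemma CA.data (h : CA (⊥ : Subgroup O)) (hodd : Odd (Fintype.card O))
    (hN : ∀ g : O, g ≠ 1 → Nat.card (Nn g) ≤ 3 * Nat.card (Cn g)) {g : O} (hg : g ≠ 1) :
    ∃ u a k : ℕ, u = (cls (⊥ : Subgroup O) g).card ∧ a = Nat.card (Cn g) ∧ 3 ≤ a ∧ Odd a ∧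
      0 < k ∧ (k = 1 → Nn g = ⊤) ∧ ((u + k = Fintype.card O ∧ Fintype.card O = a * k) ∨
        (3 * (u + k) = Fintype.card O ∧ Fintype.card O = 3 * a * k ∧ 5 ≤ a)) := by
  have hg' : g ∉ (⊥ : Subgroup O) := by simpa using hg
  have h1 := h.card_cls hg'
  have h2 := (Nn g).card_mul_index
  rw [Nat.card_eq_fintype_card (α := O)] at h2
  have hCN : Cn g ≤ Nn g := Subgroup.le_normalizer
  obtain ⟨w, hw⟩ := Subgroup.card_dvd_of_le hCN
  have hoN : Odd (Nat.card (Nn g)) := hodd.of_dvd_nat ⟨_, h2.symm⟩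
  rw [hw] at hoN
  obtain ⟨hoa, how⟩ := Nat.odd_mul.1 hoN
  have ha1 : Nat.card (Cn g) ≠ 1 := by
    intro h
    rw [Subgroup.card_eq_one] at h
    exact hg' (h ▸ self_mem_Cn g)
  have ha3 : 3 ≤ Nat.card (Cn g) := by
    obtain ⟨j, hj⟩ := hoa
    omega
  have hk0 : 0 < (Nn g).index := Nat.pos_of_ne_zero Subgroup.index_ne_zero_of_finite
  have hb : Nat.card (⊥ : Subgroup O) = 1 := Subgroup.card_bot
  have hw3 : w ≤ 3 := by
    have := hN g hg
    rw [hw, mul_comm] at this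
    exact Nat.le_of_mul_le_mul_right this (by omega)
  have h4 : (cls (⊥ : Subgroup O) g).card + (Nn g).index = (Nn g).index * Nat.card (Cn g) := by
    rw [← h2, hb, mul_comm, mul_assoc] at h1
    have := Nat.eq_of_mul_eq_mul_left Nat.card_pos h1
    rw [this, Nat.mul_sub, mul_one]
    exact Nat.sub_add_cancel (Nat.le_mul_of_pos_right _ (by omega))
  refine ⟨_, _, (Nn g).index, rfl, rfl, ha3, hoa, hk0, fun h => Subgroup.index_eq_one.1 h, ?_⟩
  have hw13 : w = 1 ∨ w = 3 := by
    obtain ⟨j, hj⟩ := how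
    omega
  rcases hw13 with rfl | rfl
  · left
    rw [← h2, hw, h4]
    constructor <;> ring
  · right
    rw [h4, ← h2, hw]
    refine ⟨by ring, by ring, ?_⟩
    by_contra! hlt
    have ha : Nat.card (Cn g) = 3 := by
      obtain ⟨j, hj⟩ := hoa
      omega
    rw [ha] at hw
    have : Fact (Nat.Prime 3) := ⟨Nat.prime_three⟩
    have hc := (IsPGroup.isMulCommutative_of_card_eq_prime_sq (p := 3) (G := Nn g)
      (by rw [hw]; rfl)).is_comm.comm
    have : Nn g ≤ Cn g := by
      intro n hn
      have := hc ⟨g, hCN (self_mem_Cn g)⟩ ⟨n, hn⟩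
      exact mem_Cn.2 (congrArg Subtype.val this)
    have := Subgroup.card_le_of_le this
    omega

lemma solvable_of_Nn_top (h : CA (⊥ : Subgroup O)) (hodd : Odd (Fintype.card O)) {g : O}
    (hN : Nat.card (Nn g) ≤ 3 * Nat.card (Cn g)) (hg : g ≠ 1) (ht : Nn g = ⊤) : Group.IsSolvable O := by
  have hn : (Cn g).Normal := Subgroup.normalizer_eq_top_iff.1 ht
  have h1 : Group.IsSolvable (Cn g) := Group.isSolvable_of_comm fun x y =>
    Subtype.ext (h.2 g (by simpa using hg) _ x.2 _ y.2)
  have h2 := (Cn g).card_mul_index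
  rw [ht, Subgroup.card_top, ← h2, mul_comm 3] at hN
  have h3 := Nat.le_of_mul_le_mul_left hN Nat.card_pos
  have h4 : Odd (Cn g).index := hodd.of_dvd_nat (by
    rw [← Nat.card_eq_fintype_card]; exact ⟨_, by rw [mul_comm]; exact h2.symm⟩)
  have h5 : Group.IsSolvable (O ⧸ Cn g) := by
    have hi : Nat.card (O ⧸ Cn g) = (Cn g).index := rfl
    have h13 : (Cn g).index = 1 ∨ (Cn g).index = 3 := by
      obtain ⟨j, hj⟩ := h4
      omega
    rcases h13 with h13 | h13
    · rw [h13, Nat.card_eq_one_iff_unique] at hi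
      obtain ⟨hi, -⟩ := hi
      exact Group.isSolvable_of_comm fun x y => Subsingleton.elim _ _
    · rw [h13] at hi
      have : Fact (Nat.Prime 3) := ⟨Nat.prime_three⟩
      have := isCyclic_of_prime_card hi
      exact Group.isSolvable_of_comm fun x y => by
        exact (IsCyclic.isMulCommutative (α := O ⧸ Cn g)).is_comm.comm x y
  exact (Group.isSolvable_iff_subgroup_quotient (Cn g)).2 ⟨h1, h5⟩

/-- A group of odd order in which the centralizers of nontrivial elements are abelian, of index at
most three in their normalizers, is solvable: otherwise the classes of these centralizers, whose
sizes are `|O| - k` or `|O| / 3 - k` with `k` the number of conjugates of the centralizer, cannot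
add up to `|O| - 1`. -/
lemma CA.solvable (h : CA (⊥ : Subgroup O)) (hodd : Odd (Fintype.card O))
    (hN : ∀ g : O, g ≠ 1 → Nat.card (Nn g) ≤ 3 * Nat.card (Cn g)) : Group.IsSolvable O := by
  by_cases ht : ∃ g : O, g ≠ 1 ∧ Nn g = ⊤
  · obtain ⟨g, hg, ht⟩ := ht
    exact solvable_of_Nn_top h hodd (hN g hg) hg ht
  by_cases htr : ∀ g : O, g = 1
  · exact Group.isSolvable_of_comm fun x y => by rw [htr x, htr y]
  push Not at ht htr
  exfalso
  have key : ∀ g : O, g ≠ 1 → ∃ k, 2 ≤ k ∧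
      (((cls (⊥ : Subgroup O) g).card + k = Fintype.card O ∧
          (3 * k = Fintype.card O ∨ 5 * k ≤ Fintype.card O)) ∨
        (3 * ((cls (⊥ : Subgroup O) g).card + k) = Fintype.card O ∧ 15 * k ≤ Fintype.card O)) := by
    intro g hg
    obtain ⟨u, a, k, rfl, -, ha3, ho, hk, hk1, hh⟩ := h.data hodd hN hg
    have : k ≠ 1 := fun h => ht g hg (hk1 h)
    refine ⟨k, by omega, ?_⟩
    rcases hh with ⟨h1, h2⟩ | ⟨h1, h2, h3⟩
    · left
      refine ⟨h1, ?_⟩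
      obtain ⟨j, rfl⟩ := ho
      rw [h2]
      by_cases hj : j = 1
      · left; subst hj; rfl
      · right; exact Nat.mul_le_mul_right k (by omega)
    · right
      refine ⟨h1, ?_⟩
      rw [h2]
      exact Nat.mul_le_mul_right k (by omega)
  have cover : ∀ U : Finset O, 1 ∉ U → U.card + 1 ≤ Fintype.card O ∧
      (U.card + 1 = Fintype.card O ∨ ∃ g, g ≠ 1 ∧ g ∉ U) := by
    intro U hU
    have h1 : (insert 1 U).card = U.card + 1 := Finset.card_insert_of_notMem hU
    refine ⟨by rw [← h1]; exact Finset.card_le_univ _, ?_⟩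
    by_cases he : insert 1 U = Finset.univ
    · left; rw [← h1, he, Finset.card_univ]
    · right
      by_contra! hc
      apply he
      ext x
      simp only [Finset.mem_insert, Finset.mem_univ, iff_true]
      by_cases hx : x = 1
      · exact Or.inl hx
      · exact Or.inr (hc x hx)
  have hb : ∀ {g : O}, g ≠ 1 → g ∉ (⊥ : Subgroup O) := fun hg => by simpa using hg
  have h1 : ∀ g, (1 : O) ∉ cls (⊥ : Subgroup O) g := fun g hg => (mem_cls.1 hg).1 (one_mem _)
  obtain ⟨g1, hg1⟩ := htr
  obtain ⟨k1, hk1, H1⟩ := key g1 hg1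
  obtain ⟨L1, ⟨E1⟩ | ⟨g2, hg2, hn2⟩⟩ := cover _ (h1 g1)
  · omega
  obtain ⟨k2, hk2, H2⟩ := key g2 hg2
  have d12 := h.cls_disj (hb hg1) (hb hg2) hn2
  have c2 := Finset.card_union_of_disjoint d12
  obtain ⟨L2, ⟨E2⟩ | ⟨g3, hg3, hn3⟩⟩ := cover (cls ⊥ g1 ∪ cls ⊥ g2) (by simp [h1])
  · omega
  obtain ⟨k3, hk3, H3⟩ := key g3 hg3
  rw [Finset.notMem_union] at hn3
  have d3 := Finset.disjoint_union_left.2 ⟨h.cls_disj (hb hg1) (hb hg3) hn3.1,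
    h.cls_disj (hb hg2) (hb hg3) hn3.2⟩
  have c3 := Finset.card_union_of_disjoint d3
  obtain ⟨L3, ⟨E3⟩ | ⟨g4, hg4, hn4⟩⟩ := cover (cls ⊥ g1 ∪ cls ⊥ g2 ∪ cls ⊥ g3) (by simp [h1])
  · omega
  obtain ⟨k4, hk4, H4⟩ := key g4 hg4
  rw [Finset.notMem_union, Finset.notMem_union] at hn4
  have d4 := Finset.disjoint_union_left.2 ⟨Finset.disjoint_union_left.2
    ⟨h.cls_disj (hb hg1) (hb hg4) hn4.1.1, h.cls_disj (hb hg2) (hb hg4) hn4.1.2⟩,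
    h.cls_disj (hb hg3) (hb hg4) hn4.2⟩
  have c4 := Finset.card_union_of_disjoint d4
  have L4 := (cover (cls ⊥ g1 ∪ cls ⊥ g2 ∪ cls ⊥ g3 ∪ cls ⊥ g4) (by simp [h1])).1
  omega

/-- A nontrivial solvable normal subgroup contains a nontrivial abelian normal subgroup. -/
lemma exists_abelian_normal {G : Type} [Group G] {H K : Subgroup G} (hKH : K ≤ H)
    (hn : ∀ h ∈ H, ∀ k ∈ K, h * k * h⁻¹ ∈ K) (hK : K ≠ ⊥) (hs : Group.IsSolvable K) :
    ∃ M ≤ H, M ≠ ⊥ ∧ (∀ h ∈ H, ∀ k ∈ M, h * k * h⁻¹ ∈ M) ∧ ∀ x ∈ M, ∀ y ∈ M, x * y = y * x := by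
  obtain ⟨n, hbot, hmin⟩ : ∃ n, derivedSeries K n = ⊥ ∧ ∀ m < n, derivedSeries K m ≠ ⊥ :=
    ⟨Nat.find hs.solvable, Nat.find_spec hs.solvable, fun m hm => Nat.find_min hs.solvable hm⟩
  obtain _ | n := n
  · exfalso
    rw [derivedSeries_zero] at hbot
    refine hK ((Subgroup.eq_bot_iff_forall K).2 fun x hx => ?_)
    have h1 : (⟨x, hx⟩ : K) ∈ (⊥ : Subgroup K) := hbot ▸ Subgroup.mem_top _
    exact congrArg Subtype.val (Subgroup.mem_bot.1 h1)
  refine ⟨(derivedSeries K n).map K.subtype, ?_, ?_, ?_, ?_⟩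
  · exact (Subgroup.map_subtype_le _).trans hKH
  · rw [ne_eq, Subgroup.map_eq_bot_iff_of_injective _ K.subtype_injective]
    exact hmin n (Nat.lt_succ_self n)
  · intro h hh
    have : ∀ m, ((derivedSeries K m).map K.subtype).map (MulAut.conj h).toMonoidHom ≤
        (derivedSeries K m).map K.subtype := by
      intro m
      induction m with
      | zero =>
        rintro x ⟨y, ⟨⟨k, hk⟩, -, rfl⟩, rfl⟩
        exact ⟨⟨_, hn h hh k hk⟩, Subgroup.mem_top _, rfl⟩
      | succ m ih =>
        rw [derivedSeries_succ, Subgroup.map_commutator, Subgroup.map_commutator]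
        exact Subgroup.commutator_mono ih ih
    exact fun k hk => this n ⟨k, hk, rfl⟩
  · rintro x ⟨x, hx, rfl⟩ y ⟨y, hy, rfl⟩
    rw [derivedSeries_succ, Subgroup.commutator_eq_bot_iff_le_centralizer] at hbot
    exact congrArg Subtype.val ((Subgroup.mem_centralizer_iff.1 (hbot hy)) x hx)

end AbelianCentralizers

/-! ### Subgroups of odd order -/

section Odd

variable {F : Type} [Field F] [StarRing F] [HermField F]

lemma zero_of_B3 {a b c z : Vec F} (hD : D a b c ≠ 0) (ha : B z a = 0) (hb : B z b = 0)
    (hc : B z c = 0) : z = 0 := by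
  have hp : pole a b ≠ 0 := pole_ne_of_D (x := c) (by rwa [← D_rot])
  obtain ⟨d, rfl⟩ := eq_smul_pole hp ha hb
  rw [B_smul_left, ← B_star, B_pole, D_rot, D_rot] at hc
  rcases mul_eq_zero.1 hc with rfl | h
  · exact zero_smul _ _
  · exact absurd h (star_ne0 hD)

lemma eq_of_B3 {a b c x z : Vec F} (hD : D a b c ≠ 0) (ha : B x a = B z a) (hb : B x b = B z b)
    (hc : B x c = B z c) : x = z := by
  have h2 : ∀ w, B x w = B z w → B (x + (1 : F) • z) w = 0 := by
    intro w h
    rw [B_add_left, h, B_smul_left, one_mul, add_self']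
  have := zero_of_B3 hD (h2 a ha) (h2 b hb) (h2 c hc)
  ext i
  have h3 := congrFun this i
  simp only [Pi.add_apply, one_smul, Pi.zero_apply] at h3
  exact add_eq0.1 h3

/-- A basis `p, q, y` made of a hyperbolic pair `p, y` and a unit vector orthogonal to it. -/
def Hyp (p q y : Vec F) : Prop :=
  B p p = 0 ∧ B p q = 0 ∧ B q q = 1 ∧ B p y = 1 ∧ B y y = 0 ∧ B y q = 0

lemma exists_Hyp {p : Vec F} (hp0 : p ≠ 0) (hp : B p p = 0) : ∃ q y, Hyp p q y := by
  obtain ⟨q, hq, hpq⟩ := exists_noniso_of_iso hp0 hp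
  obtain ⟨y, h1, h2, h3⟩ := exists_hyp hp0 hp hpq hq
  exact ⟨q, y, hp, hpq, hq, h1, h2, h3⟩

variable {p q y : Vec F}

lemma Hyp.D_ne (h : Hyp p q y) : D p q y ≠ 0 := by
  intro h0
  obtain ⟨h1, h2, h3, h4, h5, h6⟩ := h
  have h4' : B y p = 1 := by rw [← B_star, h4, star_one]
  have := gram p q y
  rw [h0, h1, h2, h3, h4, h5, h6, B_swap0 h2, B_swap0 h6, h4'] at this
  simp at this

lemma Hyp.coord (h : Hyp p q y) (x : Vec F) : x = B x y • p + B x q • q + B x p • y := by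
  have hD := h.D_ne
  obtain ⟨h1, h2, h3, h4, h5, h6⟩ := h
  have h4' : B y p = 1 := by rw [← B_star, h4, star_one]
  have h2' := B_swap0 h2
  have h6' := B_swap0 h6
  apply eq_of_B3 hD <;> simp [*]

/-- The elements fixing an isotropic vector are unipotent. -/
lemma Hyp.stab (h : Hyp p q y) {g : GG F} (hg : g • p = p) :
    ∃ α c : F, g • q = q + α • p ∧ g • y = y + star α • q + c • p ∧ c + star c = α * star α := by
  have hD := h.D_ne
  have hq := h.coord (g • q)
  have hy := h.coord (g • y)
  obtain ⟨h1, h2, h3, h4, h5, h6⟩ := h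
  have h4' : B y p = 1 := by rw [← B_star, h4, star_one]
  have h2' := B_swap0 h2
  have h6' := B_swap0 h6
  have e1 : B (g • q) p = 0 := by
    have := B_g g q p
    rwa [hg, h2'] at this
  have e2 : B (g • y) p = 1 := by
    have := B_g g y p
    rwa [hg, h4'] at this
  have e3 : B (g • y) (g • q) = 0 := by rw [B_g, h6]
  have e4 : B (g • y) (g • y) = 0 := by rw [B_g, h5]
  have e5 : D p (g • q) (g • y) = D p q y := by
    have := D_g g p q y
    rwa [hg] at this
  generalize g • q = q' at *
  generalize g • y = y' at *
  rw [e1, zero_smul, add_zero] at hq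
  rw [e2, one_smul] at hy
  generalize B q' y = α at *
  generalize B q' q = μ at *
  generalize B y' y = c at *
  generalize B y' q = d at *
  subst hq hy
  have hμ : μ = 1 := by
    simp at e5
    exact mul_right_cancel₀ hD (e5.trans (one_mul _).symm)
  subst hμ
  simp [h1, h2, h3, h4, h5, h6, h4', h2', h6'] at e3 e4
  have hd : d = star α := by rw [add_comm, add_eq0] at e3; exact e3.symm ▸ rfl
  subst hd
  refine ⟨α, c, by rw [one_smul, add_comm], by abel, ?_⟩
  simp only [star_star] at e4
  have h2 : c + star c + α * star α = 0 := by linear_combination e4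
  exact add_eq0.1 h2

/-- The elements fixing an isotropic vector have order dividing four. -/
lemma pow_four_of_fix {p : Vec F} (hp0 : p ≠ 0) (hp : B p p = 0) {g : GG F} (hg : g • p = p) :
    g ^ 4 = 1 := by
  obtain ⟨q, y, h⟩ := exists_Hyp hp0 hp
  obtain ⟨α, c, h1, h2, -⟩ := h.stab hg
  have hq2 : g • g • q = q := by
    rw [h1, smul_add, g_smul, hg, h1, add_assoc, ← add_smul, add_self', zero_smul, add_zero]
  have hy2 : g • g • y = y + (α * star α) • p := by
    rw [h2, smul_add, smul_add, g_smul, g_smul, hg, h1, h2]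
    have e : ∀ a : F, a + a = 0 := add_self'
    ext i
    simp only [Pi.add_apply, Pi.smul_apply, smul_eq_mul]
    linear_combination (star α * q i + c * p i) * e 1
  have hy4 : g • g • g • g • y = y := by
    rw [hy2, smul_add, smul_add, g_smul, g_smul, hg, hg, hy2, add_assoc, ← add_smul, add_self',
      zero_smul, add_zero]
  have e4 : ∀ x : Vec F, g ^ 4 • x = g • g • g • g • x := by
    intro x
    simp only [pow_succ, pow_zero, one_mul, mul_smul]
  apply eq_one3 h.D_ne
  · rw [e4, hg, hg, hg, hg]
  · rw [e4, hq2, hq2]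
  · rw [e4, hy4]

lemma odd_mem {G : Type} [Group G] [Fintype G] {H K : Subgroup G} (hodd : Odd (Nat.card H)) {n : G}
    (hn : n ∈ H) {k : ℕ} (h : n ^ (2 * k) ∈ K) : n ^ k ∈ K := by
  obtain ⟨j, hj⟩ := hodd
  have h1 : n ^ Nat.card H = 1 := by
    have := pow_card_eq_one' (G := H) (x := ⟨n, hn⟩)
    exact congrArg Subtype.val this
  have h2 : n ^ k = (n ^ (2 * k)) ^ (j + 1) := by
    rw [← pow_mul, show 2 * k * (j + 1) = Nat.card H * k + k by rw [hj]; ring, pow_add, pow_mul, h1,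
      one_pow, one_mul]
  rw [h2]
  exact pow_mem h _

lemma odd_eq_one {G : Type} [Group G] [Fintype G] {H : Subgroup G} (hodd : Odd (Nat.card H)) {n : G}
    (hn : n ∈ H) (h : n ^ 4 = 1) : n = 1 := by
  have h2 : n ^ (2 * 2) ∈ (⊥ : Subgroup G) := by simpa using h
  have h1 : n ^ (2 * 1) ∈ (⊥ : Subgroup G) := odd_mem hodd hn h2
  simpa using odd_mem hodd hn h1

/-- Subgroups of odd order fixing an isotropic point are abelian. -/
lemma odd_comm_iso {O : Subgroup (GG F)} (hodd : Odd (Nat.card O)) {p : Vec F} (hp0 : p ≠ 0)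
    (hp : B p p = 0) (hO : ∀ g ∈ O, ∃ a : F, g • p = a • p) : ∀ x ∈ O, ∀ y ∈ O, x * y = y * x := by
  intro x hx y hy
  obtain ⟨a, ha⟩ := hO x hx
  obtain ⟨b, hb⟩ := hO y hy
  have h1 : ((y * x)⁻¹ * (x * y)) • p = p := by
    rw [mul_smul, inv_smul_eq_iff, mul_smul, mul_smul, ha, hb, g_smul, g_smul, ha, hb]
    exact smul_comm b a p
  have h2 := odd_eq_one hodd (mul_mem (inv_mem (mul_mem hy hx)) (mul_mem hx hy))
    (pow_four_of_fix hp0 hp h1)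
  rw [inv_mul_eq_one] at h2
  exact h2.symm

/-- `g` acts as a scalar on the orthogonal complement of `v`. -/
def ScalarOn (v : Vec F) (g : GG F) : Prop := ∃ a : F, ∀ x : Vec F, B x v = 0 → g • x = a • x

lemma perp_smul_of_eigen {v : Vec F} (hv : B v v = 1) {g : GG F} {a : F} (hg : g • v = a • v)
    {x : Vec F} (hx : B x v = 0) : B (g • x) v = 0 := by
  have ha := eigen_unit (by rw [hv]; exact one_ne_zero) hg
  have h1 : star a * B (g • x) v = 0 := by rw [← B_smul_right, ← hg, B_g, hx]
  refine (mul_eq_zero.1 h1).resolve_left (star_ne0 ?_)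
  rintro rfl
  simp at ha

/-- An element fixing the nonisotropic point of `v` is scalar on the orthogonal complement of `v`
or has a cyclic vector there. -/
lemma scalarOn_or {v : Vec F} (hv : B v v = 1) {g : GG F} {l : F} (hg : g • v = l • v) :
    ScalarOn v g ∨ ∃ x, B x v = 0 ∧ D v x (g • x) ≠ 0 := by
  obtain ⟨u, w, hu, hw, hvu, hvw, huw⟩ := exists_onb hv
  have hwu := B_swap0 huw
  have huv := B_swap0 hvu
  have hwv := B_swap0 hvw
  have hD : D v u w ≠ 0 := by
    intro h0
    have := gram v u w
    rw [h0, hv, hu, hw, hvu, huv, hvw, hwv, huw, hwu] at this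
    simp at this
  have hc : ∀ x, B x v = 0 → x = B x u • u + B x w • w := by
    intro x hx
    apply eq_of_B3 hD <;> simp [hx, hu, hw, huv, hwv, huw, hwu]
  have h1 := hc _ (perp_smul_of_eigen hv hg huv)
  have h2 := hc _ (perp_smul_of_eigen hv hg hwv)
  generalize hgu : g • u = gu at *
  generalize hgw : g • w = gw at *
  generalize B gu u = a at *
  generalize B gu w = b at *
  generalize B gw u = c at *
  generalize B gw w = d at *
  subst h1 h2
  by_cases hb : b = 0
  · subst hb
    by_cases hc0 : c = 0
    · subst hc0
      by_cases hd : a = d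
      · left
        refine ⟨a, fun x hx => ?_⟩
        rw [hc x hx, smul_add, g_smul, g_smul, hgu, hgw, ← hd]
        module
      · right
        refine ⟨u + w, by rw [B_add_left, huv, hwv, add_zero], ?_⟩
        rw [smul_add, hgu, hgw]
        have : D v (u + w) (a • u + (0 : F) • w + ((0 : F) • u + d • w)) = (d + a) * D v u w := by
          simp only [D_add2, D_add3, D_smul3, D_self23, D_swap23 v u w]; ring
        rw [this]
        exact mul_ne_zero (fun h => hd (add_eq0.1 h).symm) hD
    · right
      refine ⟨w, hwv, ?_⟩
      rw [hgw]
      simp [hc0, D_swap23 v u w, hD]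
  · right
    refine ⟨u, huv, ?_⟩
    rw [hgu]
    simp [hb, hD]

lemma eigen_ne0 {v : Vec F} (hv : v ≠ 0) {g : GG F} {a : F} (hg : g • v = a • v) : a ≠ 0 := by
  rintro rfl
  rw [zero_smul] at hg
  exact smul_ne0 g hv hg

lemma eigen_inv {v : Vec F} (hv : v ≠ 0) {g : GG F} {a : F} (hg : g • v = a • v) :
    g⁻¹ • v = a⁻¹ • v := by
  have ha := eigen_ne0 hv hg
  rw [inv_smul_eq_iff, g_smul, hg, smul_smul, inv_mul_cancel₀ ha, one_smul]

lemma perp_decomp {v : Vec F} (hv : B v v = 1) (x : Vec F) :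
    ∃ x', B x' v = 0 ∧ x = B x v • v + x' := by
  refine ⟨x + B x v • v, by simp [hv, add_self'], ?_⟩
  ext i
  simp only [Pi.add_apply, Pi.smul_apply, smul_eq_mul]
  linear_combination - add_self' (B x v * v i)

lemma comm_of_perp {v : Vec F} (hv : B v v = 1) {g h : GG F} {l m : F} (hg : g • v = l • v)
    (hh : h • v = m • v) (H : ∀ x : Vec F, B x v = 0 → g • h • x = h • g • x) :
    g * h = h * g := by
  apply g_ext
  intro x
  obtain ⟨x', hx', hx⟩ := perp_decomp hv x
  rw [mul_smul, mul_smul, hx]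
  generalize B x v = t
  simp only [smul_add, g_smul, hg, hh, H x' hx']
  rw [smul_comm l m v]

lemma perp_coord {v x y : Vec F} (hv : B v v = 1) (hx : B x v = 0) (hy : B y v = 0)
    (hD : D v x y ≠ 0) {z : Vec F} (hz : B z v = 0) : ∃ a b : F, z = a • x + b • y := by
  have h := cramer v x y z
  have h0 := congrArg (fun w => B w v) h
  simp only [B_add_left, B_smul_left, hx, hy, hz, hv, mul_zero, add_zero, mul_one] at h0
  rw [← h0, zero_smul, zero_add] at h
  refine ⟨(D v x y)⁻¹ * D v z y, (D v x y)⁻¹ * D v x z, ?_⟩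
  rw [mul_smul, mul_smul, ← smul_add, ← h, smul_smul, inv_mul_cancel₀ hD, one_smul]

/-- An element commuting with one that has a cyclic vector on the orthogonal complement of `v` is
a linear polynomial in it there. -/
lemma cyc_form {v x : Vec F} (hv : B v v = 1) (hx : B x v = 0) {g h : GG F} {l m : F}
    (hg : g • v = l • v) (hh : h • v = m • v) (hD : D v x (g • x) ≠ 0) (hc : g * h = h * g) :
    ∃ a b : F, ∀ z : Vec F, B z v = 0 → h • z = a • z + b • g • z := by
  have hgx := perp_smul_of_eigen hv hg hx
  obtain ⟨a, b, hab⟩ := perp_coord hv hx hgx hD (perp_smul_of_eigen hv hh hx)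
  refine ⟨a, b, fun z hz => ?_⟩
  obtain ⟨s, t, rfl⟩ := perp_coord hv hx hgx hD hz
  have hc' : h • g • x = g • h • x := by rw [← mul_smul, ← mul_smul, hc]
  simp only [smul_add, g_smul, hc', hab]
  generalize g • g • x = w2
  generalize g • x = w1
  module

/-- Subgroups of odd order fixing a nonisotropic point are abelian. -/
lemma odd_comm_noniso {O : Subgroup (GG F)} (hodd : Odd (Nat.card O)) {v : Vec F}
    (hv : B v v = 1) (hO : ∀ g ∈ O, ∃ a : F, g • v = a • v) : ∀ x ∈ O, ∀ y ∈ O, x * y = y * x := by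
  have hv0 : v ≠ 0 := by rintro rfl; simp at hv
  let Z : Subgroup O :=
    { carrier := {g | ScalarOn v g.1}
      one_mem' := ⟨1, fun x _ => by simp⟩
      mul_mem' := by
        rintro ⟨g, hg⟩ ⟨h, hh⟩ ⟨a, ha⟩ ⟨b, hb⟩
        refine ⟨b * a, fun x hx => ?_⟩
        change (g * h) • x = _
        rw [mul_smul, hb x hx, g_smul, ha x hx, smul_smul]
      inv_mem' := by
        rintro ⟨g, hg⟩ ⟨a, ha⟩
        refine ⟨a⁻¹, fun x hx => ?_⟩
        change g⁻¹ • x = _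
        by_cases hx0 : x = 0
        · subst hx0; simp
        · exact eigen_inv hx0 (ha x hx) }
  have hZ : ∀ g : O, g ∈ Z ↔ ScalarOn v g.1 := fun g => Iff.rfl
  have hoddO : Odd (Nat.card (⊤ : Subgroup O)) := by rwa [Subgroup.card_top]
  have hca : CA Z := by
    constructor
    · rintro ⟨z, hz⟩ ⟨a, ha⟩ ⟨x, hx⟩
      obtain ⟨m, hm⟩ := hO z hz
      obtain ⟨l, hl⟩ := hO x hx
      apply Subtype.ext
      refine comm_of_perp hv hm hl fun w hw => ?_
      have h1 := ha w hw
      have h2 := ha _ (perp_smul_of_eigen hv hl hw)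
      simp only at h1 h2
      rw [h1, h2, g_smul]
    · rintro ⟨g, hg⟩ hgZ ⟨y, hy⟩ hyC ⟨z, hz⟩ hzC
      rw [mem_Cn] at hyC hzC
      have hyC := congrArg Subtype.val hyC
      have hzC := congrArg Subtype.val hzC
      simp only [Subgroup.coe_mul] at hyC hzC
      obtain ⟨l, hl⟩ := hO g hg
      obtain ⟨m, hm⟩ := hO y hy
      obtain ⟨k, hk⟩ := hO z hz
      obtain ⟨x, hx, hD⟩ := (scalarOn_or hv hl).resolve_left hgZ
      obtain ⟨a, b, hab⟩ := cyc_form hv hx hl hk hD hzC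
      apply Subtype.ext
      refine comm_of_perp hv hm hk fun w hw => ?_
      have hyw : y • g • w = g • y • w := by rw [← mul_smul, ← mul_smul, hyC]
      rw [hab w hw, hab _ (perp_smul_of_eigen hv hm hw), smul_add, g_smul, g_smul, hyw]
  have hN : ∀ g, g ∉ Z → Nn g ≤ Cn g := by
    rintro ⟨g, hg⟩ hgZ ⟨n, hn⟩ hnN
    obtain ⟨l, hl⟩ := hO g hg
    obtain ⟨k, hk⟩ := hO n hn
    have hnk := eigen_inv hv0 hk
    obtain ⟨x, hx, hD⟩ := (scalarOn_or hv hl).resolve_left hgZ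
    have hC := (Subgroup.mem_normalizer_iff.1 hnN _).1 (self_mem_Cn (⟨g, hg⟩ : O))
    have hC := congrArg Subtype.val (mem_Cn.1 hC)
    simp only [Subgroup.coe_mul, InvMemClass.coe_inv] at hC
    obtain ⟨m, hm⟩ := hO (n * g * n⁻¹) (mul_mem (mul_mem hn hg) (inv_mem hn))
    obtain ⟨a, b, hab⟩ := cyc_form hv hx hl hm hD hC
    obtain ⟨d, t, hdt⟩ := cyc_form (h := g * g) hv hx hl
      (m := l * l) (by rw [mul_smul, hl, g_smul, hl, smul_smul]) hD (by group)
    have hconj : ∀ z : Vec F, (n * g * n⁻¹) • z = n • g • n⁻¹ • z := fun z => by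
      rw [mul_smul, mul_smul]
    have hpg : ∀ z : Vec F, B z v = 0 → B (g • z) v = 0 := fun z => perp_smul_of_eigen hv hl
    have hpn : ∀ z : Vec F, B z v = 0 → B (n • z) v = 0 := fun z => perp_smul_of_eigen hv hk
    have hpi : ∀ z : Vec F, B z v = 0 → B (n⁻¹ • z) v = 0 := fun z => perp_smul_of_eigen hv hnk
    simp only [hconj] at hab
    simp only [mul_smul] at hdt
    -- the square of the conjugate, computed in two ways
    have e1 : n • g • g • n⁻¹ • x = (a * a + b * b * d) • x + (b * b * t) • g • x := by
      have h1 : n • g • g • n⁻¹ • x = n • g • n⁻¹ • n • g • n⁻¹ • x := by rw [inv_smul_smul]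
      rw [h1, hab x hx, smul_add, smul_add, smul_add, g_smul, g_smul, g_smul, hab x hx, g_smul,
        g_smul, g_smul, hab _ (hpg x hx), hdt x hx]
      generalize g • x = w
      have e : a * b + a * b = 0 := add_self' _
      ext i
      simp only [Pi.add_apply, Pi.smul_apply, smul_eq_mul]
      linear_combination (w i) * e
    have e2 : n • g • g • n⁻¹ • x = (d + t * a) • x + (t * b) • g • x := by
      rw [hdt _ (hpi x hx), smul_add, g_smul, g_smul, smul_inv_smul, hab x hx]
      generalize g • x = w
      module
    have e3 := e1.symm.trans e2
    have c1 : a * a + b * b * d = d + t * a := by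
      have := congrArg (fun w => D v w (g • x)) e3
      simpa [hD] using this
    have c2 : b * b * t = t * b := by
      have := congrArg (fun w => D v x w) e3
      simpa [hD] using this
    have hb : b ≠ 0 := by
      rintro rfl
      refine hgZ ⟨a, fun z hz => ?_⟩
      have := hab _ (hpn z hz)
      rw [inv_smul_smul, zero_smul, add_zero, ← g_smul] at this
      exact (smul_left_cancel_iff n).1 this
    by_cases ht : t = 0
    · exfalso
      apply hgZ
      have h2 : (⟨g, hg⟩ : O) ^ (2 * 1) ∈ Z := by
        refine ⟨d, fun z hz => ?_⟩
        change (g ^ (2 * 1)) • z = _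
        rw [show g ^ (2 * 1) = g * g by simp [pow_two], mul_smul, hdt z hz, ht, zero_smul, add_zero]
      simpa using odd_mem hoddO (Subgroup.mem_top _) h2
    have hb1 : b = 1 := by
      have : t * b * (b - 1) = 0 := by linear_combination c2
      rcases mul_eq_zero.1 this with h | h
      · exact absurd h (mul_ne_zero ht hb)
      · exact sub_eq_zero.1 h
    subst hb1
    have ha : a * (a + t) = 0 := by linear_combination c1 + add_self' (a * t)
    rcases mul_eq_zero.1 ha with rfl | ha
    · rw [mem_Cn]
      apply Subtype.ext
      refine comm_of_perp hv hl hk fun z hz => ?_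
      have := hab _ (hpn z hz)
      rw [inv_smul_smul, zero_smul, zero_add, one_smul] at this
      exact this.symm
    · have hat : a = t := add_eq0.1 ha
      subst hat
      have h2 : (⟨n, hn⟩ : O) ^ (2 * 1) ∈ Cn (⟨g, hg⟩ : O) := by
        rw [mem_Cn]
        apply Subtype.ext
        change g * n ^ (2 * 1) = n ^ (2 * 1) * g
        rw [show n ^ (2 * 1) = n * n by simp [pow_two]]
        refine comm_of_perp hv hl (m := k * k) (by rw [mul_smul, hk, g_smul, hk, smul_smul])
          fun z hz => ?_
        have h3 := hab _ (hpn z hz)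
        have h4 := hab _ (hpn _ (hpn z hz))
        rw [inv_smul_smul, one_smul] at h3 h4
        rw [mul_smul, mul_smul]
        have h5 : n • n • g • z = a • n • n • z + n • g • n • z := by
          rw [h3, smul_add, g_smul]
        rw [h5, h4, ← add_assoc, ← add_smul, add_self', zero_smul, zero_add]
      simpa using odd_mem hoddO (Subgroup.mem_top _) h2
  intro x hx y hy
  have := hca.comm (by rwa [← Nat.card_eq_fintype_card]) hN ⟨x, hx⟩ ⟨y, hy⟩
  exact congrArg Subtype.val this

/-- Reducible subgroups of odd order are abelian. -/
lemma odd_comm {O : Subgroup (GG F)} (hodd : Odd (Nat.card O)) (hF : (Fix O).Nonempty) :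
    ∀ x ∈ O, ∀ y ∈ O, x * y = y * x := by
  obtain ⟨P, hP⟩ := hF
  rw [mem_Fix] at hP
  by_cases h : Iso P
  · obtain ⟨p, hp, rfl⟩ := exists_rep P
    exact odd_comm_iso hodd hp ((iso_pt hp).1 h) fun g hg => (g_pt_eq g hp).1 (hP g hg)
  · obtain ⟨q, h0, hq, rfl⟩ := exists_unit_rep h
    exact odd_comm_noniso hodd hq fun g hg => (g_pt_eq g h0).1 (hP g hg)

/-- The centralizer of a nontrivial element with an eigenvector is reducible. -/
lemma Ce_fix {g : GG F} (h1 : g ≠ 1) (hF : (Fix (Subgroup.zpowers g)).Nonempty) :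
    (Fix (Ce g)).Nonempty := by
  by_contra hC
  rw [Finset.not_nonempty_iff_eq_empty] at hC
  obtain ⟨P, hP, hPF, -⟩ := frame_of_normal (M := Subgroup.zpowers g)
    (by rwa [Ne, Subgroup.zpowers_eq_bot]) hF hC (by
      intro h hh k hk
      have : h * k * h⁻¹ = k := by
        obtain ⟨j, rfl⟩ := Subgroup.mem_zpowers_iff.1 hk
        rw [mul_inv_eq_iff_eq_mul]
        exact (Commute.zpow_left (mem_Ce.1 hh) j).eq.symm
      rwa [this])
  obtain ⟨e, he, hPe⟩ := hP.onb
  have hg : g ∈ ptStab P := mem_ptStab.2 fun i =>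
    mem_Fix.1 ((hPF _).2 ⟨i, rfl⟩) g (Subgroup.mem_zpowers g)
  obtain ⟨a, ha⟩ := ptStab_eigen he hPe hg
  have h0 : P 0 ∉ Fix (Ce g) := by rw [hC]; exact Finset.notMem_empty _
  rw [mem_Fix] at h0
  push Not at h0
  obtain ⟨k, hk, hk0⟩ := h0
  have hkF : k • P 0 ∈ Fix (Subgroup.zpowers g) := by
    rw [mem_Fix]
    intro z hz
    obtain ⟨j, rfl⟩ := Subgroup.mem_zpowers_iff.1 hz
    have hc : g ^ j * k = k * g ^ j := (Commute.zpow_left (mem_Ce.1 hk) j).eq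
    rw [← mul_smul, hc, mul_smul]
    congr 1
    exact mem_Fix.1 ((hPF _).2 ⟨0, rfl⟩) _ hz
  obtain ⟨j, hj⟩ := (hPF _).1 hkF
  have hj0 : j ≠ 0 := by
    rintro rfl
    exact hk0 hj
  have hj' := hj
  rw [hPe, hPe, g_pt, pt_eq] at hj'
  obtain ⟨c, hc⟩ := hj'
  have hc0 : c ≠ 0 := by
    rintro rfl
    rw [zero_smul] at hc
    exact smul_ne0 k (he.ne0 0) hc
  have haj : a j = a 0 := by
    have e1 := Ce_smul hk (e 0)
    rw [ha, g_smul, hc, g_smul, ha, smul_smul, smul_smul] at e1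
    have e2 := congrArg (fun w => B w (e j)) e1
    simp only [B_smul_left, he j j, if_true, mul_one] at e2
    have : c * (a 0 - a j) = 0 := by linear_combination e2
    exact (sub_eq_zero.1 ((mul_eq_zero.1 this).resolve_left hc0)).symm
  have b0 : B (e 0 + e j) (e 0) = 1 := by
    rw [B_add_left, he, he, if_pos rfl, if_neg hj0, add_zero]
  have bj : B (e 0 + e j) (e j) = 1 := by
    rw [B_add_left, he, he, if_pos rfl, if_neg hj0.symm, zero_add]
  have hne : e 0 + e j ≠ 0 := ne_zero_of_B (y := e 0) (by rw [b0]; exact one_ne_zero)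
  have hm : pt (e 0 + e j) hne ∈ Fix (Subgroup.zpowers g) := by
    rw [mem_Fix_zpowers, g_pt_eq]
    exact ⟨a 0, by rw [smul_add, smul_add, ha, ha, haj]⟩
  obtain ⟨l, hl⟩ := (hPF _).1 hm
  rw [hPe, pt_eq] at hl
  obtain ⟨d, hd⟩ := hl
  rw [hd, B_smul_left, he] at b0 bj
  have l0 : l = 0 := by
    by_contra h
    simp [h] at b0
  have lj : l = j := by
    by_contra h
    simp [h] at bj
  exact hj0 (lj.symm.trans l0)

lemma odd_sub {G : Type} [Group G] [Fintype G] {H K : Subgroup G} (hodd : Odd (Nat.card H))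
    (h : K ≤ H) : Odd (Nat.card K) :=
  Odd.of_dvd_nat hodd (Subgroup.card_dvd_of_le h)

lemma card_Nn_le {O S : Type} [Group O] [Fintype O] {g : O} (f : O → S) (T : Finset S)
    (hT : T.card ≤ 3) (hf : ∀ n ∈ Nn g, f n ∈ T)
    (h : ∀ n ∈ Nn g, ∀ n' ∈ Nn g, f n = f n' → n⁻¹ * n' ∈ Cn g) :
    Nat.card (Nn g) ≤ 3 * Nat.card (Cn g) := by
  rw [← card_filter_mem', ← card_filter_mem']
  have := Finset.card_le_mul_card_image_of_maps_to
    (s := Finset.univ.filter fun x => x ∈ Nn g) (t := T) (f := f)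
    (fun n hn => hf n (Finset.mem_filter.1 hn).2)
    (Finset.univ.filter fun x => x ∈ Cn g).card (by
      intro b _
      by_cases hb : ∃ n0 ∈ Nn g, f n0 = b
      · obtain ⟨n0, hn0, rfl⟩ := hb
        apply Finset.card_le_card_of_injOn (fun n => n0⁻¹ * n)
        · intro n hn
          have hn := Finset.mem_filter.1 (Finset.mem_coe.1 hn)
          simp only [Finset.coe_filter, Finset.mem_univ, true_and]
          exact h _ hn0 _ (Finset.mem_filter.1 hn.1).2 hn.2.symm
        · intro n _ n' _ hnn
          exact mul_left_cancel hnn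
      · rw [Finset.filter_eq_empty_iff.2]
        · simp
        · intro n hn hnb
          exact hb ⟨n, (Finset.mem_filter.1 hn).2, hnb⟩)
  calc _ ≤ _ := this
    _ ≤ _ * 3 := Nat.mul_le_mul_left _ hT
    _ = _ := mul_comm _ _

/-- Subgroups of odd order are solvable: centralizers are abelian, so this is a class count. -/
lemma odd_solvable {O : Subgroup (GG F)} (hodd : Odd (Nat.card O)) : Group.IsSolvable O := by
  have key : ∀ g ∈ O, g ≠ 1 → ∀ x ∈ O, g * x = x * g → ∀ y ∈ O, g * y = y * g →
      x * y = y * x := by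
    intro g hg h1 x hx hgx y hy hgy
    by_cases hne : NE g
    · exact hne.comm (mem_Ce.2 hgx) (mem_Ce.2 hgy)
    · rw [← fix_zpowers_iff, ← Ne, ← Finset.nonempty_iff_ne_empty] at hne
      exact odd_comm (O := O ⊓ Ce g) (odd_sub hodd inf_le_left)
        ((Ce_fix h1 hne).mono (Fix_anti inf_le_right)) x ⟨hx, mem_Ce.2 hgx⟩ y ⟨hy, mem_Ce.2 hgy⟩
  have hca : CA (⊥ : Subgroup O) := by
    constructor
    · intro z hz x
      rw [Subgroup.mem_bot.1 hz, one_mul, mul_one]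
    · rintro ⟨g, hg⟩ h1 ⟨x, hx⟩ hxC ⟨y, hy⟩ hyC
      apply Subtype.ext
      refine key g hg ?_ x hx (congrArg Subtype.val (mem_Cn.1 hxC)) y hy
        (congrArg Subtype.val (mem_Cn.1 hyC))
      rintro rfl
      exact h1 (Subgroup.mem_bot.2 rfl)
  refine hca.solvable (by rwa [← Nat.card_eq_fintype_card]) ?_
  rintro ⟨g, hg⟩ hg1
  have h1 : g ≠ 1 := fun h => hg1 (Subtype.ext h)
  by_cases hne : NE g
  · apply card_Nn_le (fun n => n.1 * g * n.1⁻¹) _ hne.card_conj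
    · intro n hn
      rw [Finset.mem_filter]
      refine ⟨Finset.mem_univ _, ?_, n.1, rfl⟩
      have hC := (Subgroup.mem_normalizer_iff.1 hn _).1 (self_mem_Cn (⟨g, hg⟩ : O))
      exact mem_Ce.2 (congrArg Subtype.val (mem_Cn.1 hC))
    · intro n _ n' _ h
      rw [mem_Cn]
      apply Subtype.ext
      change g * (n.1⁻¹ * n'.1) = n.1⁻¹ * n'.1 * g
      have h : n.1 * g * n.1⁻¹ = n'.1 * g * n'.1⁻¹ := h
      calc g * (n.1⁻¹ * n'.1) = n.1⁻¹ * (n.1 * g * n.1⁻¹) * n'.1 := by group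
        _ = n.1⁻¹ * (n'.1 * g * n'.1⁻¹) * n'.1 := by rw [h]
        _ = _ := by group
  · rw [← fix_zpowers_iff, ← Ne, ← Finset.nonempty_iff_ne_empty] at hne
    have hCF := Ce_fix h1 hne
    set N : Subgroup (GG F) := (Nn (⟨g, hg⟩ : O)).map O.subtype with hNdef
    set M : Subgroup (GG F) := (Cn (⟨g, hg⟩ : O)).map O.subtype with hMdef
    have hNO : N ≤ O := by
      rintro _ ⟨x, -, rfl⟩
      exact x.2
    have hgM : g ∈ M := ⟨⟨g, hg⟩, self_mem_Cn _, rfl⟩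
    have hMF : (Fix M).Nonempty := hCF.mono (Fix_anti (by
      rintro _ ⟨x, hx, rfl⟩
      exact mem_Ce.2 (congrArg Subtype.val (mem_Cn.1 hx))))
    have hgN : (⟨g, hg⟩ : O) ∈ Nn (⟨g, hg⟩ : O) := Subgroup.le_normalizer (self_mem_Cn _)
    by_cases hNF : Fix N = ∅
    · obtain ⟨P, hP, hPF, hNP⟩ := frame_of_normal (H := N) (M := M) (by
        intro h
        rw [h] at hgM
        exact h1 (Subgroup.mem_bot.1 hgM)) hMF hNF (by
        rintro _ ⟨x, hx, rfl⟩ _ ⟨y, hy, rfl⟩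
        exact ⟨x * y * x⁻¹, (Subgroup.mem_normalizer_iff.1 hx _).1 hy, rfl⟩)
      have hgP : g ∈ ptStab P := mem_ptStab.2 fun i =>
        mem_Fix.1 ((hPF _).2 ⟨i, rfl⟩) g hgM
      have hmemN : ∀ n ∈ Nn (⟨g, hg⟩ : O), n.1 ∈ N := fun n hn => ⟨n, hn, rfl⟩
      apply card_Nn_le (fun n => n.1 • P 0) (Finset.univ.image P)
      · exact Finset.card_image_le.trans (by simp)
      · intro n hn
        obtain ⟨s, hs⟩ := mem_setStab.1 (hNP (hmemN n hn))
        exact Finset.mem_image.2 ⟨s 0, Finset.mem_univ _, (hs 0).symm⟩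
      · intro n hn n' hn' h
        have hu : n⁻¹ * n' ∈ Nn (⟨g, hg⟩ : O) := mul_mem (inv_mem hn) hn'
        generalize hk : n⁻¹ * n' = u at hu
        have hu0 : u.1 • P 0 = P 0 := by
          rw [← hk]
          change (n.1⁻¹ * n'.1) • P 0 = P 0
          rw [mul_smul, inv_smul_eq_iff]
          exact h.symm
        obtain ⟨s, hs⟩ := mem_setStab.1 (hNP (hmemN u hu))
        have hs0 : s 0 = 0 := hP.inj ((hs 0).symm.trans hu0)
        have hss : ∀ s : Equiv.Perm (Fin 3), s 0 = 0 → ∀ i, s (s i) = i := by decide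
        have hu2 : u.1 ^ (2 * 1) ∈ ptStab P := by
          rw [mem_ptStab]
          intro i
          rw [show u.1 ^ (2 * 1) = u.1 * u.1 by simp [pow_two], mul_smul, hs, hs, hss s hs0]
        have hu1 : u.1 ∈ ptStab P := by simpa using odd_mem hodd u.2 hu2
        rw [mem_Cn]
        apply Subtype.ext
        refine odd_comm (O := O ⊓ ptStab P) (odd_sub hodd inf_le_left) ⟨P 0, ?_⟩ _ ⟨hg, hgP⟩ _
          ⟨u.2, hu1⟩
        rw [mem_Fix]
        exact fun k hk => mem_ptStab.1 hk.2 0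
    · rw [← Ne, ← Finset.nonempty_iff_ne_empty] at hNF
      have hle : Nn (⟨g, hg⟩ : O) ≤ Cn (⟨g, hg⟩ : O) := by
        intro n hn
        rw [mem_Cn]
        apply Subtype.ext
        exact odd_comm (odd_sub hodd hNO) hNF _ ⟨_, hgN, rfl⟩ _ ⟨n, hn, rfl⟩
      have := Nat.le_of_dvd Nat.card_pos (Subgroup.card_dvd_of_le hle)
      omega

end Odd

/-! ### Transvections -/

section Even

variable {F : Type} [Field F] [StarRing F] [HermField F]

/-- `g` is the transvection `x ↦ x + a B(x, p) p`. -/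
def IsT (p : Vec F) (a : F) (g : GG F) : Prop := ∀ x : Vec F, g • x = x + (a * B x p) • p

lemma IsT.fix {p : Vec F} {a : F} {g : GG F} (h : IsT p a g) {x : Vec F} (hx : B x p = 0) :
    g • x = x := by rw [h, hx, mul_zero, zero_smul, add_zero]

lemma IsT.mul {p : Vec F} (hp : B p p = 0) {a b : F} {g h : GG F} (hg : IsT p a g)
    (hh : IsT p b h) : IsT p (a + b) (g * h) := by
  intro x
  rw [mul_smul, hh x, smul_add, g_smul, hg x, hg.fix hp]
  module

lemma IsT.sq {p : Vec F} (hp : B p p = 0) {a : F} {g : GG F} (hg : IsT p a g) : g * g = 1 := by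
  apply g_ext
  intro x
  rw [hg.mul hp hg x, add_self', zero_mul, zero_smul, add_zero, one_smul]

lemma IsT.conj {p : Vec F} {a : F} {g : GG F} (hg : IsT p a g) (h : GG F) :
    IsT (h • p) a (h * g * h⁻¹) := by
  intro x
  have e : B (h⁻¹ • x) p = B x (h • p) := by rw [← B_g h, smul_inv_smul]
  rw [mul_smul, mul_smul, hg, smul_add, smul_inv_smul, g_smul, e]

lemma IsT.scale {p : Vec F} {a b c : F} {g : GG F} (hg : IsT (c • p) a g)
    (hb : b = a * (c * star c)) : IsT p b g := by
  intro x
  rw [hg x, hb, B_smul_right, smul_smul]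
  congr 2
  ring

lemma IsT.scale' {p : Vec F} {a b c : F} {g : GG F} (hg : IsT p b g)
    (hb : b = a * (c * star c)) : IsT (c • p) a g := by
  intro x
  rw [hg x, hb, B_smul_right, smul_smul]
  congr 2
  ring

lemma IsT.inj {p : Vec F} (hp0 : p ≠ 0) {a b : F} {g : GG F} (ha : IsT p a g) (hb : IsT p b g) :
    a = b := by
  obtain ⟨y, hy⟩ := exists_B_ne hp0
  have hy : B y p ≠ 0 := fun h => hy (B_swap0 h)
  have h := add_left_cancel ((ha y).symm.trans (hb y))
  exact mul_right_cancel₀ hy (smul_left_injective F hp0 h)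

lemma IsT.ne_one {p : Vec F} (hp0 : p ≠ 0) {a : F} (ha : a ≠ 0) {g : GG F} (h : IsT p a g) :
    g ≠ 1 := by
  rintro rfl
  refine ha (h.inj hp0 (b := 0) fun x => ?_)
  rw [zero_mul, zero_smul, add_zero, one_smul]

/-- The direction of a nontrivial transvection is determined up to scalars. -/
lemma IsT.eq {p r : Vec F} (hp0 : p ≠ 0) {a b : F} (ha : a ≠ 0) {g : GG F} (h : IsT p a g)
    (h' : IsT r b g) : ∃ c : F, p = c • r := by
  obtain ⟨y, hy⟩ := exists_B_ne hp0
  have hy : B y p ≠ 0 := fun h => hy (B_swap0 h)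
  have h2 := add_left_cancel ((h y).symm.trans (h' y))
  have h3 := mul_ne_zero ha hy
  refine ⟨(a * B y p)⁻¹ * (b * B y r), ?_⟩
  rw [mul_smul, ← h2, smul_smul, inv_mul_cancel₀ h3, one_smul]

/-- Involutions are transvections. -/
lemma exists_isT {t : GG F} (h1 : t ≠ 1) (ht : t * t = 1) :
    ∃ p : Vec F, p ≠ 0 ∧ B p p = 0 ∧ IsT p 1 t := by
  have htt : ∀ x : Vec F, t • t • x = x := fun x => by rw [← mul_smul, ht, one_smul]
  have hsa : ∀ x y : Vec F, B (t • x) y = B x (t • y) := fun x y => by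
    rw [← B_g t, htt]
  have hfsa : ∀ x y : Vec F, B (t • x + x) y = B x (t • y + y) := fun x y => by
    rw [B_add_left, B_add_right, hsa]
  have hff : ∀ x : Vec F, t • (t • x + x) + (t • x + x) = 0 := fun x => by
    rw [smul_add, htt]
    ext i
    simp only [Pi.add_apply, Pi.zero_apply]
    linear_combination add_self' (x i) + add_self' ((t • x) i)
  have hiso : ∀ x y : Vec F, B (t • x + x) (t • y + y) = 0 := fun x y => by
    rw [hfsa, hff, B_zero_right]
  obtain ⟨x0, hx0⟩ : ∃ x0 : Vec F, t • x0 + x0 ≠ 0 := by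
    by_contra! h
    refine h1 (g_ext fun x => ?_)
    rw [one_smul]
    ext i
    have := congrFun (h x) i
    exact add_eq0.1 this
  generalize hp : t • x0 + x0 = p at hx0
  have hpp : B p p = 0 := by rw [← hp, hiso]
  have hc : ∀ x : Vec F, ∃ c : F, t • x + x = c • p := fun x =>
    iso_perp hx0 hpp (hiso x x) (by rw [← hp, hiso])
  choose c hc using hc
  obtain ⟨y, hy⟩ := exists_B_ne hx0
  obtain ⟨d, hd⟩ : ∃ d : F, ∀ x : Vec F, t • x + x = (d * B x p) • p := by
    refine ⟨star (c y) / B p y, fun x => ?_⟩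
    have h3 := hfsa x y
    rw [hc, hc, B_smul_left, B_smul_right] at h3
    rw [hc]
    congr 1
    field_simp
    rw [h3]
  have e0 : d * B x0 p = 1 := by
    have h := hd x0
    rw [hp] at h
    exact smul_left_injective F hx0 (by simpa using h.symm)
  have hdr : star d = d := by
    have h3 := hfsa x0 x0
    rw [hd, B_smul_left, B_smul_right, star_mul', B_star, ← B_star x0 p] at h3
    have hb : star (B x0 p) ≠ 0 := star_ne0 (right_ne_zero_of_mul_eq_one e0)
    have : B x0 p * star (B x0 p) * (d - star d) = 0 := by linear_combination h3
    rcases mul_eq_zero.1 this with h | h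
    · exact absurd h (mul_ne_zero (right_ne_zero_of_mul_eq_one e0) hb)
    · exact (sub_eq_zero.1 h).symm
  obtain ⟨b, hb⟩ := exists_norm hdr
  have hb0 : b ≠ 0 := by
    rintro rfl
    rw [zero_mul] at hb
    rw [← hb, zero_mul] at e0
    exact zero_ne_one e0
  have hT : IsT p d t := by
    intro x
    rw [← hd x]
    ext i
    simp only [Pi.add_apply]
    linear_combination - add_self' (x i)
  exact ⟨b • p, smul_ne_zero hb0 hx0, by simp [hpp], hT.scale' (by rw [hb, one_mul])⟩

lemma IsT.perp_of_comm {p r : Vec F} (hp0 : p ≠ 0) (hp : B p p = 0) (hr0 : r ≠ 0) {a : F}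
    (ha : a ≠ 0) {s t : GG F}
    (hs : IsT p a s) (ht : IsT r 1 t) (hc : s * t = t * s) : B r p = 0 := by
  obtain ⟨x, hx⟩ := exists_B_ne hr0
  have hx : B x r ≠ 0 := fun h => hx (B_swap0 h)
  have h1 : s • t • x = t • s • x := by rw [← mul_smul, ← mul_smul, hc]
  rw [ht, ht, smul_add, g_smul] at h1
  have h1 := add_left_cancel h1
  rw [one_mul, one_mul] at h1
  obtain ⟨c, hc⟩ : ∃ c : F, s • r = c • r := by
    refine ⟨(B x r)⁻¹ * B (s • x) r, ?_⟩
    rw [mul_smul, ← h1, smul_smul, inv_mul_cancel₀ hx, one_smul]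
  have h2 : s • s • r = r := by rw [← mul_smul, hs.sq hp, one_smul]
  rw [hc, g_smul, hc, smul_smul] at h2
  have hcc : c * c = 1 := smul_left_injective F hr0 (by simpa using h2)
  have hc1 : c = 1 := sq_inj (by rw [hcc, one_mul])
  rw [hc1, one_smul, hs] at hc
  have h3 : (a * B r p) • p = 0 := by simpa using hc
  rcases smul_eq_zero.1 h3 with h | h
  · exact (mul_eq_zero.1 h).resolve_left ha
  · exact absurd h hp0

/-- In a dihedral group of twice odd order the two generating involutions are conjugate by an
involution. -/
lemma dihedral {G : Type} [Group G] [Fintype G] {s t : G} (hs : s * s = 1) (ht : t * t = 1)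
    (hz : ∀ z ∈ Subgroup.closure {s, t}, z ≠ 1 → z * z = 1 → ¬ (s * z = z * s ∧ t * z = z * t)) :
    ∃ j ∈ Subgroup.closure {s, t}, j * j = 1 ∧ j * s * j⁻¹ = t := by
  have hsm : s ∈ Subgroup.closure {s, t} := Subgroup.subset_closure (by simp)
  have htm : t ∈ Subgroup.closure {s, t} := Subgroup.subset_closure (by simp)
  have hsi : s⁻¹ = s := inv_eq_of_mul_eq_one_left hs
  have hti : t⁻¹ = t := inv_eq_of_mul_eq_one_left ht
  have hinv : (s * t)⁻¹ = t * s := by rw [mul_inv_rev, hsi, hti]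
  have hsc : ∀ k : ℕ, s * (s * t) ^ k * s = ((s * t) ^ k)⁻¹ := by
    intro k
    have h1 : s * (s * t) * s⁻¹ = (s * t)⁻¹ := by
      rw [hinv, hsi, ← mul_assoc, hs, one_mul]
    have := conj_pow (i := k) (a := s) (b := s * t)
    rw [h1, hsi, inv_pow] at this
    exact this.symm
  have hodd : Odd (orderOf (s * t)) := by
    by_contra hne
    rw [Nat.not_odd_iff_even] at hne
    obtain ⟨m, hm⟩ := hne
    have hpos := orderOf_pos (s * t)
    have hzz : (s * t) ^ m * (s * t) ^ m = 1 := by rw [← pow_add, ← hm, pow_orderOf_eq_one]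
    have hzi : ((s * t) ^ m)⁻¹ = (s * t) ^ m := inv_eq_of_mul_eq_one_left hzz
    have c1 : s * (s * t) ^ m = (s * t) ^ m * s := by
      have := hsc m
      rw [hzi] at this
      rw [← this, mul_assoc _ s s, hs, mul_one, this]
    refine hz ((s * t) ^ m) (pow_mem (mul_mem hsm htm) _) ?_ hzz ⟨c1, ?_⟩
    · exact pow_ne_one_of_lt_orderOf (by omega) (by omega)
    · have c2 : (s * t) * (s * t) ^ m = (s * t) ^ m * (s * t) := (Commute.self_pow _ _).eq
      generalize (s * t) ^ m = z at c1 c2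
      apply mul_left_cancel (a := s)
      rw [← mul_assoc, c2, ← mul_assoc, ← mul_assoc, c1]
  obtain ⟨k, hk⟩ := hodd
  have hjj : (s * t) ^ k * s * ((s * t) ^ k * s) = 1 := by
    rw [mul_assoc, ← mul_assoc s, hsc, mul_inv_cancel]
  refine ⟨(s * t) ^ k * s, mul_mem (pow_mem (mul_mem hsm htm) _) hsm, hjj, ?_⟩
  rw [inv_eq_of_mul_eq_one_left hjj, mul_assoc _ s s, hs, mul_one]
  have h2 : (s * t) ^ k * ((s * t) ^ k) * (s * t) = 1 := by
    rw [← pow_add, ← pow_succ, ← two_mul, ← hk, pow_orderOf_eq_one]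
  rw [← mul_assoc, eq_inv_of_mul_eq_one_left h2, hinv, mul_assoc, hs, mul_one]

/-- The transvection along `p` with parameter `a` lies in `H`. -/
def InT (H : Subgroup (GG F)) (p : Vec F) (a : F) : Prop := star a = a ∧ ∃ g ∈ H, IsT p a g

/-- An isotropic vector that is the direction of an involution of `H`, suitably normalized. -/
def Good (H : Subgroup (GG F)) (p : Vec F) : Prop := p ≠ 0 ∧ B p p = 0 ∧ InT H p 1

variable {H : Subgroup (GG F)} {p p' : Vec F} {a b : F}

lemma InT.conj (h : InT H p a) {g : GG F} (hg : g ∈ H) : InT H (g • p) a := by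
  obtain ⟨ha, t, ht, h⟩ := h
  exact ⟨ha, _, mul_mem (mul_mem hg ht) (inv_mem hg), h.conj g⟩

lemma Good.conj (h : Good H p) {g : GG F} (hg : g ∈ H) : Good H (g • p) :=
  ⟨smul_ne0 g h.1, by rw [B_g]; exact h.2.1, h.2.2.conj hg⟩

lemma InT.zero : InT H p 0 :=
  ⟨star_zero _, 1, one_mem _, fun x => by rw [zero_mul, zero_smul, add_zero, one_smul]⟩

lemma InT.add (hp : B p p = 0) (ha : InT H p a) (hb : InT H p b) : InT H p (a + b) := by
  obtain ⟨ha, s, hs, hsT⟩ := ha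
  obtain ⟨hb, t, ht, htT⟩ := hb
  exact ⟨by rw [star_add, ha, hb], _, mul_mem hs ht, hsT.mul hp htT⟩

lemma InT.scale {c : F} (h : InT H (c • p) a) (hb : b = a * (c * star c)) : InT H p b := by
  obtain ⟨ha, s, hs, hsT⟩ := h
  refine ⟨?_, s, hs, hsT.scale hb⟩
  rw [hb, star_mul', star_mul', star_star, ha, mul_comm c]

lemma InT.scale' {c : F} (h : InT H p b) (hc : c ≠ 0) (hb : b = a * (c * star c)) :
    InT H (c • p) a := by
  obtain ⟨hbr, s, hs, hsT⟩ := h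
  refine ⟨?_, s, hs, hsT.scale' hb⟩
  rw [hb, star_mul', star_mul', star_star, mul_comm (star c)] at hbr
  exact mul_right_cancel₀ (mul_ne_zero hc (star_ne0 hc)) hbr

/-- Transvections along nonorthogonal directions are conjugate by an involution. -/
lemma exists_swap (hp : Good H p) (hp' : Good H p') (hne : B p p' ≠ 0) (ha0 : a ≠ 0)
    (ha : InT H p a) : ∃ j ∈ H, ∃ c : F, j * j = 1 ∧ j • p = c • p' ∧ a * (c * star c) = 1 ∧
      ∀ w, B w p = 0 → B w p' = 0 → j • w = w := by
  obtain ⟨hp0, hpp, -⟩ := hp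
  obtain ⟨hp0', hpp', -, t, ht, htT⟩ := hp'
  obtain ⟨har, s, hs, hsT⟩ := ha
  obtain ⟨j, hj, hjj, hjc⟩ := dihedral (hsT.sq hpp) (htT.sq hpp') (by
    rintro z - hz1 hzz ⟨hsz, htz⟩
    obtain ⟨r, hr0, hr, hrT⟩ := exists_isT hz1 hzz
    have h1 := hsT.perp_of_comm hp0 hpp hr0 ha0 hrT hsz
    have h2 := htT.perp_of_comm hp0' hpp' hr0 one_ne_zero hrT htz
    obtain ⟨c, rfl⟩ := iso_perp hp0 hpp hr (B_swap0 h1)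
    rw [B_smul_left] at h2
    rcases mul_eq_zero.1 h2 with rfl | h
    · exact hr0 (zero_smul _ _)
    · exact hne h)
  have hle : Subgroup.closure {s, t} ≤ H := by
    rw [Subgroup.closure_le]
    rintro x (rfl | rfl)
    exacts [hs, ht]
  have hT := hsT.conj j
  rw [hjc] at hT
  obtain ⟨c, hc⟩ := hT.eq (smul_ne0 j hp0) ha0 htT
  refine ⟨j, hle hj, c, hjj, hc, ?_, fun w hw hw' => ?_⟩
  · rw [hc] at hT
    exact (hT.scale rfl).inj hp0' htT
  · have : Subgroup.closure {s, t} ≤ MulAction.stabilizer (GG F) w := by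
      rw [Subgroup.closure_le]
      rintro x (rfl | rfl)
      exacts [hsT.fix hw, htT.fix hw']
    exact this hj

lemma swap_inv {j : GG F} {c : F} (hjj : j * j = 1) (hc0 : c ≠ 0) (hc : j • p = c • p') :
    j • p' = c⁻¹ • p := by
  have h : j • j • p = p := by rw [← mul_smul, hjj, one_smul]
  rw [hc, g_smul] at h
  rw [← h, smul_smul, inv_mul_cancel₀ hc0, one_smul]

/-- The torus element attached to a hyperbolic pair of good vectors. -/
lemma exists_torus (hp : Good H p) (hp' : Good H p') (hne : B p p' ≠ 0) (ha0 : a ≠ 0)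
    (ha : InT H p a) : ∃ h ∈ H, ∃ l : F, star l = l ∧ l * l = a ∧ h • p = l • p ∧
      h • p' = l⁻¹ • p' ∧ ∀ w, B w p = 0 → B w p' = 0 → h • w = w := by
  obtain ⟨j, hj, c, hjj, hjc, hcc, hjw⟩ := exists_swap hp hp' hne one_ne_zero hp.2.2
  obtain ⟨k, hk, d, hkk, hkd, hdd, hkw⟩ := exists_swap hp hp' hne ha0 ha
  have hc0 : c ≠ 0 := by rintro rfl; simp at hcc
  have hd0 : d ≠ 0 := by rintro rfl; simp at hdd
  have hreal : ∀ (j : GG F) (c : F), j * j = 1 → j • p = c • p' →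
      c * B p' p = star c * B p p' := by
    intro j c hjj hc
    have : B (j • p) p = B p (j • p) := by
      rw [← B_g j, ← mul_smul, hjj, one_smul]
    rwa [hc, B_smul_left, B_smul_right] at this
  have r1 := hreal j c hjj hjc
  have r2 := hreal k d hkk hkd
  have r3 : c * star d = star c * d := by
    have h0 : B p' p ≠ 0 := fun h => hne (B_swap0 h)
    apply mul_right_cancel₀ (mul_ne_zero hne h0)
    linear_combination star d * B p p' * r1 - star c * B p p' * r2
  have hdd0 := star_ne0 hd0
  refine ⟨k * j, mul_mem hk hj, c * d⁻¹, ?_, ?_, ?_, ?_, fun w hw hw' => ?_⟩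
  · rw [star_mul', star_inv₀]
    field_simp
    rw [← r3, mul_comm]
  · have : c * d⁻¹ = star c * (star d)⁻¹ := by field_simp; rw [r3, mul_comm]
    have h2 : c * d⁻¹ * (c * d⁻¹) = c * d⁻¹ * (star c * (star d)⁻¹) := by rw [← this]
    rw [h2]
    field_simp
    linear_combination hcc - hdd
  · rw [mul_smul, hjc, g_smul, swap_inv hkk hd0 hkd, smul_smul]
  · rw [mul_smul, swap_inv hjj hc0 hjc, g_smul, hkd, smul_smul, mul_inv, inv_inv, mul_comm]
  · rw [mul_smul, hjw w hw hw', hkw w hw hw']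

/-- Conjugation by torus elements scales the parameters: they are closed under multiplication as soon
as there are good vectors in two nonorthogonal directions. -/
lemma InT.mul (hp : Good H p) (hp' : Good H p') (hne : B p p' ≠ 0) (ha : InT H p a)
    (hb : InT H p b) : InT H p (a * b) := by
  by_cases ha0 : a = 0
  · rw [ha0, zero_mul]; exact InT.zero
  obtain ⟨h, hh, l, hl, hll, hhp, -, -⟩ := exists_torus hp hp' hne ha0 ha
  have := hb.conj hh
  rw [hhp] at this
  exact this.scale (by rw [hl, hll, mul_comm])

lemma InT.inv (hp : Good H p) (hp' : Good H p') (hne : B p p' ≠ 0) (ha : InT H p a) :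
    InT H p a⁻¹ := by
  by_cases ha0 : a = 0
  · rw [ha0, inv_zero]; exact InT.zero
  obtain ⟨h, hh, l, hl, hll, hhp, -, -⟩ := exists_torus hp hp' hne ha0 ha
  have := hp.2.2.conj (inv_mem hh)
  rw [eigen_inv hp.1 hhp] at this
  exact this.scale (by rw [star_inv₀, hl, ← mul_inv, hll, one_mul])

lemma InT.transport (hp : Good H p) (hp' : Good H p') (hne : B p p' ≠ 0) (ha : InT H p a) :
    InT H p' a := by
  obtain ⟨j, hj, c, hjj, hjc, hcc, hjw⟩ := exists_swap hp hp' hne one_ne_zero hp.2.2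
  have := ha.conj hj
  rw [hjc] at this
  exact this.scale (by linear_combination - a * hcc)

/-- The parameters of the transvections of `H` along `p`. -/
def paramField (hp : Good H p) (hp' : Good H p') (hne : B p p' ≠ 0) : Subfield F where
  carrier := {a | InT H p a}
  mul_mem' ha hb := InT.mul hp hp' hne ha hb
  one_mem' := hp.2.2
  add_mem' ha hb := InT.add hp.2.1 ha hb
  zero_mem' := InT.zero
  neg_mem' {a} ha := by
    change InT H p (-a)
    rw [neg_eq']
    exact ha
  inv_mem' _ ha := InT.inv hp hp' hne ha

/-- If `H` contains more than one transvection along `p`, then the parameters contain the norms of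
the inner products of good vectors. -/
lemma InT.norm (hp : Good H p) (hp' : Good H p') (ha0 : a ≠ 0) (ha1 : a ≠ 1) (ha : InT H p a) :
    InT H p (B p p' * star (B p p')) := by
  by_cases hne : B p p' = 0
  · rw [hne, zero_mul]; exact InT.zero
  obtain ⟨h, hh, l, hl, hll, hhp, hhp', hhw⟩ := exists_torus hp hp' hne ha0 ha
  obtain ⟨-, t, ht, htT⟩ := hp'.2.2
  have htp : t • p = p + B p p' • p' := by rw [htT p, one_mul]
  have hp'' := hp.conj ht
  have hne'' : B p (t • p) ≠ 0 := by
    rw [htp, B_add_right, hp.2.1, B_smul_right, zero_add]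
    exact mul_ne_zero (star_ne0 hne) hne
  obtain ⟨k, hk, m, hm, hmm, hkp, hkp', hkw⟩ := exists_torus hp hp'' hne'' ha0 ha
  obtain rfl : l = m := sq_inj (by rw [hll, hmm])
  have hl0 : l ≠ 0 := by rintro rfl; exact ha0 (by rw [← hll, zero_mul])
  have hn0 := mul_ne_zero hne (star_ne0 hne)
  set c : F := (1 + a) * (B p p' * star (B p p'))⁻¹ with hc
  have hcr : star c = c := by
    rw [hc, star_mul', star_inv₀, star_mul', star_star, star_add, ha.1, star_one,
      mul_comm (star (B p p'))]
  have hg : k * h⁻¹ = Tv p c hp.2.1 hcr := by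
    have hD : D p p' (pole p p') ≠ 0 := by
      rw [D_pole, hp.2.1, zero_mul, zero_sub, neg_ne_zero, ← B_star p p']
      exact hn0
    apply g_ext3 hD
    · rw [mul_smul, eigen_inv hp.1 hhp, g_smul, hkp, smul_smul, inv_mul_cancel₀ hl0, one_smul,
        Tv_smul, hp.2.1, mul_zero, zero_smul, add_zero]
    · rw [mul_smul, eigen_inv hp'.1 hhp', g_smul, inv_inv, Tv_smul]
      have e1 : p' = (B p p')⁻¹ • (t • p + p) := by
        rw [htp]
        ext i
        simp only [Pi.add_apply, Pi.smul_apply, smul_eq_mul]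
        field_simp
        linear_combination - add_self' (p i)
      have e2 : k • p' = (B p p')⁻¹ • (l⁻¹ • (p + B p p' • p') + l • p) := by
        conv_lhs => rw [e1]
        rw [g_smul, smul_add, hkp', hkp, htp]
      rw [e2, ← B_star p p', hc, ← hll]
      ext i
      simp only [Pi.add_apply, Pi.smul_apply, smul_eq_mul]
      have := star_ne0 hne
      field_simp
      ring
    · have hw1 : B (pole p p') p = 0 := B_pole_self1' _ _
      have hw2 : B (pole p p') p' = 0 := B_pole_self2' _ _
      have hw3 : h⁻¹ • pole p p' = pole p p' := by
        rw [inv_smul_eq_iff, hhw _ hw1 hw2]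
      rw [mul_smul, hw3, hkw _ hw1 (by rw [htp, B_add_right, B_smul_right, hw1, hw2]; simp),
        Tv_smul, hw1, mul_zero, zero_smul, add_zero]
  have hcI : InT H p c :=
    ⟨hcr, _, mul_mem hk (inv_mem hh), fun x => by rw [hg, Tv_smul]⟩
  have h1a : 1 + a ≠ 0 := fun h => ha1 (add_eq0.1 h).symm
  have := (hcI.inv hp hp' hne).mul hp hp' hne (hp.2.2.add hp.2.1 ha)
  rw [hc] at this
  have e : ((1 + a) * (B p p' * star (B p p'))⁻¹)⁻¹ * (1 + a) = B p p' * star (B p p') := by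
    have := star_ne0 hne
    field_simp
  rwa [e] at this

lemma Good.nonorth (hp : Good H p) (hp' : Good H p') (h : ∀ c : F, p' ≠ c • p) : B p p' ≠ 0 := by
  intro h0
  obtain ⟨c, hc⟩ := iso_perp hp.1 hp.2.1 hp'.2.1 h0
  exact h c hc

/-- An irreducible group with a good vector has three linearly independent ones. -/
lemma exists_triple (hF : Fix H = ∅) {p1 : Vec F} (h1 : Good H p1) :
    ∃ p2 p3 : Vec F, Good H p2 ∧ Good H p3 ∧ B p1 p2 ≠ 0 ∧ D p1 p2 p3 ≠ 0 := by
  have hfix : ∀ (v : Vec F) (hv : v ≠ 0), ∃ h ∈ H, ∀ c : F, h • v ≠ c • v := by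
    intro v hv
    by_contra! hcon
    have : pt v hv ∈ Fix H := by
      rw [mem_Fix]
      intro k hk
      rw [g_pt_eq]
      exact hcon k hk
    rw [hF] at this
    exact absurd this (Finset.notMem_empty _)
  obtain ⟨h, hh, hne⟩ := hfix p1 h1.1
  have h2 := h1.conj hh
  have h12 := h1.nonorth h2 hne
  refine ⟨h • p1, ?_⟩
  generalize h • p1 = p2 at h2 h12
  have hw : pole p1 p2 ≠ 0 := by
    intro h0
    have h3 := D_pole p1 p2
    rw [h0, h1.2.1, zero_mul, zero_sub, ← B_star p1 p2] at h3
    have : D p1 p2 0 = 0 := by simp [D]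
    rw [this] at h3
    exact mul_ne_zero h12 (star_ne0 h12) (neg_eq_zero.1 h3.symm)
  obtain ⟨k, hk, hkne⟩ := hfix _ hw
  by_cases hk1 : D p1 p2 (k • p1) = 0
  · by_cases hk2 : D p1 p2 (k • p2) = 0
    · exfalso
      have e : ∀ x : Vec F, D p1 p2 (k • x) = 0 → B (k⁻¹ • pole p1 p2) x = 0 := by
        intro x hx
        have : B x (k⁻¹ • pole p1 p2) = 0 := by rw [B_inv_right, B_pole, D_rot, D_rot, hx]
        exact B_swap0 this
      obtain ⟨c, hc⟩ := eq_smul_pole hw (e _ hk1) (e _ hk2)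
      exact hkne _ (by have := eigen_inv hw hc; rwa [inv_inv] at this)
    · exact ⟨k • p2, h2, h2.conj hk, h12, hk2⟩
  · exact ⟨k • p1, h2, h1.conj hk, h12, hk1⟩

/-- The determinant of the Gram matrix of three isotropic vectors is the trace of the product of their
inner products, which is therefore not fixed by the involution. -/
lemma gram_iso {p1 p2 p3 : Vec F} (h1 : B p1 p1 = 0) (h2 : B p2 p2 = 0) (h3 : B p3 p3 = 0)
    (hD : D p1 p2 p3 ≠ 0) :
    star (B p1 p2 * B p2 p3 * B p3 p1) ≠ B p1 p2 * B p2 p3 * B p3 p1 := by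
  intro h
  have h4 := gram p1 p2 p3
  have h5 := mul_ne_zero hD (star_ne0 hD)
  rw [h4, h1, h2, h3] at h5
  rw [star_mul', star_mul', B_star, B_star, B_star] at h
  apply h5
  linear_combination h + add_self' (B p1 p2 * B p2 p3 * B p3 p1)

/-- An irreducible group containing two nontrivial transvections along one direction contains all of
them. -/
lemma InT.full (hF : Fix H = ∅) {p1 : Vec F} (h1 : Good H p1) (ha0 : a ≠ 0) (ha1 : a ≠ 1)
    (ha : InT H p1 a) (hb : star b = b) : InT H p1 b := by
  obtain ⟨p2, p3, h2, h3, h12, hD⟩ := exists_triple hF h1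
  by_contra hcon
  have hI3 : B p1 p3 ≠ 0 := by
    intro h0
    obtain ⟨c, rfl⟩ := iso_perp h1.1 h1.2.1 h3.2.1 h0
    exact hD (by simp)
  have ha2 : InT H p2 a := ha.transport h1 h2 h12
  have ha3 : InT H p3 a := ha.transport h1 h3 hI3
  obtain ⟨-, t, ht, htT⟩ := h2.2.2
  have h3' := h3.conj ht
  have e3 : t • p3 = p3 + B p3 p2 • p2 := by rw [htT, one_mul]
  set E : Subfield F := paramField h1 h2 h12 with hE
  have mE : ∀ x, x ∈ E ↔ InT H p1 x := fun x => Iff.rfl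
  have n12 := ha.norm h1 h2 ha0 ha1
  have n13 := ha.norm h1 h3 ha0 ha1
  have n23 : InT H p1 (B p2 p3 * star (B p2 p3)) :=
    (ha2.norm h2 h3 ha0 ha1).transport h2 h1 (fun h => h12 (B_swap0 h))
  have n13' := ha.norm h1 h3' ha0 ha1
  rw [← mE] at n12 n13 n23 n13'
  refine gram_iso h1.2.1 h2.2.1 h3.2.1 hD (real_of_quadratic E (fun x hx => hx.1) ⟨b, hb, hcon⟩
    (t := B p1 p2 * B p2 p3 * B p3 p1 + star (B p1 p2 * B p2 p3 * B p3 p1))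
    (m := B p1 p2 * B p2 p3 * B p3 p1 * star (B p1 p2 * B p2 p3 * B p3 p1)) ?_ ?_ ?_)
  · have := E.add_mem (E.add_mem n13' n13) (E.mul_mem n12 n23)
    convert this using 1
    rw [e3, B_add_right, B_smul_right]
    simp only [star_add, star_mul', B_star]
    linear_combination - add_self' (B p1 p3 * B p3 p1) -
      add_self' (B p1 p2 * B p2 p1 * B p2 p3 * B p3 p2)
  · have := E.mul_mem (E.mul_mem n12 n23) n13
    convert this using 1
    simp only [star_mul', B_star]
    ring
  · linear_combination - add_self' (B p1 p2 * B p2 p3 * B p3 p1 *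
      star (B p1 p2 * B p2 p3 * B p3 p1))

end Even

/-! ### Groups generated by all transvections -/

section Full

variable {F : Type} [Field F] [StarRing F] [HermField F]

/-- `H` contains all transvections along `p`. -/
def Full (H : Subgroup (GG F)) (p : Vec F) : Prop := ∀ a : F, star a = a → InT H p a

variable {H : Subgroup (GG F)}

lemma Full.conj {p : Vec F} (h : Full H p) {g : GG F} (hg : g ∈ H) : Full H (g • p) :=
  fun a ha => (h a ha).conj hg

lemma Full.smul {p : Vec F} (h : Full H p) {c : F} (hc : c ≠ 0) : Full H (c • p) := by
  intro a ha
  refine (h (a * (c * star c)) ?_).scale' hc rfl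
  rw [star_mul', star_mul', star_star, ha, mul_comm c]

/-- One transvection moves `x` to `y` if the two have equal norm and their inner product is real
and different from that norm. -/
lemma step {w x y : Vec F} (hW : ∀ r : Vec F, r ≠ 0 → B r r = 0 → B r w = 0 → Full H r)
    (hx : B x w = 0) (hy : B y w = 0) (hxy : B y y = B x x) (hr : star (B x y) = B x y)
    (hne : B x y ≠ B x x) : ∃ h ∈ H, h • x = y ∧ h • w = w := by
  have hyx : B y x = B x y := by rw [← B_star x y, hr]
  have hnu : B x x + B x y ≠ 0 := fun h => hne (add_eq0.1 h).symm
  have hbr : B x (x + y) = B x x + B x y := B_add_right _ _ _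
  have hiso : B (x + y) (x + y) = 0 := by
    rw [B_add_left, B_add_right, B_add_right, hyx, hxy]
    linear_combination add_self' (B x x) + add_self' (B x y)
  have h0 : x + y ≠ 0 := ne_zero_of_B' (x := x) (by rwa [hbr])
  have hw : B (x + y) w = 0 := by rw [B_add_left, hx, hy, add_zero]
  obtain ⟨-, g, hg, hgT⟩ := hW _ h0 hiso hw (B x x + B x y)⁻¹ (by
    rw [star_inv₀, star_add, B_real, hr])
  refine ⟨g, hg, ?_, hgT.fix (B_swap0 hw)⟩
  rw [hgT, hbr, inv_mul_cancel₀ hnu, one_smul]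
  ext i
  simp only [Pi.add_apply]
  linear_combination add_self' (x i)

/-- If `H` contains all transvections with direction orthogonal to the nonisotropic vector `w`, then its
stabilizer of `w` is transitive on vectors of given nonzero norm orthogonal to `w`. -/
lemma trans_W {w x y : Vec F} (hw : B w w ≠ 0)
    (hW : ∀ r : Vec F, r ≠ 0 → B r r = 0 → B r w = 0 → Full H r)
    (hx : B x w = 0) (hy : B y w = 0) (hxy : B y y = B x x) (hx0 : B x x ≠ 0) :
    ∃ h ∈ H, h • x = y ∧ h • w = w := by
  obtain ⟨m, hm, hmr⟩ := exists_unit_real (B x y)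
  -- a multiple of `y` having real inner product with `x`
  have hm0 : m ≠ 0 := by rintro rfl; simp at hm
  set y' : Vec F := star m • y with hy'
  have hy'w : B y' w = 0 := by rw [hy', B_smul_left, hy, mul_zero]
  have hy'y : B y' y' = B x x := by
    rw [hy', B_smul_left, B_smul_right, star_star, hxy]
    linear_combination B x x * hm
  have hxy' : B x y' = m * B x y := by rw [hy', B_smul_right, star_star]
  have s1 : ∃ h ∈ H, h • x = y' ∧ h • w = w := by
    by_cases hne : B x y' = B x x
    · refine ⟨1, one_mem _, ?_, one_smul _ _⟩
      rw [one_smul]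
      have hyx' : B y' x = B x x := by rw [← B_star x y', hne, B_real]
      have hp : pole x w ≠ 0 := by
        intro h0
        have h3 := D_pole x w
        rw [h0, hx, zero_mul, sub_zero] at h3
        have : D x w 0 = 0 := by simp [D]
        rw [this] at h3
        exact mul_ne_zero hx0 hw h3.symm
      obtain ⟨c, hc⟩ := eq_smul_pole (z := x + y') hp
        (by rw [B_add_left, hyx', add_self']) (by rw [B_add_left, hx, hy'w, add_zero])
      have h4 : B (x + y') (x + y') = 0 := by
        rw [B_add_left, B_add_right, B_add_right, hyx', hne, hy'y]
        linear_combination 2 * add_self' (B x x)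
      rw [hc, B_smul_left, B_smul_right, lagrange, hx, zero_mul, sub_zero] at h4
      have hc0 : c = 0 := by
        by_contra h
        exact mul_ne_zero h (mul_ne_zero (star_ne0 h) (mul_ne_zero hx0 hw)) h4
      rw [hc0, zero_smul] at hc
      ext i
      exact add_eq0.1 (congrFun hc i)
    · exact step hW hx hy'w hy'y (by rw [hxy', hmr]) hne
  obtain ⟨h1, hh1, h1x, h1w⟩ := s1
  -- pass through a vector orthogonal to `y'`
  obtain ⟨b, hb⟩ := exists_norm (B_real w)
  have hb0 : b ≠ 0 := by rintro rfl; rw [zero_mul] at hb; exact hw hb.symm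
  set u : Vec F := b⁻¹ • pole y' w with hu
  have huw : B u w = 0 := by rw [hu, B_smul_left, B_pole_self2', mul_zero]
  have huy' : B u y' = 0 := by rw [hu, B_smul_left, B_pole_self1', mul_zero]
  have huu : B u u = B x x := by
    rw [hu, B_smul_left, B_smul_right, lagrange, hy'w, zero_mul, sub_zero, hy'y, ← hb, star_inv₀]
    have := star_ne0 hb0
    field_simp
  have huy : B u y = 0 := by
    rw [hy', B_smul_right, star_star] at huy'
    exact (mul_eq_zero.1 huy').resolve_left hm0
  have hy'u := B_swap0 huy'
  obtain ⟨h2, hh2, h2x, h2w⟩ := step hW hy'w huw (by rw [huu, hy'y]) (by rw [hy'u, star_zero])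
    (by rw [hy'u, hy'y]; exact hx0.symm)
  obtain ⟨h3, hh3, h3x, h3w⟩ := step hW huw hy (by rw [huu, hxy]) (by rw [huy, star_zero])
    (by rw [huy, huu]; exact hx0.symm)
  refine ⟨h3 * (h2 * h1), mul_mem hh3 (mul_mem hh2 hh1), ?_, ?_⟩
  · rw [mul_smul, mul_smul, h1x, h2x, h3x]
  · rw [mul_smul, mul_smul, h1w, h2w, h3w]

/-- For a unit vector `e` and any vector `f`, either the inner product of `e` and `f` does not have
norm one, or some unit vector orthogonal to `e` has this property with respect to `f`. -/
lemma exists_mid {e f : Vec F} (he : B e e = 1) :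
    B e f * B f e ≠ 1 ∨
      ∃ u, B u u = 1 ∧ B e u = 0 ∧ B u f * B f u ≠ 1 := by
  by_contra! hcon
  obtain ⟨hN, hcon⟩ := hcon
  obtain ⟨v, w, hv, hw, hev, hew, hvw⟩ := exists_onb he
  have hwv := B_swap0 hvw
  have hve := B_swap0 hev
  have hwe := B_swap0 hew
  have nv := hcon v hv hev
  have nw := hcon w hw hew
  obtain ⟨o, hor, ho⟩ := exists_omega (F := F)
  obtain ⟨z, hz, hz1⟩ := exists_unit_ne (F := F)
  have ho3 : o * o * o = 1 := by linear_combination (o - 1) * ho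
  have h1 := hcon ((o * B f v) • v + (o * o * z * B f w) • w) (by
    simp only [B_add_left, B_add_right, B_smul_left, B_smul_right, hv, hw, hvw, hwv, star_mul', hor,
      B_star]
    linear_combination o * o * nv + o * o * o * o * (B w f * B f w) * hz + o ^ 4 * nw +
      o * ho3 + ho - add_self' (1 : F)) (by
    simp only [B_add_right, B_smul_right, hev, hew]; ring)
  simp only [B_add_left, B_add_right, B_smul_left, B_smul_right, star_mul', hor, B_star] at h1
  have h2 : (o + o * o * z) * (o + o * o * star z) = 1 := by
    have e1 : o * B f v * B v f + o * o * z * B f w * B w f = o + o * o * z := by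
      linear_combination o * nv + o * o * z * nw
    have e2 : o * B v f * B f v + o * o * star z * B w f * B f w = o + o * o * star z := by
      linear_combination o * nv + o * o * star z * nw
    rwa [e1, e2] at h1
  have h3 : z + star z = 0 := by
    have e1 : o * o + o * o * o * (z + star z) + o * o * o * o * (z * star z) = 1 := by
      linear_combination h2
    rw [hz, ho3] at e1
    linear_combination e1 - ho + add_self' (1 : F)
  have h4 : z = star z := add_eq0.1 h3
  rw [← h4] at hz
  exact hz1 (sq_inj (by rw [hz, one_mul]))

/-- The group is generated by its transvections. -/
lemma eq_top_of_full (hW : ∀ r : Vec F, r ≠ 0 → B r r = 0 → Full H r) : H = ⊤ := by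
  have hN0 : ∀ {e f : Vec F}, B e e = 1 → B f f = 1 → B e f * B f e ≠ 1 →
      ∃ h ∈ H, h • e = f := by
    intro e f he hf hne
    have hw : B (pole e f) (pole e f) ≠ 0 := by
      rw [lagrange, he, hf, one_mul]
      exact fun h => hne (sub_eq_zero.1 h).symm
    obtain ⟨h, hh, hef, -⟩ := trans_W hw (fun r h0 h1 _ => hW r h0 h1) (B_pole_self1 e f)
      (B_pole_self2 e f) (by rw [he, hf]) (by rw [he]; exact one_ne_zero)
    exact ⟨h, hh, hef⟩
  have hN : ∀ {e f : Vec F}, B e e = 1 → B f f = 1 → ∃ h ∈ H, h • e = f := by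
    intro e f he hf
    rcases exists_mid (f := f) he with h | ⟨u, hu, heu, huf⟩
    · exact hN0 he hf h
    · obtain ⟨h, hh, heu⟩ := hN0 he hu (by rw [heu, zero_mul]; exact zero_ne_one)
      obtain ⟨k, hk, hku⟩ := hN0 hu hf huf
      exact ⟨k * h, mul_mem hk hh, by rw [mul_smul, heu, hku]⟩
  rw [eq_top_iff]
  intro g _
  obtain ⟨p, hp0, hp⟩ := exists_iso_vec (F := F)
  obtain ⟨e, he, -⟩ := exists_noniso_of_iso hp0 hp
  obtain ⟨u, v, hu, hv, heu, hev, huv⟩ := exists_onb he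
  obtain ⟨h, hh, hhe⟩ := hN he (by rw [B_g g, he])
  have ge : (h⁻¹ * g) • e = e := by rw [mul_smul, ← hhe, inv_smul_smul]
  have hgu : B ((h⁻¹ * g) • u) e = 0 := by
    have := B_g (h⁻¹ * g) u e
    rwa [ge, B_swap0 heu] at this
  obtain ⟨k, hk, hku, hke⟩ := trans_W (H := H) (w := e) (x := u) (y := (h⁻¹ * g) • u)
    (by rw [he]; exact one_ne_zero) (fun r h0 h1 _ => hW r h0 h1)
    (B_swap0 heu) hgu (B_g _ _ _) (by rw [hu]; exact one_ne_zero)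
  have h1 : k⁻¹ * (h⁻¹ * g) = 1 := by
    apply eq_one2 (a := e) (b := u)
    · rw [he, hu, heu]; simp
    · rw [mul_smul, ge, inv_smul_eq_iff, hke]
    · rw [mul_smul, ← hku, inv_smul_smul]
  have h2 : g = h * k := by
    rw [inv_mul_eq_one] at h1
    rw [h1, mul_inv_cancel_left]
  rw [h2]
  exact mul_mem hh hk

/-- An irreducible group containing more than one transvection along a direction is everything. -/
lemma eq_top_of_InT {p1 : Vec F} (hF : Fix H = ∅) (h1 : Good H p1) {a : F} (ha0 : a ≠ 0)
    (ha1 : a ≠ 1) (ha : InT H p1 a) : H = ⊤ := by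
  obtain ⟨p2, p3, h2, h3, h12, hD⟩ := exists_triple hF h1
  have f1 : Full H p1 := fun b hb => ha.full hF h1 ha0 ha1 hb
  have f2 : Full H p2 := fun b hb => (f1 b hb).transport h1 h2 h12
  have f3 : Full H p3 := by
    have hI3 : B p1 p3 ≠ 0 := by
      intro h0
      obtain ⟨c, rfl⟩ := iso_perp h1.1 h1.2.1 h3.2.1 h0
      exact hD (by simp)
    exact fun b hb => (f1 b hb).transport h1 h3 hI3
  have h21 : B p2 p1 ≠ 0 := fun h => h12 (B_swap0 h)
  have hDp : D p1 p2 (pole p1 p2) ≠ 0 := by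
    rw [D_pole, h1.2.1, zero_mul, zero_sub, neg_ne_zero]
    exact mul_ne_zero h12 h21
  generalize hw : pole p1 p2 = w at hDp
  have hw1 : B p1 w = 0 := by rw [← hw]; exact B_pole_self1 _ _
  have hw2 : B p2 w = 0 := by rw [← hw]; exact B_pole_self2 _ _
  have hww : B w w ≠ 0 := by
    rw [← hw, lagrange, h1.2.1, zero_mul, zero_sub, neg_ne_zero]
    exact mul_ne_zero h12 h21
  have h3w : B p3 w ≠ 0 := by
    rw [← hw, B_pole]
    rwa [← D_rot]
  have hperp : ∀ x : Vec F, B x w = 0 → ∃ a b : F, x = a • p1 + b • p2 := by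
    intro x hx
    have h := cramer p1 p2 w x
    have h0 := congrArg (fun z => B z w) h
    simp only [B_add_left, B_smul_left, hx, hw1, hw2, mul_zero, zero_add] at h0
    have h0 := (mul_eq_zero.1 h0.symm).resolve_right hww
    rw [h0, zero_smul, add_zero] at h
    refine ⟨(D p1 p2 w)⁻¹ * D x p2 w, (D p1 p2 w)⁻¹ * D p1 x w, ?_⟩
    rw [mul_smul, mul_smul, ← smul_add, ← h, smul_smul, inv_mul_cancel₀ hDp, one_smul]
  have hWp : ∀ r : Vec F, r ≠ 0 → B r r = 0 → B r w = 0 → Full H r := by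
    intro r hr0 hr hrw
    obtain ⟨x, y, rfl⟩ := hperp r hrw
    by_cases hx : x = 0
    · subst hx
      rw [zero_smul, zero_add] at hr0 ⊢
      exact f2.smul (fun h => hr0 (by rw [h, zero_smul]))
    simp only [B_add_left, B_add_right, B_smul_left, B_smul_right, h1.2.1, h2.2.1, mul_zero,
      zero_add, add_zero] at hr
    have hxs := star_ne0 hx
    -- the vector is proportional to the image of `p1` under a transvection along `p2`
    have har : star (y * (x * B p1 p2)⁻¹) = y * (x * B p1 p2)⁻¹ := by
      rw [star_mul', star_inv₀, star_mul', B_star]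
      field_simp
      have := add_eq0.1 hr
      linear_combination -this
    obtain ⟨-, g, hg, hgT⟩ := f2 _ har
    have e : x • p1 + y • p2 = x • g • p1 := by
      rw [hgT, smul_add, smul_smul]
      congr 2
      field_simp
    rw [e]
    exact (f1.conj hg).smul hx
  apply eq_top_of_full
  intro r hr0 hr
  by_cases hrw : B r w = 0
  · exact hWp r hr0 hr hrw
  -- split off the components along `w`
  have hdec : ∀ r : Vec F, B r r = 0 → B (r + (B r w / B w w) • w) w = 0 ∧
      B (r + (B r w / B w w) • w) (r + (B r w / B w w) • w) = B r w * B w r / B w w := by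
    intro r hr
    have hs : star (B r w / B w w) = B w r / B w w := by rw [star_div₀, B_star, B_real]
    constructor
    · rw [B_add_left, B_smul_left, div_mul_cancel₀ _ hww, add_self']
    · simp only [B_add_left, B_add_right, B_smul_left, B_smul_right, hs, hr]
      field_simp
      linear_combination add_self' (B r w * B w r)
  set c : F := B p3 w / B r w with hc
  have hc0 : c ≠ 0 := div_ne_zero h3w hrw
  have hcr : B (c • r) (c • r) = 0 := by simp [hr]
  have hcw : B (c • r) w = B p3 w := by rw [B_smul_left, hc, div_mul_cancel₀ _ hrw]
  have hcw' : B w (c • r) = B w p3 := by rw [← B_star (c • r), hcw, B_star]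
  obtain ⟨d1, d2⟩ := hdec p3 h3.2.1
  obtain ⟨d3, d4⟩ := hdec (c • r) hcr
  have h3w' : B w p3 ≠ 0 := fun h => h3w (B_swap0 h)
  obtain ⟨h, hh, hhx, hhw⟩ := trans_W hww hWp d1 d3 (by rw [d2, d4, hcw, hcw'])
    (by rw [d2]; exact div_ne_zero (mul_ne_zero h3w h3w') hww)
  rw [hcw, smul_add, g_smul, hhw] at hhx
  have e := add_right_cancel hhx
  have : r = c⁻¹ • h • p3 := by rw [e, smul_smul, inv_mul_cancel₀ hc0, one_smul]
  rw [this]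
  exact (f3.conj hh).smul (inv_ne_zero hc0)

end Full

/-! ### Classification of the irreducible subgroups -/

section Transfer

/-- Burnside transfer: if all `2`-subgroups of `H` are cyclic, then `H` has a normal subgroup of
odd order which can only be trivial when `H` is a `2`-group. -/
lemma exists_odd_normal {G : Type} [Group G] [Fintype G] {H : Subgroup G}
    (h2 : 2 ∣ Nat.card H) (hc : ∀ S ≤ H, IsPGroup 2 S → IsCyclic S) :
    ∃ K ≤ H, (∀ h ∈ H, ∀ k ∈ K, h * k * h⁻¹ ∈ K) ∧ Odd (Nat.card K) ∧
      (K = ⊥ → IsPGroup 2 H) := by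
  let P : Sylow 2 H := default
  have hP : IsCyclic P := by
    have e := (P : Subgroup H).equivMapOfInjective H.subtype H.subtype_injective
    rw [e.isCyclic]
    exact hc _ (Subgroup.map_subtype_le _) (P.2.map _)
  have hp : (Nat.card H).minFac = 2 := (Nat.minFac_eq_two_iff _).2 h2
  have hcomp := IsCyclic.isComplement' hp hP
  have hnd := MonoidHom.not_dvd_card_ker_transferSylow P (hP.normalizer_le_centralizer hp)
  generalize hK : (MonoidHom.transferSylow P (hP.normalizer_le_centralizer hp)).ker = K0 at *
  have hn : K0.Normal := by rw [← hK]; infer_instance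
  refine ⟨K0.map H.subtype, Subgroup.map_subtype_le _, ?_, ?_, ?_⟩
  · rintro h hh _ ⟨k, hk, rfl⟩
    exact ⟨⟨h, hh⟩ * k * ⟨h, hh⟩⁻¹, hn.conj_mem k hk ⟨h, hh⟩, rfl⟩
  · rw [← Nat.not_even_iff_odd, even_iff_two_dvd,
      ← Nat.card_congr (K0.equivMapOfInjective H.subtype H.subtype_injective).toEquiv]
    exact hnd
  · intro h
    rw [Subgroup.map_eq_bot_iff_of_injective _ H.subtype_injective] at h
    subst h
    rw [Subgroup.isComplement'_bot_left] at hcomp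
    intro x
    obtain ⟨k, hk⟩ := P.2 ⟨x, by rw [hcomp]; trivial⟩
    exact ⟨k, congrArg Subtype.val hk⟩

end Transfer

section Sylow

variable {F : Type} [Field F] [StarRing F] [HermField F]

lemma one_of_two_pow {d : F} : ∀ {k : ℕ}, d ^ 2 ^ k = 1 → d = 1
  | 0, h => by simpa using h
  | k + 1, h => by
    rw [pow_succ, pow_mul, sq] at h
    exact one_of_two_pow (sq_inj (h.trans (one_mul 1).symm))

lemma pow_smul_eigen {g : GG F} {p : Vec F} {d : F} (h : g • p = d • p) (k : ℕ) :
    g ^ k • p = d ^ k • p := by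
  induction k with
  | zero => simp
  | succ k ih => rw [pow_succ, mul_smul, h, g_smul, ih, smul_smul, pow_succ, mul_comm]

variable {H : Subgroup (GG F)}

lemma good_of_involution {t : GG F} (ht : t ∈ H) (h1 : t ≠ 1) (h2 : t * t = 1) :
    ∃ p, Good H p ∧ IsT p 1 t := by
  obtain ⟨p, hp0, hp, hT⟩ := exists_isT h1 h2
  exact ⟨p, ⟨hp0, hp, star_one F, t, ht, hT⟩, hT⟩

lemma exists_involution {G : Type} [Group G] [Fintype G] {H : Subgroup G}
    (h2 : 2 ∣ Nat.card H) : ∃ t ∈ H, t ≠ 1 ∧ t * t = 1 := by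
  have := Fact.mk Nat.prime_two
  obtain ⟨x, hx⟩ := exists_prime_orderOf_dvd_card' 2 h2
  refine ⟨x, x.2, ?_, ?_⟩
  · intro h
    have : x = 1 := Subtype.ext h
    rw [this, orderOf_one] at hx
    omega
  · have := pow_orderOf_eq_one x
    rw [hx, sq] at this
    exact congrArg Subtype.val this

lemma exists_central_involution {G : Type} [Group G] [Fintype G] {S : Subgroup G}
    (hS : IsPGroup 2 S) (h1 : S ≠ ⊥) :
    ∃ t ∈ S, t ≠ 1 ∧ t * t = 1 ∧ ∀ g ∈ S, g * t * g⁻¹ = t := by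
  have := Fact.mk Nat.prime_two
  have : Nontrivial S := (Subgroup.nontrivial_iff_ne_bot _).2 h1
  have hn := hS.center_nontrivial
  have h2 : 2 ∣ Nat.card (Subgroup.center S) := by
    rcases (hS.to_subgroup (Subgroup.center S)).card_eq_or_dvd with h | h
    · have := Finite.one_lt_card (α := Subgroup.center S)
      omega
    · exact h
  obtain ⟨t, ht, ht1, ht2⟩ := exists_involution h2
  refine ⟨t, t.2, fun h => ht1 (Subtype.ext h), congrArg Subtype.val ht2, fun g hg => ?_⟩
  have := congrArg Subtype.val (Subgroup.mem_center_iff.1 ht ⟨g, hg⟩)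
  simp only [Subgroup.coe_mul] at this
  rw [this, mul_inv_cancel_right]

/-- If no direction carries more than one transvection of `H`, then the `2`-subgroups of `H`
are cyclic and fix an isotropic vector: otherwise two different quotients `α / α'` would give a
cube root of unity of norm one. -/
lemma two_group (hH : ∀ p a, Good H p → InT H p a → a = 0 ∨ a = 1) {S : Subgroup (GG F)}
    (hSH : S ≤ H) (hS : IsPGroup 2 S) (h1 : S ≠ ⊥) :
    IsCyclic S ∧ ∃ p : Vec F, p ≠ 0 ∧ ∀ g ∈ S, g • p = p := by
  obtain ⟨t, ht, ht1, ht2, htc⟩ := exists_central_involution hS h1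
  obtain ⟨p, hG, hT⟩ := good_of_involution (hSH ht) ht1 ht2
  have hp0 := hG.1
  have hp := hG.2.1
  have hfix : ∀ g ∈ S, g • p = p := by
    intro g hg
    have hc := hT.conj g
    rw [htc g hg] at hc
    obtain ⟨d, hd⟩ := hc.eq (smul_ne0 g hp0) one_ne_zero hT
    obtain ⟨k, hk⟩ := hS ⟨g, hg⟩
    have hk' : g ^ 2 ^ k = 1 := congrArg Subtype.val hk
    have hpow := pow_smul_eigen hd (2 ^ k)
    rw [hk', one_smul] at hpow
    have hdk : d ^ 2 ^ k = 1 := by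
      by_contra hne
      have : (d ^ 2 ^ k - 1) • p = 0 := by rw [sub_smul, ← hpow, one_smul, sub_self]
      exact (smul_ne_zero (sub_ne_zero.2 hne) hp0) this
    rw [hd, one_of_two_pow hdk, one_smul]
  refine ⟨?_, p, hp0, hfix⟩
  obtain ⟨q, y, hyp⟩ := exists_Hyp hp0 hp
  have hD := hyp.D_ne
  have hco := hyp.coord
  have hst := fun {g : GG F} (h : g • p = p) => hyp.stab h
  obtain ⟨-, hpq, hq, hpy, hy, hyq⟩ := hyp
  have hyp' : B y p = 1 := by rw [← B_star, hpy, star_one]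
  have hqp := B_swap0 hpq
  have hqy := B_swap0 hyq
  have hform : ∀ (g : GG F) (c : F), g • p = p → g • q = q → g • y = y + c • p → IsT p c g := by
    intro g c h1 h2 h3 x
    have e := congrArg (fun z => g • z) (hco x)
    simp only [smul_add, g_smul, h1, h2, h3] at e
    rw [e]
    conv_rhs => rw [hco x]
    simp only [B_add_left, B_smul_left, hp, hqp, hyp', mul_zero, mul_one, zero_add]
    module
  have key : ∀ g ∈ S, ∃ α : F, g • q = q + α • p ∧ (α = 0 ∨ α * star α = 1) ∧
      (α = 0 → g = 1 ∨ g = t) ∧ (α ≠ 0 → g * g = t) := by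
    intro g hg
    obtain ⟨α, c, h1, h2, h3⟩ := hst (hfix g hg)
    have hgp := hfix g hg
    have hsq : IsT p (α * star α) (g * g) := by
      apply hform
      · rw [mul_smul, hgp, hgp]
      · rw [mul_smul, h1, smul_add, g_smul, h1, hgp, add_assoc, ← add_smul, add_self', zero_smul,
          add_zero]
      · rw [mul_smul, h2, smul_add, smul_add, g_smul, g_smul, h1, h2, hgp]
        have e : ∀ z : F, z + z = 0 := add_self'
        ext i
        simp only [Pi.add_apply, Pi.smul_apply, smul_eq_mul]
        linear_combination e (star α * q i) + e (c * p i)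
    have hin : InT H p (α * star α) :=
      ⟨by rw [star_mul', star_star, mul_comm], g * g, mul_mem (hSH hg) (hSH hg), hsq⟩
    have h01 : α = 0 ∨ α * star α = 1 := by
      rcases hH p _ hG hin with h | h
      · left
        by_contra hα
        exact (mul_ne_zero hα (star_ne0 hα)) h
      · exact Or.inr h
    refine ⟨α, h1, h01, ?_, ?_⟩
    · rintro rfl
      have hT' : IsT p c g := by
        apply hform g c hgp
        · rw [h1, zero_smul, add_zero]
        · rw [h2, star_zero, zero_smul, add_zero]
      rw [zero_mul] at h3
      rcases hH p c hG ⟨(add_eq0.1 h3).symm, g, hSH hg, hT'⟩ with rfl | rfl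
      · left
        apply g_ext
        intro x
        rw [hT' x, zero_mul, zero_smul, add_zero, one_smul]
      · right
        apply g_ext
        intro x
        rw [hT' x, hT x]
    · intro hα
      rw [h01.resolve_left hα] at hsq
      apply g_ext
      intro x
      rw [hsq x, hT x]
  by_cases hall : ∃ g0 ∈ S, g0 ≠ 1 ∧ g0 ≠ t
  · obtain ⟨g0, hg0, hg1, hgt⟩ := hall
    obtain ⟨α0, hq0, hN0, h00, hs0⟩ := key g0 hg0
    have hα0 : α0 ≠ 0 := fun h => (h00 h).elim hg1 hgt
    have hN0 := hN0.resolve_left hα0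
    have htz : t ∈ Subgroup.zpowers g0 := by
      rw [← hs0 hα0]
      exact mul_mem (Subgroup.mem_zpowers g0) (Subgroup.mem_zpowers g0)
    have hle : S ≤ Subgroup.zpowers g0 := by
      intro g hg
      obtain ⟨α, hqα, hN, h0, -⟩ := key g hg
      by_cases hα : α = 0
      · rcases h0 hα with rfl | rfl
        · exact one_mem _
        · exact htz
      have hN := hN.resolve_left hα
      obtain ⟨β, hqβ, hNβ, h0β, -⟩ := key (g * g0) (mul_mem hg hg0)
      have hβ : β = α + α0 := by
        rw [mul_smul, hq0, smul_add, g_smul, hqα, hfix g hg, add_assoc, add_right_inj,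
          ← add_smul] at hqβ
        by_contra hne
        have : (β - (α + α0)) • p = 0 := by rw [sub_smul, ← hqβ, sub_self]
        exact (smul_ne_zero (sub_ne_zero.2 hne) hp0) this
      rcases hNβ with hb | hb
      · have hmem : g * g0 ∈ Subgroup.zpowers g0 := by
          rcases h0β hb with h | h <;> rw [h]
          · exact one_mem _
          · exact htz
        rwa [Subgroup.mul_mem_cancel_right _ (Subgroup.mem_zpowers g0)] at hmem
      · exfalso
        rw [hβ, star_add] at hb
        have e2 := two0 (F := F)
        have hz1 : (α * star α0) * star (α * star α0) = 1 := by
          rw [star_mul', star_star]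
          linear_combination α0 * star α0 * hN + hN0
        have hz2 : α * star α0 + star (α * star α0) = 1 := by
          rw [star_mul', star_star]
          linear_combination hb - hN - hN0 - e2
        generalize α * star α0 = z at hz1 hz2
        have hz3 : z ^ 3 = 1 := by
          have hs : star z = 1 - z := by linear_combination hz2
          rw [hs] at hz1
          linear_combination (-(z + 1)) * hz1 - e2
        have := cube_one hz3 hz1
        rw [this, star_one, add_self'] at hz2
        exact zero_ne_one hz2
    exact Subgroup.isCyclic_of_le hle
  · push Not at hall
    have hle : S ≤ Subgroup.zpowers t := by
      intro g hg
      by_cases h : g = 1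
      · rw [h]; exact one_mem _
      · rw [hall g hg h]; exact Subgroup.mem_zpowers t
    exact Subgroup.isCyclic_of_le hle

end Sylow

section Classification

variable {F : Type} [Field F] [StarRing F] [HermField F] {H : Subgroup (GG F)}

lemma ne_bot_of_irr (hF : Fix H = ∅) : H ≠ ⊥ := by
  rintro rfl
  obtain ⟨p, hp0, -⟩ := exists_iso_vec (F := F)
  have : pt p hp0 ∈ Fix (⊥ : Subgroup (GG F)) := by
    rw [mem_Fix]
    intro k hk
    rw [Subgroup.mem_bot.1 hk, one_smul]
  rw [hF] at this
  simp at this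

/-- A proper irreducible subgroup has a nontrivial normal subgroup of odd order. -/
lemma exists_odd (hF : Fix H = ∅) (hT : H ≠ ⊤) :
    ∃ K ≤ H, K ≠ ⊥ ∧ (∀ h ∈ H, ∀ k ∈ K, h * k * h⁻¹ ∈ K) ∧ Odd (Nat.card K) := by
  by_cases h2 : 2 ∣ Nat.card H
  · have hH : ∀ p a, Good H p → InT H p a → a = 0 ∨ a = 1 := by
      intro p a hp ha
      by_contra! h
      exact hT (eq_top_of_InT hF hp h.1 h.2 ha)
    have hc : ∀ S ≤ H, IsPGroup 2 S → IsCyclic S := by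
      intro S hS hp
      by_cases h : S = ⊥
      · subst h; infer_instance
      · exact (two_group hH hS hp h).1
    obtain ⟨K, hK, hn, hodd, hb⟩ := exists_odd_normal h2 hc
    refine ⟨K, hK, fun h => ?_, hn, hodd⟩
    obtain ⟨-, p, hp0, hp⟩ := two_group hH le_rfl (hb h) (ne_bot_of_irr hF)
    have : pt p hp0 ∈ Fix H := by
      rw [mem_Fix]
      intro k hk
      rw [g_pt_eq]
      exact ⟨1, by rw [hp k hk, one_smul]⟩
    rw [hF] at this
    simp at this
  · exact ⟨H, le_rfl, ne_bot_of_irr hF, fun h hh k hk => mul_mem (mul_mem hh hk) (H.inv_mem hh),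
      by rwa [← Nat.not_even_iff_odd, even_iff_two_dvd]⟩

/-- An irreducible subgroup with a nontrivial abelian normal subgroup `M` is of frame type or of
Singer type, according to whether or not `M` fixes a point. -/
lemma cases_of_normal {M : Subgroup (GG F)} (hF : Fix H = ∅) (hMH : M ≤ H) (hM : M ≠ ⊥)
    (hnM : ∀ h ∈ H, ∀ k ∈ M, h * k * h⁻¹ ∈ M) (hcM : ∀ x ∈ M, ∀ y ∈ M, x * y = y * x) :
    (∃ P, FT H P) ∨ ∃ C, ST H C := by
  by_cases hFM : (Fix M).Nonempty
  · left
    obtain ⟨P, hP, hfix, hle⟩ := frame_of_normal hM hFM hF hnM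
    refine ⟨P, hP, hle, fun h => hM ?_⟩
    rw [eq_bot_iff, ← h]
    intro x hx
    exact ⟨hMH hx, mem_ptStab.2 fun i => mem_Fix.1 ((hfix _).2 ⟨i, rfl⟩) x hx⟩
  · right
    obtain ⟨⟨c, hc⟩, hc1⟩ := Subgroup.ne_bot_iff_exists_ne_one.1 hM
    have hc1 : c ≠ 1 := fun h => hc1 (Subtype.ext h)
    have hle : M ≤ Ce c := fun x hx => mem_Ce.2 (hcM c hc x hx)
    have hN : NE c := by
      rw [← fix_zpowers_iff, ← Finset.not_nonempty_iff_eq_empty]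
      intro h
      exact hFM ((Ce_fix hc1 h).mono (Fix_anti hle))
    refine ⟨Ce c, ⟨c, hN, rfl⟩, fun h hh => ?_, fun h => hc1 ?_⟩
    · exact hN.mem_No_of (self_mem_Ce c) hc1 (hle (hnM h hh c hc))
    · have : c ∈ H ⊓ Ce c := ⟨hMH hc, self_mem_Ce c⟩
      rwa [h, Subgroup.mem_bot] at this

/-- A proper irreducible subgroup is of frame type or of Singer type. -/
lemma irr_cases (hF : Fix H = ∅) (hT : H ≠ ⊤) : (∃ P, FT H P) ∨ ∃ C, ST H C := by
  obtain ⟨K, hKH, hK, hn, hodd⟩ := exists_odd hF hT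
  obtain ⟨M, hMH, hM, hnM, hcM⟩ := exists_abelian_normal hKH hn hK (odd_solvable hodd)
  exact cases_of_normal hF hMH hM hnM hcM

end Classification

/-! ### The Möbius function -/

section Moebius

/-- The function `H ↦ μ(1, H)`. -/
lemma exists_mobius_bot (G : Type) [Group G] [Fintype G] :
    ∃ m : Subgroup G → ℤ, ∀ K : Subgroup G, ∑ H with H ≤ K, m H = if K = ⊥ then 1 else 0 := by
  let _ : LocallyFiniteOrder (Subgroup G) := Fintype.toLocallyFiniteOrder
  refine ⟨fun H => IncidenceAlgebra.mu ℤ (⊥ : Subgroup G) H, fun K => ?_⟩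
  have h := IncidenceAlgebra.sum_Icc_mu_right (𝕜 := ℤ) (⊥ : Subgroup G) K
  have e : Finset.Icc (⊥ : Subgroup G) K = Finset.univ.filter fun H => H ≤ K := by
    ext H
    simp
  rw [← e, h]
  exact if_congr eq_comm rfl rfl

lemma IsSubgroupMobius.sum {G : Type} [Group G] [Fintype G] {mu : Subgroup G → ℤ}
    (hmu : IsSubgroupMobius mu) (H : Subgroup G) :
    ∑ K with H ≤ K, mu K = if H = ⊤ then 1 else 0 := by
  rw [← hmu H, ← finsum_mem_coe_finset]
  simp

/-- The two one-sided recursions compute the same number `μ(1, G)`. -/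
lemma mobius_symm {G : Type} [Group G] [Fintype G] {m mu : Subgroup G → ℤ}
    (hm : ∀ K : Subgroup G, ∑ H with H ≤ K, m H = if K = ⊥ then 1 else 0)
    (hmu : ∀ H : Subgroup G, ∑ K with H ≤ K, mu K = if H = ⊤ then 1 else 0) : mu ⊥ = m ⊤ := by
  have h1 : ∑ K, mu K * ∑ H with H ≤ K, m H = mu ⊥ := by
    simp [hm]
  have h2 : ∑ H, m H * ∑ K with H ≤ K, mu K = m ⊤ := by
    simp [hmu]
  rw [← h1, ← h2]
  simp only [Finset.sum_filter, Finset.mul_sum, mul_ite, mul_zero]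
  rw [Finset.sum_comm]
  simp only [mul_comm]

lemma IsSubgroupMobius.map {G G' : Type} [Group G] [Group G'] [Fintype G] [Fintype G']
    {mu : Subgroup G → ℤ} (hmu : IsSubgroupMobius mu) (e : G' ≃* G) (H : Subgroup G') :
    ∑ K with H ≤ K, mu (e.mapSubgroup K) = if H = ⊤ then 1 else 0 := by
  have h := hmu.sum (e.mapSubgroup H)
  rw [show (if H = ⊤ then (1 : ℤ) else 0) = if e.mapSubgroup H = ⊤ then 1 else 0 from
    if_congr (map_eq_top_iff (e.mapSubgroup)).symm rfl rfl, ← h]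
  refine Finset.sum_equiv e.mapSubgroup.toEquiv ?_ fun _ _ => rfl
  intro K
  simp only [Finset.mem_filter, Finset.mem_univ, true_and]
  exact e.mapSubgroup.le_iff_le.symm

end Moebius

section Final

variable {F : Type} [Field F] [StarRing F] [HermField F]

lemma Fix_top : Fix (⊤ : Subgroup (GG F)) = ∅ := by
  rw [Finset.eq_empty_iff_forall_notMem]
  intro P hP
  rw [mem_Fix] at hP
  by_cases h : Iso P
  · obtain ⟨p, hp0, rfl⟩ := exists_rep P
    have hp := (iso_pt hp0).1 h
    obtain ⟨q, y, -, -, -, hpy, hy, -⟩ := exists_Hyp hp0 hp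
    have hy0 : y ≠ 0 := by
      rintro rfl
      simp at hpy
    have hI : Iso (pt y hy0) := (iso_pt hy0).2 hy
    obtain ⟨Q, hQ, hPQ⟩ := exists_perp_of_iso h
    obtain ⟨R, hR, hPR⟩ := exists_perp_of_iso hI
    obtain ⟨g, hg, -⟩ := trans_iso_noniso h hQ hPQ hI hR hPR
    rw [hP g trivial, pt_eq] at hg
    obtain ⟨c, rfl⟩ := hg
    rw [B_smul_left, hy, mul_zero] at hpy
    exact zero_ne_one hpy
  · obtain ⟨Q, -, -, -, -, -, ⟨hQ, hPQ⟩, -⟩ := exists_perp_of_noniso h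
    obtain ⟨g, hg, -⟩ := trans_noniso h hQ hPQ hQ h (B_swap0 hPQ)
    rw [hP g trivial] at hg
    subst hg
    exact h hPQ

/-- A nontrivial center would be an abelian normal subgroup of the irreducible group `G`, making `G`
itself of frame type or of Singer type. -/
lemma center_GG : Subgroup.center (GG F) = ⊥ := by
  by_contra h
  rcases cases_of_normal Fix_top le_top h
    (fun g _ k hk => (inferInstance : (Subgroup.center (GG F)).Normal).conj_mem k hk g)
    (fun x _ y hy => Subgroup.mem_center_iff.1 hy x) with ⟨P, hP⟩ | ⟨C, hC⟩
  · exact not_FT_top P hP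
  · exact not_ST_top C hC

/-- The irreducible subgroups are the whole group, those of frame type and those of Singer type;
the three contributions to the sum over irreducible subgroups leave `μ(1, G) = 0`. -/
lemma mobius_top {m : Subgroup (GG F) → ℤ}
    (hm : ∀ K : Subgroup (GG F), ∑ H with H ≤ K, m H = if K = ⊥ then 1 else 0) : m ⊤ = 0 := by
  have h1 := sum_irr hm
  have h2 := sum_frame hm
  have h3 := sum_singer hm
  have h4 := card_irr_el (F := F)
  have h5 : ({g : GG F | Fix (Subgroup.zpowers g) = ∅} : Finset (GG F)) = NEset F := by
    ext g
    simp [NEset, fix_zpowers_iff]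
  rw [h5] at h4
  have hsplit : ∑ H with Fix H = ∅, m H = m ⊤ + ∑ H with Fix H = ∅ ∧ ∃ P, FT H P, m H +
      ∑ H with ∃ C, ST H C, m H := by
    have ht : m ⊤ = ∑ H : Subgroup (GG F), if H = ⊤ then m H else 0 := by simp
    rw [ht]
    simp only [Finset.sum_filter]
    rw [← Finset.sum_add_distrib, ← Finset.sum_add_distrib]
    refine Finset.sum_congr rfl fun H _ => ?_
    by_cases hT : H = ⊤
    · have n1 : ¬ ∃ P, FT H P := by rw [hT]; exact fun ⟨P, hP⟩ => not_FT_top P hP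
      have n2 : ¬ ∃ C, ST H C := by rw [hT]; exact fun ⟨C, hC⟩ => not_ST_top C hC
      have n3 : Fix H = ∅ := by rw [hT]; exact Fix_top
      rw [if_pos n3, if_pos hT, if_neg fun h => n1 h.2, if_neg n2, add_zero, add_zero]
    · rw [if_neg hT, zero_add]
      by_cases hS : ∃ C, ST H C
      · obtain ⟨C, hC⟩ := hS
        rw [if_pos hC.irr, if_pos (show ∃ C, ST H C from ⟨C, hC⟩),
          if_neg (fun h : Fix H = ∅ ∧ ∃ P, FT H P => h.2.elim fun P => hC.not_FT P), zero_add]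
      · rw [if_neg hS, add_zero]
        refine if_congr ?_ rfl rfl
        exact ⟨fun h => ⟨h, (irr_cases h hT).resolve_right hS⟩, fun h => h.1⟩
  rw [hsplit] at h1
  linarith

end Final

section Matrices

/-- The field with `q²` elements satisfies the standing hypotheses. -/
noncomputable abbrev hermFq2 (n : ℕ) (hn : 1 ≤ n) : HermField (Fq2 n) where
  n := n
  one_le := hn
  card_eq := GaloisField.card 2 (2 ^ (n + 1)) (by positivity)
  star_eq _ := rfl

variable {n : ℕ} [HermField (Fq2 n)]

lemma toMatrix_mem (g : GG (Fq2 n)) :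
    LinearMap.toMatrix' (g : Vec (Fq2 n) ≃ₗ[Fq2 n] Vec (Fq2 n)).toLinearMap ∈
      Matrix.unitaryGroup (Fin 3) (Fq2 n) := by
  rw [Matrix.mem_unitaryGroup_iff']
  ext i j
  have h := g.2.1 (Pi.single j 1) (Pi.single i 1)
  rw [Matrix.mul_apply, Fin.sum_univ_three]
  simp only [Matrix.star_apply, LinearMap.toMatrix'_apply, LinearEquiv.coe_coe]
  simp only [B] at h
  rw [Matrix.one_apply]
  simp only [mul_comm (star _)]
  refine h.trans ?_
  fin_cases i <;> fin_cases j <;> simp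

lemma toMatrix_det (g : GG (Fq2 n)) :
    (LinearMap.toMatrix' (g : Vec (Fq2 n) ≃ₗ[Fq2 n] Vec (Fq2 n)).toLinearMap).det = 1 := by
  have h := g.2.2 (Pi.single 0 1) (Pi.single 1 1) (Pi.single 2 1)
  have h1 : D (Pi.single 0 1 : Vec (Fq2 n)) (Pi.single 1 1) (Pi.single 2 1) = 1 := by
    simp [D]
  rw [h1] at h
  rw [Matrix.det_fin_three]
  simp only [LinearMap.toMatrix'_apply, LinearEquiv.coe_coe]
  simp only [D] at h
  linear_combination h

variable (n) in
/-- The matrix of an element of `GG`. -/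
noncomputable def toSU3 : GG (Fq2 n) →* SU3 n where
  toFun g := ⟨⟨_, toMatrix_mem g⟩, toMatrix_det g⟩
  map_one' := by
    apply Subtype.ext
    apply Subtype.ext
    exact LinearMap.toMatrix'_one
  map_mul' a b := by
    apply Subtype.ext
    apply Subtype.ext
    exact LinearMap.toMatrix'_mul _ _

lemma toSU3_bij : Function.Bijective (toSU3 n) := by
  constructor
  · intro a b h
    have h := congrArg Subtype.val (congrArg Subtype.val h)
    have h := LinearMap.toMatrix'.injective h
    exact Subtype.ext (LinearEquiv.toLinearMap_injective h)
  · intro M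
    have hM := Matrix.mem_unitaryGroup_iff'.1 M.1.2
    have hdet : (M.1.1).det = 1 := M.2
    generalize hA : M.1.1 = A at hM hdet
    refine ⟨⟨Matrix.UnitaryGroup.toLinearEquiv M.1, ?_, ?_⟩, ?_⟩
    · intro x y
      have hv : ∀ z i, Matrix.UnitaryGroup.toLinearEquiv M.1 z i =
          A i 0 * z 0 + A i 1 * z 1 + A i 2 * z 2 := by
        intro z i
        rw [← hA]
        exact (Matrix.vec3_dotProduct _ _)
      have hij : ∀ i j, star (A 0 i) * A 0 j + star (A 1 i) * A 1 j + star (A 2 i) * A 2 j =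
          (1 : Matrix (Fin 3) (Fin 3) (Fq2 n)) i j := by
        intro i j
        rw [← hM, Matrix.mul_apply, Fin.sum_univ_three]
        rfl
      have h00 := hij 0 0
      have h01 := hij 0 1
      have h02 := hij 0 2
      have h10 := hij 1 0
      have h11 := hij 1 1
      have h12 := hij 1 2
      have h20 := hij 2 0
      have h21 := hij 2 1
      have h22 := hij 2 2
      simp only [Matrix.one_apply, Fin.reduceEq, if_true, if_false] at h00 h01 h02 h10 h11 h12 h20 h21 h22
      simp only [B, hv, star_add, star_mul']
      linear_combination x 0 * star (y 0) * h00 + x 1 * star (y 0) * h01 + x 2 * star (y 0) * h02 +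
        x 0 * star (y 1) * h10 + x 1 * star (y 1) * h11 + x 2 * star (y 1) * h12 +
        x 0 * star (y 2) * h20 + x 1 * star (y 2) * h21 + x 2 * star (y 2) * h22
    · intro x y z
      have hv : ∀ z i, Matrix.UnitaryGroup.toLinearEquiv M.1 z i =
          A i 0 * z 0 + A i 1 * z 1 + A i 2 * z 2 := by
        intro z i
        rw [← hA]
        exact (Matrix.vec3_dotProduct _ _)
      rw [Matrix.det_fin_three] at hdet
      simp only [D, hv]
      linear_combination (x 0 * (y 1 * z 2 - y 2 * z 1) - x 1 * (y 0 * z 2 - y 2 * z 0) +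
        x 2 * (y 0 * z 1 - y 1 * z 0)) * hdet
    · apply Subtype.ext
      apply Subtype.ext
      exact LinearMap.toMatrix'_toLin' _

end Matrices

-- STATEMENT 1
theorem stmt1 (n : ℕ) (hn : 1 ≤ n) (mu : Subgroup (PSU3 n) → ℤ)
    (hmu : IsSubgroupMobius mu) :
    mu ⊥ = 0 := by
  let _ : HermField (Fq2 n) := hermFq2 n hn
  let e : GG (Fq2 n) ≃* SU3 n := MulEquiv.ofBijective (toSU3 n) toSU3_bij
  have hc : Subgroup.center (SU3 n) = ⊥ := by
    rw [eq_bot_iff]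
    intro x hx
    have : e.symm x ∈ Subgroup.center (GG (Fq2 n)) := by
      rw [Subgroup.mem_center_iff] at hx ⊢
      intro g
      apply e.injective
      rw [map_mul, map_mul, e.apply_symm_apply, hx]
    rw [center_GG, Subgroup.mem_bot] at this
    rw [Subgroup.mem_bot]
    simpa using this
  let e' : GG (Fq2 n) ≃* PSU3 n :=
    e.trans ((QuotientGroup.quotientMulEquivOfEq hc).trans QuotientGroup.quotientBot).symm
  have : Fintype (PSU3 n) := Fintype.ofEquiv _ e'.toEquiv
  obtain ⟨m, hm⟩ := exists_mobius_bot (GG (Fq2 n))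
  have h := mobius_symm hm (hmu.map e')
  rw [mobius_top hm] at h
  simpa using h

end PSUPaper
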